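/- arXiv:1901.02737 — 2 statements merged into one kernel-verified Lean document; each statement's English description precedes it below -/
import Mathlib

section
/- Let T : 𝒮^∞ → 𝒮^∞ be a surjective (not necessarily linear) isometry with respect to the norm ‖·‖_Σ. Then there exist constants c, λ ∈ ℂ with |c| = 1 and |λ| = 1 such that either T(f)(z) = T(0)(z) + c·f(λz) for all f ∈ 𝒮^∞ and all z ∈ 𝔻, or T(f)(z) = T(0)(z) + conj(c·f(conj(λz))) for all f ∈ 𝒮^∞ and all z ∈ 𝔻. -/
open Complex Metric Set

/-- `f` belongs to `𝒮^∞`: `f` is analytic on the open unit disc `𝔻` and its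
derivative is bounded on `𝔻`. -/
def MemSInf (f : ℂ → ℂ) : Prop :=
  DifferentiableOn ℂ f (ball (0 : ℂ) 1) ∧
    ∃ M : ℝ, ∀ z ∈ ball (0 : ℂ) 1, ‖deriv f z‖ ≤ M

/-- The norm `‖f‖_Σ = sup_{z ∈ 𝔻} |f(z)| + sup_{w ∈ 𝔻} |f'(w)|`. -/
noncomputable def normSigma (f : ℂ → ℂ) : ℝ :=
  (⨆ z : ball (0 : ℂ) 1, ‖f (z : ℂ)‖) + ⨆ w : ball (0 : ℂ) 1, ‖deriv f (w : ℂ)‖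



namespace SInf

open Filter Topology ComplexConjugate

theorem memSInf_add {f g : ℂ → ℂ} (hf : MemSInf f) (hg : MemSInf g) : MemSInf (f + g) := by
  obtain ⟨hf, M, hM⟩ := hf
  obtain ⟨hg, N, hN⟩ := hg
  refine ⟨hf.add hg, M + N, fun z hz => ?_⟩
  have h1 := hf.differentiableAt (isOpen_ball.mem_nhds hz)
  have h2 := hg.differentiableAt (isOpen_ball.mem_nhds hz)
  rw [deriv_add h1 h2]
  exact (norm_add_le _ _).trans (add_le_add (hM z hz) (hN z hz))

theorem memSInf_smul {f : ℂ → ℂ} (c : ℂ) (hf : MemSInf f) : MemSInf (c • f) := by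
  obtain ⟨hf, M, hM⟩ := hf
  refine ⟨hf.const_smul c, ‖c‖ * M, fun z hz => ?_⟩
  have h1 := hf.differentiableAt (isOpen_ball.mem_nhds hz)
  rw [deriv_const_smul c h1, norm_smul]
  exact mul_le_mul_of_nonneg_left (hM z hz) (norm_nonneg _)

theorem memSInf_congr {f g : ℂ → ℂ} (hf : MemSInf f) (h : EqOn f g (ball 0 1)) : MemSInf g := by
  obtain ⟨hf, M, hM⟩ := hf
  refine ⟨hf.congr h.symm, M, fun z hz => ?_⟩
  rw [← (h.eventuallyEq_of_mem (isOpen_ball.mem_nhds hz)).deriv_eq]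
  exact hM z hz

theorem memSInf_zero : MemSInf 0 :=
  ⟨differentiableOn_const 0, 0, fun z _ => by
    have : (0 : ℂ → ℂ) = fun _ => 0 := rfl
    rw [this, deriv_const]; simp⟩

/-- The subspace of normalised representatives. -/
def XS : Submodule ℂ (ℂ → ℂ) where
  carrier := {f | MemSInf f ∧ ContinuousOn f (closedBall 0 1) ∧ ∀ z ∉ closedBall (0 : ℂ) 1, f z = 0}
  add_mem' := fun {f g} hf hg => ⟨memSInf_add hf.1 hg.1, hf.2.1.add hg.2.1, fun z hz => by
    simp [hf.2.2 z hz, hg.2.2 z hz]⟩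
  zero_mem' := ⟨memSInf_zero, continuousOn_const, fun _ _ => rfl⟩
  smul_mem' := fun c f hf => ⟨memSInf_smul c hf.1, hf.2.1.const_smul c, fun z hz => by
    simp [hf.2.2 z hz]⟩

/-- The space `𝒮^∞` as a type. -/
def X : Type := ↥XS

noncomputable instance : AddCommGroup X := inferInstanceAs (AddCommGroup ↥XS)
noncomputable instance : Module ℂ X := inferInstanceAs (Module ℂ ↥XS)
instance : CoeFun X (fun _ => ℂ → ℂ) := ⟨fun f => f.1⟩

theorem X_add (f g : X) (z : ℂ) : (f + g) z = f z + g z := rfl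
theorem X_sub (f g : X) (z : ℂ) : (f - g) z = f z - g z := rfl
theorem X_neg (f : X) (z : ℂ) : (-f) z = - f z := rfl
theorem X_zero (z : ℂ) : (0 : X) z = 0 := rfl
theorem X_smul (c : ℂ) (f : X) (z : ℂ) : (c • f) z = c * f z := rfl
theorem X_rsmul (c : ℝ) (f : X) (z : ℂ) : (c • f) z = c * f z := rfl

theorem X_mem (f : X) : MemSInf f := f.2.1
theorem X_cont (f : X) : ContinuousOn f (closedBall 0 1) := f.2.2.1
theorem X_diff (f : X) : DifferentiableOn ℂ f (ball 0 1) := f.2.1.1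
theorem X_diffAt (f : X) {z : ℂ} (hz : z ∈ ball (0 : ℂ) 1) : DifferentiableAt ℂ f z :=
  (X_diff f).differentiableAt (isOpen_ball.mem_nhds hz)

theorem X_diffContOnCl (f : X) : DiffContOnCl ℂ f (ball 0 1) :=
  ⟨X_diff f, by rw [closure_ball (0 : ℂ) one_ne_zero]; exact X_cont f⟩

theorem closedBall_eq_closure : closedBall (0 : ℂ) 1 = closure (ball 0 1) :=
  (closure_ball (0 : ℂ) one_ne_zero).symm

theorem X_ext' {f g : X} (h : ∀ z ∈ closedBall (0 : ℂ) 1, f z = g z) : f = g := by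
  apply Subtype.ext
  funext z
  by_cases hz : z ∈ closedBall (0 : ℂ) 1
  · exact h z hz
  · rw [f.2.2.2 z hz, g.2.2.2 z hz]

theorem X_ext {f g : X} (h : ∀ z ∈ ball (0 : ℂ) 1, f z = g z) : f = g := by
  apply X_ext'
  have : EqOn f g (closure (ball (0 : ℂ) 1)) := by
    apply EqOn.of_subset_closure (s := ball (0 : ℂ) 1) h
    · rw [← closedBall_eq_closure]; exact X_cont f
    · rw [← closedBall_eq_closure]; exact X_cont g
    · exact subset_closure
    · exact subset_rfl
  rw [← closedBall_eq_closure] at this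
  exact this

theorem bdd_val (f : X) : ∃ M, ∀ z ∈ closedBall (0 : ℂ) 1, ‖f z‖ ≤ M :=
  (isCompact_closedBall (0 : ℂ) 1).exists_bound_of_continuousOn (X_cont f)

instance : Nonempty (ball (0 : ℂ) 1) := ⟨⟨0, by simp⟩⟩

/-- the sup part -/
noncomputable def S0 (f : X) : ℝ := ⨆ z : ball (0 : ℂ) 1, ‖f (z : ℂ)‖
/-- the derivative part -/
noncomputable def p0 (f : X) : ℝ := ⨆ w : ball (0 : ℂ) 1, ‖deriv f (w : ℂ)‖

theorem bddS (f : X) : BddAbove (range fun z : ball (0 : ℂ) 1 => ‖f (z : ℂ)‖) := by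
  obtain ⟨M, hM⟩ := bdd_val f
  exact ⟨M, by rintro _ ⟨z, rfl⟩; exact hM z (ball_subset_closedBall z.2)⟩

theorem bddp (f : X) : BddAbove (range fun z : ball (0 : ℂ) 1 => ‖deriv f (z : ℂ)‖) := by
  obtain ⟨M, hM⟩ := (X_mem f).2
  exact ⟨M, by rintro _ ⟨z, rfl⟩; exact hM z z.2⟩

theorem S0_le {f : X} {M : ℝ} (h : ∀ z ∈ ball (0 : ℂ) 1, ‖f z‖ ≤ M) : S0 f ≤ M :=
  ciSup_le fun z => h z z.2
theorem p0_le {f : X} {M : ℝ} (h : ∀ z ∈ ball (0 : ℂ) 1, ‖deriv f z‖ ≤ M) : p0 f ≤ M :=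
  ciSup_le fun z => h z z.2
theorem le_S0 (f : X) {z : ℂ} (hz : z ∈ ball (0 : ℂ) 1) : ‖f z‖ ≤ S0 f :=
  le_ciSup (bddS f) ⟨z, hz⟩
theorem le_p0 (f : X) {z : ℂ} (hz : z ∈ ball (0 : ℂ) 1) : ‖deriv f z‖ ≤ p0 f :=
  le_ciSup (bddp f) ⟨z, hz⟩

theorem deriv_X_add (f g : X) {z : ℂ} (hz : z ∈ ball (0 : ℂ) 1) :
    deriv (f + g : X) z = deriv f z + deriv g z :=
  deriv_add (X_diffAt f hz) (X_diffAt g hz)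
theorem deriv_X_smul (c : ℂ) (f : X) {z : ℂ} (hz : z ∈ ball (0 : ℂ) 1) :
    deriv (c • f : X) z = c * deriv f z :=
  deriv_const_smul c (X_diffAt f hz)

theorem seminorm_aux {F : X → ℝ} (hF : ∀ (c : ℂ) (f : X), F (c • f) ≤ ‖c‖ * F f) (c : ℂ) (f : X) :
    F (c • f) = ‖c‖ * F f := by
  apply le_antisymm (hF c f)
  rcases eq_or_ne c 0 with rfl | hc
  · have := hF 0 (0 : X)
    have h2 := hF 2 (0 : X)
    simp only [smul_zero, zero_smul, norm_zero, zero_mul, norm_ofNat] at *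
    linarith
  · have := hF c⁻¹ (c • f)
    rw [smul_smul, inv_mul_cancel₀ hc, one_smul, norm_inv] at this
    have hc' : 0 < ‖c‖ := norm_pos_iff.2 hc
    rwa [inv_mul_eq_div, le_div_iff₀ hc', mul_comm] at this

/-- sup seminorm -/
noncomputable def S : Seminorm ℂ X := Seminorm.of S0
  (fun f g => S0_le fun z hz => (norm_add_le _ _).trans (add_le_add (le_S0 f hz) (le_S0 g hz)))
  (seminorm_aux fun c f => S0_le fun z hz => by
    rw [X_smul, norm_mul]; exact mul_le_mul_of_nonneg_left (le_S0 f hz) (norm_nonneg _))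

/-- derivative seminorm -/
noncomputable def p : Seminorm ℂ X := Seminorm.of p0
  (fun f g => p0_le fun z hz => by
    rw [deriv_X_add f g hz]
    exact (norm_add_le _ _).trans (add_le_add (le_p0 f hz) (le_p0 g hz)))
  (seminorm_aux fun c f => p0_le fun z hz => by
    rw [deriv_X_smul c f hz, norm_mul]
    exact mul_le_mul_of_nonneg_left (le_p0 f hz) (norm_nonneg _))

theorem S_le {f : X} {M : ℝ} (h : ∀ z ∈ ball (0 : ℂ) 1, ‖f z‖ ≤ M) : S f ≤ M := S0_le h
theorem p_le {f : X} {M : ℝ} (h : ∀ z ∈ ball (0 : ℂ) 1, ‖deriv f z‖ ≤ M) : p f ≤ M := p0_le h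
theorem le_p (f : X) {z : ℂ} (hz : z ∈ ball (0 : ℂ) 1) : ‖deriv f z‖ ≤ p f := le_p0 f hz
theorem le_S (f : X) {z : ℂ} (hz : z ∈ closedBall (0 : ℂ) 1) : ‖f z‖ ≤ S f := by
  rw [closedBall_eq_closure] at hz
  have hc : ContinuousOn (fun z => ‖f z‖) (closure (ball (0 : ℂ) 1)) := by
    rw [← closedBall_eq_closure]; exact (X_cont f).norm
  exact le_on_closure (fun z hz => le_S0 f hz) hc continuousOn_const hz

theorem exists_S (f : X) : ∃ z ∈ closedBall (0 : ℂ) 1, ‖f z‖ = S f := by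
  obtain ⟨z, hz, hmax⟩ := (isCompact_closedBall (0 : ℂ) 1).exists_isMaxOn
    ⟨0, by simp⟩ (X_cont f).norm
  exact ⟨z, hz, le_antisymm (le_S f hz) (S_le fun w hw => hmax (ball_subset_closedBall hw))⟩

noncomputable instance : Norm X := ⟨fun f => S f + p f⟩

theorem norm_def (f : X) : ‖f‖ = S f + p f := rfl

theorem S_eq_zero {f : X} (h : S f = 0) : f = 0 := by
  apply X_ext'
  intro z hz
  have := le_S f hz
  rw [h] at this
  rw [X_zero]
  exact norm_le_zero_iff.1 this

theorem core : NormedSpace.Core ℂ X where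
  norm_nonneg f := add_nonneg (apply_nonneg S f) (apply_nonneg p f)
  norm_smul c f := by simp only [norm_def, map_smul_eq_mul]; ring
  norm_triangle f g := by
    simp only [norm_def]
    linarith [map_add_le_add S f g, map_add_le_add p f g]
  norm_eq_zero_iff f := by
    constructor
    · intro h
      rw [norm_def] at h
      exact S_eq_zero (by linarith [apply_nonneg S f, apply_nonneg p f])
    · rintro rfl
      simp [norm_def]

noncomputable instance : NormedAddCommGroup X := NormedAddCommGroup.ofCore core
noncomputable instance : NormedSpace ℂ X := NormedSpace.ofCore core

theorem norm_def' (f : X) : ‖f‖ = S f + p f := rfl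

theorem norm_eq_normSigma (f : X) : ‖f‖ = normSigma f := rfl

theorem map_rsmul (q : Seminorm ℂ X) (r : ℝ) (hr : 0 ≤ r) (f : X) : q (r • f) = r * q f := by
  have : r • f = (r : ℂ) • f := rfl
  rw [this, map_smul_eq_mul, norm_real, Real.norm_of_nonneg hr]

/-- Lipschitz estimate -/
theorem lip (f : X) {x y : ℂ} (hx : x ∈ closedBall (0 : ℂ) 1) (hy : y ∈ closedBall (0 : ℂ) 1) :
    ‖f x - f y‖ ≤ p f * ‖x - y‖ := by
  have key : ∀ x ∈ ball (0 : ℂ) 1, ∀ y ∈ ball (0 : ℂ) 1, ‖f x - f y‖ ≤ p f * ‖x - y‖ :=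
    fun x hx y hy => (convex_ball (0 : ℂ) 1).norm_image_sub_le_of_norm_deriv_le
      (fun z hz => X_diffAt f hz) (fun z hz => le_p f hz) hy hx
  rw [closedBall_eq_closure] at hx hy
  have hc : ContinuousOn f (closure (ball (0 : ℂ) 1)) := by
    rw [← closedBall_eq_closure]; exact X_cont f
  have k2 : ∀ x ∈ ball (0 : ℂ) 1, ∀ y ∈ closure (ball (0 : ℂ) 1), ‖f x - f y‖ ≤ p f * ‖x - y‖ :=
    fun x hx y hy => le_on_closure (f := fun y => ‖f x - f y‖) (g := fun y => p f * ‖x - y‖)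
      (fun y hy => key x hx y hy)
      (continuousOn_const.sub hc).norm (by fun_prop) hy
  exact le_on_closure (f := fun x => ‖f x - f y‖) (g := fun x => p f * ‖x - y‖)
      (fun x hx => k2 x hx y hy) (hc.sub continuousOn_const).norm (by fun_prop) hx

/-- Constructor. -/
noncomputable def mkX (f : ℂ → ℂ) (h : MemSInf f) (hc : ContinuousOn f (closedBall 0 1)) : X :=
  ⟨indicator (closedBall 0 1) f, memSInf_congr h (fun z hz => by
      rw [indicator_of_mem (ball_subset_closedBall hz)]),
    hc.congr (fun z hz => indicator_of_mem hz f), fun z hz => indicator_of_notMem hz f⟩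

theorem mkX_apply {f : ℂ → ℂ} (h : MemSInf f) (hc : ContinuousOn f (closedBall 0 1)) {z : ℂ}
    (hz : z ∈ closedBall (0 : ℂ) 1) : mkX f h hc z = f z := indicator_of_mem hz f

theorem mkX_deriv {f : ℂ → ℂ} (h : MemSInf f) (hc : ContinuousOn f (closedBall 0 1)) {z : ℂ}
    (hz : z ∈ ball (0 : ℂ) 1) : deriv (mkX f h hc) z = deriv f z := by
  have : EqOn (mkX f h hc) f (ball 0 1) := fun z hz => mkX_apply h hc (ball_subset_closedBall hz)
  exact (this.eventuallyEq_of_mem (isOpen_ball.mem_nhds hz)).deriv_eq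

theorem exists_of_mem {f : ℂ → ℂ} (h : MemSInf f) : ∃ F : X, EqOn F f (ball 0 1) := by
  obtain ⟨hd, M, hM⟩ := id h
  have hl : LipschitzOnWith M.toNNReal f (ball 0 1) := by
    apply (convex_ball (0 : ℂ) 1).lipschitzOnWith_of_nnnorm_deriv_le (𝕜 := ℂ)
    · exact fun z hz => hd.differentiableAt (isOpen_ball.mem_nhds hz)
    · intro z hz
      rw [← NNReal.coe_le_coe, coe_nnnorm]
      exact (hM z hz).trans (Real.le_coe_toNNReal M)
  obtain ⟨g, hg, heq⟩ := hl.extend_finite_dimension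
  exact ⟨mkX g (memSInf_congr h heq) hg.continuous.continuousOn, fun z hz => by
    rw [mkX_apply _ _ (ball_subset_closedBall hz), heq hz]⟩

theorem memSInf_entire {f : ℂ → ℂ} (hf : Differentiable ℂ f) : MemSInf f := by
  refine ⟨hf.differentiableOn, ?_⟩
  have hc : Continuous (deriv f) := (hf.contDiff (n := 1)).continuous_deriv le_rfl
  obtain ⟨M, hM⟩ := (isCompact_closedBall (0 : ℂ) 1).exists_bound_of_continuousOn hc.continuousOn
  exact ⟨M, fun z hz => hM z (ball_subset_closedBall hz)⟩

/-- Entire functions as elements. -/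
noncomputable def mkE (f : ℂ → ℂ) (hf : Differentiable ℂ f) : X :=
  mkX f (memSInf_entire hf) hf.continuous.continuousOn

theorem mkE_apply {f : ℂ → ℂ} (hf : Differentiable ℂ f) {z : ℂ}
    (hz : z ∈ closedBall (0 : ℂ) 1) : mkE f hf z = f z := mkX_apply _ _ hz

theorem mkE_deriv {f : ℂ → ℂ} (hf : Differentiable ℂ f) {z : ℂ}
    (hz : z ∈ ball (0 : ℂ) 1) : deriv (mkE f hf) z = deriv f z := mkX_deriv _ _ hz

/-- constants -/
noncomputable def K (c : ℂ) : X := mkE (fun _ => c) (differentiable_const c)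
theorem K_apply (c : ℂ) {z : ℂ} (hz : z ∈ closedBall (0 : ℂ) 1) : K c z = c := mkE_apply _ hz
theorem K_deriv (c : ℂ) {z : ℂ} (hz : z ∈ ball (0 : ℂ) 1) : deriv (K c) z = 0 := by
  rw [K, mkE_deriv _ hz, deriv_const]
theorem p_K (c : ℂ) : p (K c) = 0 :=
  le_antisymm (p_le fun z hz => by rw [K_deriv c hz, norm_zero]) (apply_nonneg _ _)
theorem S_K (c : ℂ) : S (K c) = ‖c‖ := by
  apply le_antisymm
  · exact S_le fun z hz => by rw [K_apply c (ball_subset_closedBall hz)]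
  · have := le_S (K c) (z := 0) (by simp)
    rwa [K_apply c (by simp)] at this
theorem norm_K (c : ℂ) : ‖K c‖ = ‖c‖ := by rw [norm_def', p_K, S_K, add_zero]

theorem p_add_K (f : X) (c : ℂ) : p (f + K c) = p f := by
  apply le_antisymm
  · have := map_add_le_add p f (K c); rw [p_K] at this; linarith
  · have := map_sub_le_add p (f + K c) (K c); rw [p_K, add_sub_cancel_right] at this; linarith

/-- constants as a real linear map -/
noncomputable def KL : ℂ →ₗ[ℝ] X where
  toFun := K
  map_add' a b := X_ext' fun z hz => by rw [X_add, K_apply _ hz, K_apply _ hz, K_apply _ hz]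
  map_smul' r a := X_ext' fun z hz => by
    rw [RingHom.id_apply, X_rsmul, K_apply _ hz, K_apply _ hz]; simp

/-- If the derivative seminorm vanishes the function is constant. -/
theorem const_of_p {f : X} (h : p f = 0) : f = K (f 0) := by
  apply X_ext'
  intro z hz
  rw [K_apply _ hz]
  have := lip f hz (y := 0) (by simp)
  rw [h, zero_mul] at this
  exact sub_eq_zero.1 (norm_le_zero_iff.1 this)

end SInf


namespace SInf

open Filter Topology ComplexConjugate

theorem additive_of_norm {a b : X} (h : ‖a + b‖ = ‖a‖ + ‖b‖) :
    S (a + b) = S a + S b ∧ p (a + b) = p a + p b := by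
  simp only [norm_def'] at h
  have h1 := map_add_le_add S a b
  have h2 := map_add_le_add p a b
  constructor <;> linarith

theorem exists_c (g : X) : ∃ c : ℂ, ‖c‖ = 1 ∧ ‖K c + g‖ = 1 + ‖g‖ := by
  obtain ⟨z, hz, hS⟩ := exists_S g
  obtain ⟨c, hc, hcz⟩ : ∃ c : ℂ, ‖c‖ = 1 ∧ g z = ‖g z‖ * c := by
    rcases eq_or_ne (g z) 0 with h | h
    · exact ⟨1, by simp, by simp [h]⟩
    · have : (‖g z‖ : ℂ) ≠ 0 := by exact_mod_cast norm_ne_zero_iff.2 h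
      exact ⟨g z / ‖g z‖, by simp [h], by field_simp⟩
  refine ⟨c, hc, ?_⟩
  apply le_antisymm
  · have := norm_add_le (K c) g
    rwa [norm_K, hc] at this
  · have h1 : ‖(K c + g) z‖ = 1 + S g := by
      rw [X_add, K_apply _ hz, hcz, hS]
      have : c + (S g : ℂ) * c = ((1 + S g : ℝ) : ℂ) * c := by push_cast; ring
      rw [this, norm_mul, hc, norm_real, Real.norm_of_nonneg, mul_one]
      linarith [apply_nonneg S g]
    have h2 := le_S (K c + g) hz
    rw [norm_def', norm_def', add_comm (K c) g, p_add_K]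
    rw [add_comm (K c) g] at h1 h2
    linarith

theorem seminorm_scale {q : Seminorm ℂ X} {a b : X} (h : q (a + b) = q a + q b) {s : ℝ}
    (_h0 : 0 ≤ s) (h1 : s ≤ 1) : q a + s * q b ≤ q (a + s • b) := by
  have e : a + b = (a + s • b) + (1 - s) • b := by module
  have := map_add_le_add q (a + s • b) ((1 - s) • b)
  rw [← e, h, map_rsmul q _ (by linarith)] at this
  linarith

theorem phase_aux {w t : ℂ} {s : ℝ} (ht : ‖t‖ = 1) (hw : ‖w‖ ≤ s) (h : s + 1 ≤ ‖w + t‖) :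
    w = s * t := by
  have hs : 0 ≤ s := (norm_nonneg _).trans hw
  have h1 : ‖w + t‖ ^ 2 + ‖w - s * t‖ ^ 2 * 1 ≤ (s + 1) ^ 2 ∨ s = 0 := by
    rcases eq_or_lt_of_le hs with h0 | h0
    · right; exact h0.symm
    left
    have : ‖w + t‖ ≤ ‖w‖ + ‖t‖ := norm_add_le _ _
    have hw' : ‖w‖ = s := by linarith
    have h2 : ‖w + t‖ ^ 2 = (s + 1) ^ 2 := by
      have : ‖w + t‖ = s + 1 := by linarith
      rw [this]
    have e1 : normSq w = s ^ 2 := by rw [normSq_eq_norm_sq, hw']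
    have e2 : normSq t = 1 := by rw [normSq_eq_norm_sq, ht, one_pow]
    have e3 : normSq (w + t) = (s + 1) ^ 2 := by rw [normSq_eq_norm_sq, h2]
    have e4 : normSq (w - s * t) = 0 := by
      simp only [normSq_apply, add_re, add_im, sub_re, sub_im, mul_re, mul_im, ofReal_re,
        ofReal_im] at *
      linear_combination (1 - (-s)) * e1 + (s ^ 2 + s) * e2 - s * e3
    rw [h2, ← normSq_eq_norm_sq, e4]; simp
  rcases h1 with h1 | h1
  · have : (s + 1) ^ 2 ≤ ‖w + t‖ ^ 2 := by gcongr
    have : ‖w - s * t‖ ^ 2 ≤ 0 := by linarith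
    have : ‖w - s * t‖ = 0 := by nlinarith [norm_nonneg (w - s * t)]
    exact sub_eq_zero.1 (norm_eq_zero.1 this)
  · subst h1
    have : w = 0 := norm_le_zero_iff.1 hw
    simp [this]

/-- The peaking function `(1+z)/2`. -/
noncomputable def Pk : X := mkE (fun z => (1 + z) / 2) (by fun_prop)

theorem Pk_apply {z : ℂ} (hz : z ∈ closedBall (0 : ℂ) 1) : Pk z = (1 + z) / 2 := mkE_apply _ hz

theorem Pk_le {z : ℂ} (hz : z ∈ closedBall (0 : ℂ) 1) : ‖Pk z‖ ≤ 1 := by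
  rw [Pk_apply hz]
  have : ‖z‖ ≤ 1 := by simpa using hz
  have := norm_add_le (1 : ℂ) z
  rw [norm_div]
  simp only [norm_one, norm_ofNat] at *
  linarith

theorem Pk_eq {z : ℂ} (hz : z ∈ closedBall (0 : ℂ) 1) (h : 1 ≤ ‖Pk z‖) : z = 1 := by
  rw [Pk_apply hz, norm_div, norm_ofNat] at h
  have hz' : ‖z‖ ≤ 1 := by simpa using hz
  have := phase_aux (w := z) (t := 1) (s := 1) (by simp) hz' (by rw [add_comm z]; linarith)
  simpa using this

theorem cluster (U : X ≃ₗᵢ[ℝ] X) {t : ℂ} (ht : ‖t‖ = 1) (Q : ℕ → X) (C : ℝ)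
    (hQ : ∀ n : ℕ, S (Q n) ≤ C / ((n : ℝ) + 1) ^ 2) :
    ∃ c : ℂ, ‖c‖ = 1 ∧ U (K c) 1 = S (U (K c)) * t ∧
      ∀ ε > 0, ∃ n, p (U (K c)) + p (Q n) ≤ p (U (K c) + Q n) + ε := by
  have h1 : ∀ n : ℕ, ∃ c : ℂ, ‖c‖ = 1 ∧ ‖K c + U.symm (t • Pk + ((n : ℝ) + 1) • Q n)‖ =
      1 + ‖U.symm (t • Pk + ((n : ℝ) + 1) • Q n)‖ := fun n => exists_c _
  choose c hc hcn using h1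
  obtain ⟨c0, hc0, ψ, hψ, hlim⟩ := (isCompact_sphere (0 : ℂ) 1).tendsto_subseq
    (x := c) (fun n => by simp [hc n])
  have hc0' : ‖c0‖ = 1 := by simpa using hc0
  have hadd : ∀ n, ‖U (K (c n)) + (t • Pk + ((n : ℝ) + 1) • Q n)‖ =
      ‖U (K (c n))‖ + ‖t • Pk + ((n : ℝ) + 1) • Q n‖ := by
    intro n
    have := hcn n
    rw [← U.norm_map, map_add, U.apply_symm_apply] at this
    rw [this, U.norm_map, norm_K, hc, U.symm.norm_map]
  have hdiff : ∀ n, ‖U (K (c n)) - U (K c0)‖ = ‖c n - c0‖ := by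
    intro n
    rw [← map_sub, U.norm_map]
    have : K (c n) - K c0 = K (c n - c0) := (map_sub KL (c n) c0).symm
    rw [this, norm_K]
  have hlim2 : Tendsto (fun n => ‖c (ψ n) - c0‖) atTop (𝓝 0) := by
    rw [← tendsto_iff_norm_sub_tendsto_zero]; exact hlim
  have hn1 : Tendsto (fun n : ℕ => 1 / ((n : ℝ) + 1)) atTop (𝓝 0) :=
    tendsto_one_div_add_atTop_nhds_zero_nat
  have hn2 : Tendsto (fun n : ℕ => 1 / ((ψ n : ℝ) + 1)) atTop (𝓝 0) :=
    hn1.comp hψ.tendsto_atTop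
  have hSp : ∀ f : X, S f ≤ ‖f‖ ∧ p f ≤ ‖f‖ := fun f => by
    rw [norm_def']; constructor <;> linarith [apply_nonneg S f, apply_nonneg p f]
  refine ⟨c0, hc0', ?_, ?_⟩
  · have key : S (U (K c0)) + 1 ≤ S (U (K c0) + t • Pk) := by
      have hest : ∀ n, S (U (K c0)) + 1 - 2 * ‖c n - c0‖ - 2 * (C * (1 / ((n : ℝ) + 1))) ≤
          S (U (K c0) + t • Pk) := by
        intro n
        have hn : (0 : ℝ) < (n : ℝ) + 1 := by positivity
        obtain ⟨hS, -⟩ := additive_of_norm (hadd n)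
        have e1 := (hSp (U (K (c n)) - U (K c0))).1
        rw [hdiff] at e1
        have e2 : S (((n : ℝ) + 1) • Q n) ≤ C * (1 / ((n : ℝ) + 1)) := by
          rw [map_rsmul _ _ hn.le]
          calc ((n : ℝ) + 1) * S (Q n) ≤ ((n : ℝ) + 1) * (C / ((n : ℝ) + 1) ^ 2) :=
                mul_le_mul_of_nonneg_left (hQ n) hn.le
            _ = _ := by field_simp
        have e3 : 1 ≤ S (t • Pk) := by
          have := le_S (t • Pk) (z := 1) (by simp)
          rw [X_smul, Pk_apply (by simp)] at this
          norm_num [ht] at this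
          exact this
        have e4 := map_sub_le_add S (t • Pk + ((n : ℝ) + 1) • Q n) (((n : ℝ) + 1) • Q n)
        rw [add_sub_cancel_right] at e4
        have e5 := map_sub_le_add S (U (K (c n))) (U (K (c n)) - U (K c0))
        rw [sub_sub_cancel] at e5
        have e6 : U (K (c n)) + (t • Pk + ((n : ℝ) + 1) • Q n) =
          (U (K c0) + t • Pk) + (((n : ℝ) + 1) • Q n + (U (K (c n)) - U (K c0))) := by abel
        have e7 := map_add_le_add S (U (K c0) + t • Pk)
          (((n : ℝ) + 1) • Q n + (U (K (c n)) - U (K c0)))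
        have e8 := map_add_le_add S (((n : ℝ) + 1) • Q n) (U (K (c n)) - U (K c0))
        rw [← e6] at e7
        linarith
      have hl : Tendsto (fun n => S (U (K c0)) + 1 - 2 * ‖c (ψ n) - c0‖ -
          2 * (C * (1 / ((ψ n : ℝ) + 1)))) atTop (𝓝 (S (U (K c0)) + 1 - 2 * 0 - 2 * (C * 0))) :=
        (tendsto_const_nhds.sub (hlim2.const_mul 2)).sub ((hn2.const_mul C).const_mul 2)
      have := le_of_tendsto' hl (fun n => hest (ψ n))
      linarith
    obtain ⟨z, hz, hz2⟩ := exists_S (U (K c0) + t • Pk)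
    rw [← hz2, X_add, X_smul] at key
    have e1 := norm_add_le (U (K c0) z) (t * Pk z)
    rw [norm_mul, ht, one_mul] at e1
    have e2 := le_S (U (K c0)) hz
    have : z = 1 := Pk_eq hz (by linarith)
    subst this
    have e3 : Pk 1 = 1 := by rw [Pk_apply hz]; norm_num
    rw [e3, mul_one] at key
    exact phase_aux ht e2 key
  · intro ε hε
    have hl : Tendsto (fun n => 2 * ‖c (ψ n) - c0‖ + 2 * (p (t • Pk) * (1 / ((ψ n : ℝ) + 1))))
        atTop (𝓝 (2 * 0 + 2 * (p (t • Pk) * 0))) :=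
      (hlim2.const_mul 2).add ((hn2.const_mul _).const_mul 2)
    obtain ⟨n, hn⟩ := (hl.eventually_lt_const (u := ε) (by simpa using hε)).exists
    refine ⟨ψ n, ?_⟩
    generalize ψ n = n at hn
    have hn' : (0 : ℝ) < (n : ℝ) + 1 := by positivity
    obtain ⟨-, hp⟩ := additive_of_norm (hadd n)
    set s : ℝ := 1 / ((n : ℝ) + 1) with hs
    have hs0 : 0 ≤ s := by positivity
    have hs1 : s ≤ 1 := by rw [hs, div_le_one hn']; linarith [n.cast_nonneg (α := ℝ)]
    have h1 := seminorm_scale hp hs0 hs1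
    rw [← map_rsmul p s hs0] at h1
    have h2 : s • (t • Pk + ((n : ℝ) + 1) • Q n) = s • t • Pk + Q n := by
      rw [smul_add, smul_smul s]
      have : s * ((n : ℝ) + 1) = 1 := by rw [hs]; field_simp
      rw [this, one_smul]
    rw [h2] at h1
    have e1 := (hSp (U (K (c n)) - U (K c0))).2
    rw [hdiff] at e1
    have e2 : p (s • t • Pk) = p (t • Pk) * s := by rw [map_rsmul p s hs0, mul_comm]
    have e4 := map_sub_le_add p (s • t • Pk + Q n) (s • t • Pk)
    rw [add_sub_cancel_left] at e4
    have e5 := map_sub_le_add p (U (K (c n))) (U (K (c n)) - U (K c0))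
    rw [sub_sub_cancel] at e5
    have e6 : U (K (c n)) + (s • t • Pk + Q n) =
      (U (K c0) + Q n) + (s • t • Pk + (U (K (c n)) - U (K c0))) := by abel
    have e7 := map_add_le_add p (U (K c0) + Q n) (s • t • Pk + (U (K (c n)) - U (K c0)))
    have e8 := map_add_le_add p (s • t • Pk) (U (K (c n)) - U (K c0))
    rw [← e6] at e7
    linarith

theorem deriv_diffOn (f : X) : DifferentiableOn ℂ (deriv f) (ball 0 1) :=
  (X_diff f).deriv isOpen_ball

/-- The derivative times a power has almost full supremum. -/
theorem exists_large (w : X) (N : ℕ) (hm : 0 < p w) :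
    ∃ z ∈ ball (0 : ℂ) 1, 0.9 * p w ≤ ‖deriv w z‖ * ‖z‖ ^ N := by
  by_contra! hcon
  have : p w ≤ 0.9 * p w := by
    apply p_le
    intro z hz
    have hz1 : ‖z‖ < 1 := by simpa using hz
    have hb : ∀ r : ℝ, ‖z‖ < r → r < 1 → ‖deriv w z‖ * r ^ N ≤ 0.9 * p w := by
      intro r hr hr1
      have hr0 : 0 < r := (norm_nonneg z).trans_lt hr
      have hsub : closure (ball (0 : ℂ) r) ⊆ ball 0 1 := by
        rw [closure_ball _ hr0.ne']; exact closedBall_subset_ball hr1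
      have hd : DiffContOnCl ℂ (deriv w) (ball 0 r) :=
        ((deriv_diffOn w).mono hsub).diffContOnCl
      rw [← le_div_iff₀ (by positivity)]
      apply norm_le_of_forall_mem_frontier_norm_le isBounded_ball hd _
        (subset_closure (by simpa using hr))
      intro y hy
      rw [frontier_ball _ hr0.ne'] at hy
      have hy' : ‖y‖ = r := by simpa using hy
      have := hcon y (by simpa [hy'] using hr1)
      rw [hy'] at this
      rw [le_div_iff₀ (by positivity)]
      exact this.le
    have ht : Tendsto (fun r : ℝ => ‖deriv w z‖ * r ^ N) (𝓝[<] 1) (𝓝 (‖deriv w z‖ * 1 ^ N)) := by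
      apply Tendsto.mono_left _ nhdsWithin_le_nhds
      apply Continuous.tendsto; fun_prop
    rw [one_pow, mul_one] at ht
    refine le_of_tendsto ht ?_
    filter_upwards [Ioo_mem_nhdsLT hz1] with r hr
    exact hb r hr.1 hr.2
  linarith

theorem poly_bound {u : ℂ} (hu : ‖u‖ ≤ 1) : ‖1 + (u - u ^ 2)‖ ≤ 9 / 4 := by
  have h1 : normSq u ≤ 1 := by
    rw [normSq_eq_norm_sq]; exact pow_le_one₀ (norm_nonneg _) hu
  have h2 : normSq (1 + (u - u ^ 2)) ≤ 5 := by
    simp only [normSq_apply, add_re, add_im, sub_re, sub_im, pow_two, mul_re, mul_im, one_re,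
      one_im] at *
    have h3 : 0 ≤ (1 - (u.re * u.re + u.im * u.im)) *
      (4 + (u.re * u.re + u.im * u.im) - 2 * u.re) := by
      apply mul_nonneg (by linarith)
      nlinarith [sq_nonneg (u.re - 1), sq_nonneg u.im]
    nlinarith [sq_nonneg u.re]
  rw [normSq_eq_norm_sq] at h2
  nlinarith [norm_nonneg (1 + (u - u ^ 2))]

theorem exists_Q (w : X) (N : ℕ) (hm : 0 < p w) :
    ∃ Q : X, S Q ≤ 2 * p w / (N + 1) ∧ 1.7 * p w ≤ p Q ∧ p (w + Q) ≤ 9 / 4 * p w := by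
  obtain ⟨z0, hz0, hz0'⟩ := exists_large w N hm
  have hz01 : ‖z0‖ < 1 := by simpa using hz0
  have hzn : z0 ^ N ≠ 0 := by
    intro h
    have : ‖z0‖ ^ N = 0 := by rw [← norm_pow, h, norm_zero]
    rw [this] at hz0'
    linarith
  obtain ⟨ω, hω, hωz⟩ : ∃ ω : ℂ, ‖ω‖ = 1 ∧ ω * z0 ^ N = -(‖z0 ^ N‖ : ℂ) := by
    have : (‖z0 ^ N‖ : ℂ) ≠ 0 := by exact_mod_cast norm_ne_zero_iff.2 hzn
    refine ⟨-(‖z0 ^ N‖ : ℂ) / z0 ^ N, ?_, by field_simp⟩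
    rw [norm_div, norm_neg, norm_real, norm_norm, div_self (norm_ne_zero_iff.2 hzn)]
  set q : ℂ → ℂ := fun z => ω * z ^ N - (ω * z ^ N) ^ 2 with hq
  have hqd : Differentiable ℂ q := by fun_prop
  have hu : ∀ z ∈ ball (0 : ℂ) 1, ‖ω * z ^ N‖ ≤ 1 := fun z hz => by
    rw [norm_mul, hω, one_mul, norm_pow]
    exact pow_le_one₀ (norm_nonneg _) (by simpa using (ball_subset_closedBall hz))
  have hqb : ∀ z ∈ ball (0 : ℂ) 1, ‖q z‖ ≤ 2 * ‖z‖ ^ N := fun z hz => by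
    have h1 := hu z hz
    have h2 : ‖ω * z ^ N‖ = ‖z‖ ^ N := by rw [norm_mul, hω, one_mul, norm_pow]
    have h3 := norm_sub_le (ω * z ^ N) ((ω * z ^ N) ^ 2)
    rw [norm_pow] at h3
    rw [h2] at h1 h3
    have : (‖z‖ ^ N) ^ 2 ≤ ‖z‖ ^ N := by
      have : 0 ≤ ‖z‖ ^ N := by positivity
      nlinarith
    simp only [hq]
    linarith
  obtain ⟨Q0, hQ00, hQ0⟩ := (((deriv_diffOn w).mul hqd.differentiableOn).isExactOn_ball).with_val_at
    0 0
  have hQ0 : ∀ z ∈ ball (0 : ℂ) 1, HasDerivAt Q0 (deriv w z * q z) z := hQ0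
  have hmem : MemSInf Q0 := by
    refine ⟨fun z hz => (hQ0 z hz).differentiableAt.differentiableWithinAt, p w * 2, fun z hz => ?_⟩
    rw [(hQ0 z hz).deriv, norm_mul]
    refine mul_le_mul (le_p w hz) ((hqb z hz).trans ?_) (norm_nonneg _) (apply_nonneg _ _)
    have := pow_le_one₀ (n := N) (norm_nonneg z) (by simpa using (ball_subset_closedBall hz))
    linarith
  obtain ⟨Q, hQ⟩ := exists_of_mem hmem
  have hQd : ∀ z ∈ ball (0 : ℂ) 1, deriv Q z = deriv w z * q z := fun z hz => by
    rw [(hQ.eventuallyEq_of_mem (isOpen_ball.mem_nhds hz)).deriv_eq, (hQ0 z hz).deriv]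
  refine ⟨Q, ?_, ?_, ?_⟩
  · apply S_le
    intro z hz
    rw [hQ hz]
    have hz1 : ‖z‖ < 1 := by simpa using hz
    have hball : ∀ t ∈ Icc (0 : ℝ) 1, (t : ℂ) * z ∈ ball (0 : ℂ) 1 := fun t ht => by
      rw [mem_ball_zero_iff, norm_mul, norm_real, Real.norm_of_nonneg ht.1]
      nlinarith [ht.1, ht.2, norm_nonneg z]
    have hder : ∀ t ∈ Icc (0 : ℝ) 1, HasDerivAt (fun t : ℝ => Q0 ((t : ℂ) * z))
        (deriv w (t * z) * q (t * z) * z) t := fun t ht => by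
      have h1 : HasDerivAt (fun t : ℝ => (t : ℂ) * z) z t := by
        simpa using (ofRealCLM.hasDerivAt (x := t)).mul_const z
      exact (hQ0 _ (hball t ht)).comp t h1
    have := image_norm_le_of_norm_deriv_right_le_deriv_boundary
      (f := fun t : ℝ => Q0 ((t : ℂ) * z)) (a := 0) (b := 1)
      (f' := fun t : ℝ => deriv w (t * z) * q (t * z) * z)
      (B := fun t => 2 * p w * (t ^ (N + 1) / (N + 1)))
      (B' := fun t => 2 * p w * t ^ N)
      (fun t ht => (hder t ht).continuousAt.continuousWithinAt)
      (fun t ht => (hder t ⟨ht.1, ht.2.le⟩).hasDerivWithinAt)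
      (by simp [hQ00])
      (fun t => by
        have h := ((hasDerivAt_pow (N + 1) t).div_const ((N : ℝ) + 1)).const_mul (2 * p w)
        have h5 : (N : ℝ) + 1 ≠ 0 := by positivity
        push_cast at h
        rw [mul_div_cancel_left₀ _ h5] at h
        exact h)
      (fun t ht => by
        have hb := hball t ⟨ht.1, ht.2.le⟩
        rw [norm_mul, norm_mul]
        have h1 := le_p w hb
        have h2 := hqb _ hb
        have h3 : ‖(t : ℂ) * z‖ ≤ t := by
          rw [norm_mul, norm_real, Real.norm_of_nonneg ht.1]
          nlinarith [ht.1]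
        have h4 : ‖q (t * z)‖ ≤ 2 * t ^ N := h2.trans (by gcongr)
        calc ‖deriv w (t * z)‖ * ‖q (t * z)‖ * ‖z‖ ≤ p w * (2 * t ^ N) * 1 := by
              have := apply_nonneg p w
              have := ht.1
              gcongr
          _ = _ := by ring)
      (x := 1) (by simp)
    simp only [ofReal_one, one_mul, one_pow] at this
    refine this.trans (le_of_eq ?_)
    ring
  · refine le_trans ?_ (le_p Q hz0)
    rw [hQd z0 hz0, norm_mul]
    have h1 : ‖q z0‖ = ‖z0‖ ^ N * (1 + ‖z0‖ ^ N) := by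
      simp only [hq]
      rw [hωz, norm_pow]
      have : -((‖z0‖ ^ N : ℝ) : ℂ) - (-((‖z0‖ ^ N : ℝ) : ℂ)) ^ 2 =
        -((‖z0‖ ^ N * (1 + ‖z0‖ ^ N) : ℝ) : ℂ) := by push_cast; ring
      rw [this, norm_neg, norm_real, Real.norm_of_nonneg (by positivity)]
    rw [h1, ← mul_assoc]
    have h2 := le_p w hz0
    have h3 : 0.9 ≤ ‖z0‖ ^ N := by
      by_contra! h
      have : 0 ≤ ‖z0‖ ^ N := by positivity
      nlinarith
    nlinarith
  · apply p_le
    intro z hz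
    rw [deriv_X_add _ _ hz, hQd z hz]
    have : deriv w z + deriv w z * q z = (1 + q z) * deriv w z := by ring
    rw [this, norm_mul]
    exact mul_le_mul (poly_bound (hu z hz)) (le_p w hz) (norm_nonneg _) (by norm_num)

/-- A surjective real-linear isometry maps constants to constants. -/
theorem const_to_const (U : X ≃ₗᵢ[ℝ] X) (c : ℂ) : ∃ d : ℂ, U (K c) = K d := by
  let L : ℂ →ₗ[ℝ] ℂ :=
    { toFun := fun c => U (K c) 1
      map_add' := fun a b => by
        have : K (a + b) = K a + K b := map_add KL a b
        rw [this, map_add]; rfl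
      map_smul' := fun r a => by
        have : K (r • a) = r • K a := map_smul KL r a
        rw [this, map_smul]; rfl }
  have hL : ∀ c, L c = U (K c) 1 := fun _ => rfl
  have hSpos : ∀ c : ℂ, ‖c‖ = 1 → 0 < S (U (K c)) := by
    intro c hc
    rcases (apply_nonneg S (U (K c))).eq_or_lt with h | h
    · have h2 := S_eq_zero h.symm
      have h3 := U.norm_map (K c)
      rw [h2, norm_K, hc, norm_zero] at h3
      norm_num at h3
    · exact h
  have hex : ∀ t : ℂ, ‖t‖ = 1 → ∃ c : ℂ, ‖c‖ = 1 ∧ L c = S (U (K c)) * t := by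
    intro t ht
    obtain ⟨c, h1, h2, -⟩ := cluster U ht (fun _ => 0) 0 (fun n => by simp)
    exact ⟨c, h1, h2⟩
  have hpol : ∀ z : ℂ, ∃ t : ℂ, ‖t‖ = 1 ∧ z = ‖z‖ * t := by
    intro z
    rcases eq_or_ne z 0 with rfl | h
    · exact ⟨1, by simp, by simp⟩
    · have : (‖z‖ : ℂ) ≠ 0 := by exact_mod_cast norm_ne_zero_iff.2 h
      exact ⟨z / ‖z‖, by simp [h], by field_simp⟩
  have hscale : ∀ (z t c : ℂ), ‖c‖ = 1 → z = ‖z‖ * t → L c = S (U (K c)) * t →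
      L ((‖z‖ / S (U (K c))) • c) = z := by
    intro z t c hc hz hLc
    have : (S (U (K c)) : ℂ) ≠ 0 := by exact_mod_cast (hSpos c hc).ne'
    rw [map_smul, hLc, real_smul]
    conv_rhs => rw [hz]
    push_cast
    field_simp
  have hsurj : Function.Surjective L := by
    intro z
    obtain ⟨t, ht, hz⟩ := hpol z
    obtain ⟨c, hc, hLc⟩ := hex t ht
    exact ⟨_, hscale z t c hc hz hLc⟩
  have hinj : Function.Injective L := LinearMap.injective_iff_surjective.2 hsurj
  have hzero : ∀ t c : ℂ, ‖t‖ = 1 → ‖c‖ = 1 → L c = S (U (K c)) * t → p (U (K c)) = 0 := by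
    intro t c ht hc hLc
    by_contra hne
    have hm : 0 < p (U (K c)) := lt_of_le_of_ne (apply_nonneg _ _) (Ne.symm hne)
    choose Q hQ1 hQ2 hQ3 using fun n : ℕ => exists_Q (U (K c)) ((n + 1) ^ 2) hm
    obtain ⟨c', hc', hc'2, hc'3⟩ := cluster U ht Q (2 * p (U (K c))) (fun n => by
      refine (hQ1 n).trans ?_
      have := apply_nonneg p (U (K c))
      push_cast
      gcongr
      linarith)
    have heq : c' = (S (U (K c')) / S (U (K c))) • c := by
      apply hinj
      have : (S (U (K c)) : ℂ) ≠ 0 := by exact_mod_cast (hSpos c hc).ne'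
      rw [map_smul, hLc, hL c', hc'2, real_smul]
      push_cast
      field_simp
    have hr : S (U (K c')) / S (U (K c)) = 1 := by
      have := congrArg norm heq
      rw [norm_smul, hc, hc', mul_one, Real.norm_of_nonneg] at this
      · exact this.symm
      · exact div_nonneg (apply_nonneg _ _) (apply_nonneg _ _)
    rw [hr, one_smul] at heq
    subst heq
    obtain ⟨n, hn⟩ := hc'3 (0.1 * p (U (K c'))) (by positivity)
    have := hQ2 n
    have := hQ3 n
    linarith
  obtain ⟨t, ht, hz⟩ := hpol (L c)
  obtain ⟨c1, hc1, hLc1⟩ := hex t ht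
  have h1 := hscale (L c) t c1 hc1 hz hLc1
  have h2 := hinj h1
  have h3 := const_of_p (hzero t c1 ht hc1 hLc1)
  refine ⟨(‖L c‖ / S (U (K c1))) • (U (K c1) 0), ?_⟩
  have h4 : K ((‖L c‖ / S (U (K c1))) • (U (K c1) 0)) =
    (‖L c‖ / S (U (K c1))) • K (U (K c1) 0) := map_smul KL _ _
  have h5 : K ((‖L c‖ / S (U (K c1))) • c1) = (‖L c‖ / S (U (K c1))) • K c1 := map_smul KL _ _
  rw [h4, ← h3, ← map_smul, ← h5, h2]

end SInf


namespace SInf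

open Filter Topology ComplexConjugate

/-- supremum of the real part over the closed disc -/
noncomputable def H (f : X) : ℝ := sSup ((fun z => (f z).re) '' closedBall (0 : ℂ) 1)

theorem H_cpt (f : X) : IsCompact ((fun z => (f z).re) '' closedBall (0 : ℂ) 1) :=
  (isCompact_closedBall 0 1).image_of_continuousOn (continuous_re.comp_continuousOn (X_cont f))

theorem le_H (f : X) {z : ℂ} (hz : z ∈ closedBall (0 : ℂ) 1) : (f z).re ≤ H f :=
  le_csSup (H_cpt f).bddAbove ⟨z, hz, rfl⟩

theorem H_le {f : X} {M : ℝ} (h : ∀ z ∈ closedBall (0 : ℂ) 1, (f z).re ≤ M) : H f ≤ M :=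
  csSup_le ⟨_, 0, by simp, rfl⟩ (by rintro _ ⟨z, hz, rfl⟩; exact h z hz)

theorem exp_diff {J : ℂ → ℂ} (hJ : DiffContOnCl ℂ J (ball 0 1)) :
    DiffContOnCl ℂ (fun z => exp (J z)) (ball 0 1) :=
  (differentiable_exp.diffContOnCl (s := univ)).comp hJ (fun _ _ => mem_univ _)

theorem exists_H (f : X) : ∃ x : ℂ, ‖x‖ = 1 ∧ (f x).re = H f := by
  obtain ⟨x, hx, hm⟩ := exists_mem_frontier_isMaxOn_norm isBounded_ball
    (nonempty_ball.2 one_pos) (exp_diff (X_diffContOnCl f))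
  rw [frontier_ball _ one_ne_zero] at hx
  rw [← closedBall_eq_closure] at hm
  refine ⟨x, by simpa using hx, le_antisymm (le_H f (sphere_subset_closedBall hx)) (H_le ?_)⟩
  intro z hz
  have := hm hz
  simpa [norm_exp] using this

theorem H_le_S (f : X) : H f ≤ S f :=
  H_le fun _ hz => (re_le_norm _).trans (le_S f hz)

/-- a function with constant real part on the circle is constant -/
theorem const_of_re {J : ℂ → ℂ} (hJ : DiffContOnCl ℂ J (ball 0 1)) {D : ℝ}
    (h : ∀ x : ℂ, ‖x‖ = 1 → (J x).re = D) : ∀ z ∈ closedBall (0 : ℂ) 1, J z = J 0 := by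
  have key : ∀ z ∈ closedBall (0 : ℂ) 1, (J z).re = D := by
    intro z hz
    rw [closedBall_eq_closure] at hz
    have h1 := norm_le_of_forall_mem_frontier_norm_le isBounded_ball (exp_diff hJ) (C := Real.exp D)
      (fun x hx => by
        rw [frontier_ball _ one_ne_zero] at hx
        rw [norm_exp, h x (by simpa using hx)]) hz
    have h2 := norm_le_of_forall_mem_frontier_norm_le isBounded_ball (exp_diff hJ.neg)
      (C := Real.exp (-D))
      (fun x hx => by
        rw [frontier_ball _ one_ne_zero] at hx
        rw [norm_exp, Pi.neg_apply, neg_re, h x (by simpa using hx)]) hz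
    rw [norm_exp, Real.exp_le_exp] at h1 h2
    simp at h2
    linarith
  have hm : IsMaxOn (norm ∘ fun z => exp (J z)) (ball 0 1) 0 := by
    intro z hz
    simp [norm_exp, key z (ball_subset_closedBall hz), key 0 (by simp)]
  have h3 := eqOn_of_isPreconnected_of_isMaxOn_norm (convex_ball (0 : ℂ) 1).isPreconnected
    isOpen_ball (exp_diff hJ).1 (mem_ball_self one_pos) hm
  have h4 : ∀ z ∈ ball (0 : ℂ) 1, deriv J z = 0 := by
    intro z hz
    have hd := hJ.differentiableAt isOpen_ball hz
    have h5 := hd.hasDerivAt.cexp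
    have h6 : HasDerivAt (fun z => exp (J z)) 0 z :=
      (hasDerivAt_const z (exp (J 0))).congr_of_eventuallyEq
        (h3.eventuallyEq_of_mem (isOpen_ball.mem_nhds hz))
    have := h5.unique h6
    simpa using this
  have h7 : EqOn J (fun _ => J 0) (ball 0 1) := fun z hz =>
    isOpen_ball.is_const_of_deriv_eq_zero (convex_ball (0 : ℂ) 1).isPreconnected hJ.1 h4 hz
      (mem_ball_self one_pos)
  intro z hz
  rw [closedBall_eq_closure] at hz
  exact h7.of_subset_closure hJ.2 continuousOn_const subset_closure le_rfl hz

theorem tendsto_norm_K (g : X) :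
    Tendsto (fun r : ℝ => ‖g + K r‖ - r) atTop (𝓝 (H g + p g)) := by
  have hlow : ∀ r : ℝ, H g + p g ≤ ‖g + K r‖ - r := by
    intro r
    obtain ⟨x, hx, hxe⟩ := exists_H g
    have hx' : x ∈ closedBall (0 : ℂ) 1 := by simp [hx]
    have h1 := le_S (g + K r) hx'
    have h2 := re_le_norm ((g + K r) x)
    rw [X_add, K_apply _ hx', add_re, ofReal_re, hxe] at h2
    rw [X_add, K_apply _ hx'] at h1
    rw [norm_def', p_add_K]
    linarith
  have hup : ∀ r : ℝ, S g + 1 ≤ r →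
      ‖g + K r‖ - r ≤ H g + p g + (S g) ^ 2 / 2 * (r - S g)⁻¹ := by
    intro r hr
    rw [norm_def', p_add_K]
    have hpos : 0 < r - S g := by linarith
    suffices S (g + K r) ≤ r + H g + (S g) ^ 2 / 2 * (r - S g)⁻¹ by linarith
    apply S_le
    intro z hz
    have hz' := ball_subset_closedBall hz
    rw [X_add, K_apply _ hz']
    have ha := le_H g hz'
    have hn := le_S g hz'
    have hre := (abs_le.1 ((abs_re_le_norm (g z)).trans hn)).1
    have him := (abs_im_le_norm (g z)).trans hn
    have hra : 0 < r + (g z).re := by linarith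
    have h1 : ‖g z + r‖ ≤ (r + (g z).re) + (S g) ^ 2 / 2 * (r + (g z).re)⁻¹ := by
      have hm : (r + (g z).re) * ((S g) ^ 2 / 2 * (r + (g z).re)⁻¹) = (S g) ^ 2 / 2 := by
        field_simp
      have hnn : 0 ≤ (S g) ^ 2 / 2 * (r + (g z).re)⁻¹ := by positivity
      refine (sq_le_sq₀ (norm_nonneg _) (by linarith)).1 ?_
      rw [← normSq_eq_norm_sq, normSq_apply, add_re, add_im, ofReal_re, ofReal_im]
      have : (g z).im ^ 2 ≤ (S g) ^ 2 := sq_le_sq' (abs_le.1 him).1 (abs_le.1 him).2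
      nlinarith
    have h2 : (r + (g z).re)⁻¹ ≤ (r - S g)⁻¹ := inv_anti₀ hpos (by linarith)
    have h3 : (S g) ^ 2 / 2 * (r + (g z).re)⁻¹ ≤ (S g) ^ 2 / 2 * (r - S g)⁻¹ := by gcongr
    linarith
  refine tendsto_of_tendsto_of_tendsto_of_le_of_le' tendsto_const_nhds (h := fun r : ℝ =>
    H g + p g + (S g) ^ 2 / 2 * (r - S g)⁻¹) ?_ (Eventually.of_forall hlow)
    ((eventually_ge_atTop _).mono hup)
  have : Tendsto (fun r : ℝ => (r - S g)⁻¹) atTop (𝓝 0) :=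
    tendsto_inv_atTop_zero.comp (tendsto_atTop_add_const_right _ _ tendsto_id)
  simpa using (this.const_mul ((S g) ^ 2 / 2)).const_add (H g + p g)

theorem K_smul (a b : ℂ) : a • K b = K (a * b) :=
  X_ext' fun z hz => by rw [X_smul, K_apply _ hz, K_apply _ hz]

theorem norm_add_K (f : X) {u : ℂ} (hu : ‖u‖ = 1) (r : ℝ) :
    ‖f + K (r * u)‖ = ‖conj u • f + K r‖ := by
  have h : conj u • f + K r = conj u • (f + K (r * u)) := by
    rw [smul_add, K_smul]
    congr 2
    rw [mul_left_comm, mul_comm (conj u), mul_conj, normSq_eq_norm_sq, hu]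
    simp
  rw [h, norm_smul, RCLike.norm_conj, hu, one_mul]

theorem p_usmul {u : ℂ} (hu : ‖u‖ = 1) (f : X) : p (u • f) = p f := by
  rw [map_smul_eq_mul, hu, one_mul]

/-- the fundamental identity -/
theorem fund (U : X ≃ₗᵢ[ℝ] X) (hU : ∀ c, U (K c) = K c) (f : X) {u : ℂ} (hu : ‖u‖ = 1) :
    H (conj u • U f) + p (U f) = H (conj u • f) + p f := by
  have h1 := tendsto_norm_K (conj u • U f)
  have h2 := tendsto_norm_K (conj u • f)
  have hu' : ‖conj u‖ = 1 := by rw [RCLike.norm_conj, hu]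
  rw [p_usmul hu'] at h1 h2
  refine tendsto_nhds_unique h1 ?_
  convert h2 using 3 with r
  rw [← norm_add_K _ hu, ← norm_add_K _ hu, ← U.norm_map (f + K _), map_add, hU]

/-- directional derivative at infinity of `H` -/
theorem tendsto_H {f g : X} {β : ℝ}
    (h : ∀ x ∈ closedBall (0 : ℂ) 1, (f x).re = H f → (g x).re = β) :
    Tendsto (fun r : ℝ => H (r • f + g) - r * H f) atTop (𝓝 β) := by
  have hlow : ∀ r : ℝ, β ≤ H (r • f + g) - r * H f := by
    intro r
    obtain ⟨x, hx, hxe⟩ := exists_H f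
    have hx' : x ∈ closedBall (0 : ℂ) 1 := by simp [hx]
    have h1 := le_H (r • f + g) hx'
    rw [X_add, X_rsmul, add_re, re_ofReal_mul, hxe, h x hx' hxe] at h1
    linarith
  have hup : ∀ ε > 0, ∀ᶠ r : ℝ in atTop, H (r • f + g) - r * H f ≤ β + ε := by
    intro ε hε
    set C := closedBall (0 : ℂ) 1 ∩ (fun x => (g x).re) ⁻¹' (Ici (β + ε)) with hC
    have hCc : IsCompact C := (isCompact_closedBall 0 1).of_isClosed_subset
      ((continuous_re.comp_continuousOn (X_cont g)).preimage_isClosed_of_isClosed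
        isClosed_closedBall isClosed_Ici) inter_subset_left
    obtain ⟨m, hm, hmC⟩ : ∃ m < H f, ∀ x ∈ C, (f x).re ≤ m := by
      rcases C.eq_empty_or_nonempty with hE | hne
      · exact ⟨H f - 1, by linarith, by simp [hE]⟩
      · obtain ⟨x, hxC, hx⟩ := hCc.exists_isMaxOn hne
          ((continuous_re.comp_continuousOn (X_cont f)).mono inter_subset_left)
        refine ⟨(f x).re, lt_of_le_of_ne (le_H f hxC.1) (fun he => ?_), fun y hy => hx hy⟩
        have h1 := h x hxC.1 he
        have h2 : β + ε ≤ (g x).re := hxC.2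
        linarith
    have hd : 0 < H f - m := by linarith
    filter_upwards [eventually_ge_atTop 0, eventually_ge_atTop ((H g - β) / (H f - m))]
      with r hr0 hr
    rw [div_le_iff₀ hd] at hr
    have : H (r • f + g) ≤ r * H f + (β + ε) := by
      apply H_le
      intro z hz
      rw [X_add, X_rsmul, add_re, re_ofReal_mul]
      have h1 := le_H f hz
      have h2 := le_H g hz
      by_cases hzC : z ∈ C
      · have h3 := hmC z hzC
        nlinarith
      · have h3 : (g z).re < β + ε := by
          by_contra hh
          exact hzC ⟨hz, not_lt.1 hh⟩
        nlinarith
    linarith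
  rw [Metric.tendsto_nhds]
  intro ε hε
  filter_upwards [hup (ε / 2) (by linarith)] with r hr
  rw [Real.dist_eq, abs_of_nonneg (by linarith [hlow r])]
  linarith

end SInf


namespace SInf

open Filter Topology ComplexConjugate

/-- quadratic polynomials -/
noncomputable def Q (a b c : ℂ) : X := mkE (fun z => a + b * z + c * z ^ 2) (by fun_prop)

theorem Q_apply (a b c : ℂ) {z : ℂ} (hz : z ∈ closedBall (0 : ℂ) 1) :
    Q a b c z = a + b * z + c * z ^ 2 := mkE_apply _ hz

theorem mem_cb {x : ℂ} (hx : ‖x‖ = 1) : x ∈ closedBall (0 : ℂ) 1 := by simp [hx]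

theorem p_Z : p (Q 0 1 0) = 1 := by
  have hd : ∀ z ∈ ball (0 : ℂ) 1, deriv (Q 0 1 0) z = 1 := fun z hz => by
    rw [Q, mkE_deriv _ hz]
    simp
  apply le_antisymm
  · exact p_le fun z hz => by rw [hd z hz]; simp
  · have := le_p (Q 0 1 0) (mem_ball_self one_pos)
    rwa [hd _ (mem_ball_self one_pos), norm_one] at this

theorem conj_mul_self {u : ℂ} (hu : ‖u‖ = 1) : conj u * u = 1 := by
  rw [mul_comm, mul_conj, normSq_eq_norm_sq, hu]; simp

theorem unit_rep (w : ℂ) : ∃ u : ℂ, ‖u‖ = 1 ∧ w = ‖w‖ * u := by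
  rcases eq_or_ne w 0 with h | h
  · exact ⟨1, by simp, by simp [h]⟩
  · have : (‖w‖ : ℂ) ≠ 0 := by exact_mod_cast norm_ne_zero_iff.2 h
    exact ⟨w / ‖w‖, by simp [h], by field_simp⟩

theorem eq_of_re {w u : ℂ} {ρ : ℝ} (hu : ‖u‖ = 1) (hw : ‖w‖ ≤ ρ) (h : (conj u * w).re = ρ) :
    w = ρ * u := by
  have h0 := norm_nonneg w
  have h1 : u.re * u.re + u.im * u.im = 1 := by
    rw [← normSq_apply, normSq_eq_norm_sq, hu, one_pow]
  have h2 : w.re * w.re + w.im * w.im ≤ ρ ^ 2 := by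
    rw [← normSq_apply, normSq_eq_norm_sq]; gcongr
  rw [mul_re, conj_re, conj_im] at h
  have h3 : (w.re - ρ * u.re) ^ 2 + (w.im - ρ * u.im) ^ 2 ≤ 0 := by nlinarith
  have h4 : w.re - ρ * u.re = 0 := by nlinarith [sq_nonneg (w.im - ρ * u.im), sq_nonneg (w.re - ρ * u.re)]
  have h5 : w.im - ρ * u.im = 0 := by nlinarith [sq_nonneg (w.im - ρ * u.im), sq_nonneg (w.re - ρ * u.re)]
  apply Complex.ext
  · rw [re_ofReal_mul]; linarith
  · rw [im_ofReal_mul]; linarith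

def Full (φ : X) (ρ : ℝ) : Prop := ∀ u : ℂ, ‖u‖ = 1 → H (conj u • φ) = ρ

theorem Full.norm_le {φ : X} {ρ : ℝ} (h : Full φ ρ) {x : ℂ} (hx : x ∈ closedBall (0 : ℂ) 1) :
    ‖φ x‖ ≤ ρ := by
  obtain ⟨u, hu, hw⟩ := unit_rep (φ x)
  have h1 := le_H (conj u • φ) hx
  rw [h u hu, X_smul, hw, mul_left_comm, conj_mul_self hu] at h1
  simpa using h1

theorem Full.exists {φ : X} {ρ : ℝ} (h : Full φ ρ) {u : ℂ} (hu : ‖u‖ = 1) :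
    ∃ x : ℂ, ‖x‖ = 1 ∧ φ x = ρ * u := by
  obtain ⟨x, hx, he⟩ := exists_H (conj u • φ)
  rw [h u hu, X_smul] at he
  exact ⟨x, hx, eq_of_re hu (h.norm_le (mem_cb hx)) he⟩

theorem Full.nonneg {φ : X} {ρ : ℝ} (h : Full φ ρ) : 0 ≤ ρ :=
  (norm_nonneg _).trans (h.norm_le (mem_cb (x := 1) (by simp)))

theorem Full.pos {φ : X} {ρ : ℝ} (h : Full φ ρ) (hφ : φ ≠ 0) : 0 < ρ := by
  rcases h.nonneg.lt_or_eq with h1 | h1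
  · exact h1
  · exfalso
    apply hφ
    apply X_ext'
    intro z hz
    have := h.norm_le hz
    rw [← h1] at this
    rw [X_zero]
    simpa using this

theorem full_of {φ : X} {ρ : ℝ} (h1 : ∀ x ∈ closedBall (0 : ℂ) 1, ‖φ x‖ ≤ ρ)
    (h2 : ∀ u : ℂ, ‖u‖ = 1 → ∃ x ∈ closedBall (0 : ℂ) 1, φ x = ρ * u) : Full φ ρ := by
  intro u hu
  apply le_antisymm
  · apply H_le
    intro z hz
    refine (re_le_norm _).trans ?_
    rw [X_smul, norm_mul, RCLike.norm_conj, hu, one_mul]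
    exact h1 z hz
  · obtain ⟨x, hx, he⟩ := h2 u hu
    have h3 := le_H (conj u • φ) hx
    rw [X_smul, he, mul_left_comm, conj_mul_self hu] at h3
    simpa using h3

theorem full_Z : Full (Q 0 1 0) 1 := by
  apply full_of
  · intro x hx
    rw [Q_apply _ _ _ hx]
    simpa using hx
  · intro u hu
    refine ⟨u, mem_cb hu, ?_⟩
    rw [Q_apply _ _ _ (mem_cb hu)]
    simp

theorem full_Zsq {c : ℂ} (hc : ‖c‖ = 1) : Full (Q 0 0 c) 1 := by
  apply full_of
  · intro x hx
    rw [Q_apply _ _ _ hx]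
    have : ‖x‖ ≤ 1 := by simpa using hx
    simpa [hc] using this
  · intro u hu
    obtain ⟨v, hv⟩ := IsAlgClosed.exists_pow_nat_eq (conj c * u) two_pos
    have hv1 : ‖v‖ = 1 := by
      have : ‖v‖ ^ 2 = 1 := by rw [← norm_pow, hv, norm_mul, RCLike.norm_conj, hc, hu, one_mul]
      exact (pow_eq_one_iff_of_nonneg (norm_nonneg _) two_ne_zero).1 this
    refine ⟨v, mem_cb hv1, ?_⟩
    rw [Q_apply _ _ _ (mem_cb hv1), hv, ← mul_assoc, mul_comm c, conj_mul_self hc]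
    simp

theorem smul_add' (c : ℂ) (r : ℝ) (f g : X) : c • (r • f + g) = r • (c • f) + c • g := by
  rw [smul_add, smul_comm]

theorem base (U : X ≃ₗᵢ[ℝ] X) (hU : ∀ c, U (K c) = K c) {φ : X} (hφ : U (Q 0 1 0) = φ) {ρ : ℝ}
    (hρ : Full φ ρ) {g : X} {γ : ℂ → ℂ}
    (hγ : ∀ u : ℂ, ‖u‖ = 1 → ∀ x ∈ closedBall (0 : ℂ) 1, φ x = ρ * u → U g x = γ u) :
    ∃ D : ℝ, ∀ u : ℂ, ‖u‖ = 1 → (conj u * γ u).re = (conj u * g u).re + D := by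
  have key : ∀ u : ℂ, ‖u‖ = 1 → Tendsto (fun r : ℝ =>
      p (r • Q 0 1 0 + g) - p (r • φ + U g) - r * ρ + r) atTop
      (𝓝 ((conj u * γ u).re - (conj u * g u).re)) := by
    intro u hu
    have h1 : Tendsto (fun r : ℝ => H (r • (conj u • φ) + conj u • U g) - r * H (conj u • φ)) atTop
        (𝓝 ((conj u * γ u).re)) := by
      apply tendsto_H
      intro x hx he
      rw [hρ u hu, X_smul] at he
      rw [X_smul, hγ u hu x hx (eq_of_re hu (hρ.norm_le hx) he)]
    have h2 : Tendsto (fun r : ℝ => H (r • (conj u • Q 0 1 0) + conj u • g)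
        - r * H (conj u • Q 0 1 0)) atTop (𝓝 ((conj u * g u).re)) := by
      apply tendsto_H
      intro x hx he
      rw [full_Z u hu, X_smul] at he
      have h3 := eq_of_re hu (full_Z.norm_le hx) he
      rw [Q_apply _ _ _ hx] at h3
      have h4 : x = u := by simpa using h3
      rw [X_smul, h4]
    refine (h1.sub h2).congr fun r => ?_
    rw [hρ u hu, full_Z u hu]
    have h5 := fund U hU (r • Q 0 1 0 + g) hu
    rw [map_add, map_smul, hφ, smul_add', smul_add'] at h5
    linarith
  refine ⟨(conj 1 * γ 1).re - (conj 1 * g 1).re, fun u hu => ?_⟩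
  have := tendsto_nhds_unique (key u hu) (key 1 (by simp))
  linarith

theorem fourier (F : X) {D : ℝ} (h : ∀ x : ℂ, ‖x‖ = 1 → (conj x * F x).re = D) :
    ∃ a b : ℂ, F = Q a b (-conj a) := by
  have hJ : DiffContOnCl ℂ (fun z => conj (F 0) * z + dslope F 0 z) (ball 0 1) := by
    have h1 : DiffContOnCl ℂ (dslope F 0) (ball 0 1) := by
      refine ⟨(differentiableOn_dslope (ball_mem_nhds _ one_pos)).2 (X_diff F), ?_⟩
      rw [← closedBall_eq_closure]
      exact (continuousOn_dslope (closedBall_mem_nhds _ one_pos)).2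
        ⟨X_cont F, X_diffAt F (mem_ball_self one_pos)⟩
    have h2 : DiffContOnCl ℂ (fun z => conj (F 0) * z) (ball 0 1) :=
      Differentiable.diffContOnCl (by fun_prop)
    exact h2.add h1
  have hs : ∀ z, z * dslope F 0 z = F z - F 0 := fun z => by
    have := sub_smul_dslope (F : ℂ → ℂ) 0 z
    simpa using this
  have hc := const_of_re hJ (D := D) fun x hx => by
    have h1 : dslope F 0 x = conj x * F x - conj x * F 0 := by
      rw [← mul_sub, ← hs, ← mul_assoc, conj_mul_self hx, one_mul]
    have h2 := h x hx
    simp only [h1, add_re, sub_re, mul_re, conj_re, conj_im] at h2 ⊢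
    linarith
  refine ⟨F 0, dslope F 0 0, X_ext' fun z hz => ?_⟩
  rw [Q_apply _ _ _ hz]
  have h1 := hc z hz
  simp only [mul_zero, zero_add] at h1
  have h2 := hs z
  linear_combination -h2 + z * h1

theorem poly_aux {s : Set ℂ} (hs : s.Infinite) {c0 c1 c2 c3 c4 : ℂ}
    (h : ∀ x ∈ s, c0 + c1 * x + c2 * x ^ 2 + c3 * x ^ 3 + c4 * x ^ 4 = 0) : c0 = 0 ∧ c1 = 0 := by
  let P : Polynomial ℂ := Polynomial.C c0 + Polynomial.C c1 * Polynomial.X +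
    Polynomial.C c2 * Polynomial.X ^ 2 + Polynomial.C c3 * Polynomial.X ^ 3 +
    Polynomial.C c4 * Polynomial.X ^ 4
  have hP : P = 0 := Polynomial.eq_zero_of_infinite_isRoot P (hs.mono fun x hx => by
    simpa [P, Polynomial.IsRoot] using h x hx)
  constructor
  · have := congrArg (fun p => Polynomial.coeff p 0) hP
    simpa [P] using this
  · have := congrArg (fun p => Polynomial.coeff p 1) hP
    simpa [P, Polynomial.coeff_X_pow, Polynomial.coeff_C] using this

theorem infinite_circle : {u : ℂ | ‖u‖ = 1}.Infinite := by
  have h : sphere (0 : ℂ) 1 = {u : ℂ | ‖u‖ = 1} := by ext; simp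
  rw [← h]
  refine IsPreconnected.infinite_of_nontrivial
    (isPreconnected_sphere (by rw [Complex.rank_real_complex]; norm_num) 0 1) ?_
  exact ⟨1, by simp, -1, by simp, by norm_num⟩

theorem const_modulus {a b c : ℂ} {R : ℝ} (hR : 0 < R) (h : Full (Q a b c) R) :
    a * conj c = 0 ∧ a * conj b + b * conj c = 0 := by
  set s : Set ℂ := {x | ‖x‖ = 1 ∧ ‖Q a b c x‖ = R} with hs
  have hsi : s.Infinite := by
    have h1 : {u : ℂ | ‖u‖ = 1} ⊆ (fun x => Q a b c x / R) '' s := by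
      intro u hu
      obtain ⟨x, hx, he⟩ := h.exists hu
      have hR' : (R : ℂ) ≠ 0 := by exact_mod_cast hR.ne'
      have hu' : ‖u‖ = 1 := hu
      refine ⟨x, ⟨hx, by simp [he, hu', abs_of_pos hR]⟩, ?_⟩
      simp only [he]
      field_simp
    exact (infinite_circle.mono h1).of_image _
  refine poly_aux hsi (c2 := a * conj a + b * conj b + c * conj c - R ^ 2)
    (c3 := b * conj a + c * conj b) (c4 := c * conj a) ?_
  rintro x ⟨hx, hR1⟩
  have h1 := conj_mul_self hx
  have h2 : Q a b c x * conj (Q a b c x) = R ^ 2 := by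
    rw [mul_conj, normSq_eq_norm_sq, hR1]; simp
  rw [Q_apply _ _ _ (mem_cb hx)] at h2
  simp only [map_add, map_mul, map_pow] at h2
  linear_combination x ^ 2 * h2 - (a + b * x + c * x ^ 2) * (conj b * x + conj c * (conj x * x + 1)) * h1

theorem const_modulus' {a b c : ℂ} {R : ℝ} (hc : c ≠ 0) (hR : 0 < R)
    (h : Full (Q a b (c - conj a)) R) : Q a b (c - conj a) = Q 0 0 c := by
  obtain ⟨h1, h2⟩ := const_modulus hR h
  rcases mul_eq_zero.1 h1 with h3 | h3
  · subst h3
    simp at h2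
    rcases h2 with h2 | h2
    · subst h2; simp
    · exact absurd h2 hc
  · exfalso
    have h4 : c - conj a = 0 := (map_eq_zero _).1 h3
    rw [h4] at h2 h
    have ha : a ≠ 0 := by rintro rfl; simp at h4; exact hc h4
    have hb : b = 0 := by simpa [ha] using h2
    subst hb
    obtain ⟨x, hx, h5⟩ := h.exists (u := 1) (by simp)
    obtain ⟨y, hy, h6⟩ := h.exists (u := -1) (by simp)
    rw [Q_apply _ _ _ (mem_cb hx)] at h5
    rw [Q_apply _ _ _ (mem_cb hy)] at h6
    have h7 : (R : ℂ) = 0 := by linear_combination (h6 - h5) / 2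
    exact hR.ne' (by exact_mod_cast h7)

theorem Q_add (a b c a' b' c' : ℂ) : Q a b c + Q a' b' c' = Q (a + a') (b + b') (c + c') :=
  X_ext' fun z hz => by
    rw [X_add, Q_apply _ _ _ hz, Q_apply _ _ _ hz, Q_apply _ _ _ hz]; ring

theorem Q_smul (a b c t : ℂ) : t • Q a b c = Q (t * a) (t * b) (t * c) :=
  X_ext' fun z hz => by
    rw [X_smul, Q_apply _ _ _ hz, Q_apply _ _ _ hz]; ring

theorem Q_rsmul (a b c : ℂ) (t : ℝ) : t • Q a b c = Q (t * a) (t * b) (t * c) :=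
  Q_smul a b c t

theorem Q_sub (a b c a' b' c' : ℂ) : Q a b c - Q a' b' c' = Q (a - a') (b - b') (c - c') :=
  X_ext' fun z hz => by
    rw [X_sub, Q_apply _ _ _ hz, Q_apply _ _ _ hz, Q_apply _ _ _ hz]; ring

theorem Q_K (a : ℂ) : Q a 0 0 = K a :=
  X_ext' fun z hz => by rw [K_apply _ hz, Q_apply _ _ _ hz]; ring

end SInf


namespace SInf

open Filter Topology ComplexConjugate

theorem exists_sq (f : X) : ∃ g : X, ∀ z ∈ closedBall (0 : ℂ) 1, g z = f z ^ 2 := by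
  have h : MemSInf (fun z => f z ^ 2) := by
    refine ⟨(X_diff f).pow 2, 2 * S f * p f, fun z hz => ?_⟩
    have := ((X_diffAt f hz).hasDerivAt.fun_pow 2).deriv
    rw [this]
    have h1 := le_S f (ball_subset_closedBall hz)
    have h2 := le_p f hz
    have h3 := apply_nonneg S f
    simp only [norm_mul, Nat.cast_ofNat, Complex.norm_ofNat, Nat.add_one_sub_one, pow_one]
    gcongr
  exact ⟨mkX _ h ((X_cont f).pow 2), fun z hz => mkX_apply h _ hz⟩

theorem H_vals {φ ψ : X} {ρ : ℝ} (h : Full φ ρ) (h0 : 0 < ρ) (h2 : ρ ≤ 2)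
    (hψ : ∀ z ∈ closedBall (0 : ℂ) 1, ψ z = φ z + (ρ ^ 2)⁻¹ * φ z ^ 2) :
    H ψ = ρ + 1 ∧ H (-ψ) = 1 + ρ ^ 2 / 8 := by
  have hρ : (ρ : ℂ) ≠ 0 := by exact_mod_cast h0.ne'
  have hB : ∀ z ∈ closedBall (0 : ℂ) 1, ∃ w : ℂ, ‖w‖ ≤ 1 ∧ ψ z = ρ * w + w ^ 2 := by
    intro z hz
    refine ⟨φ z / ρ, ?_, ?_⟩
    · rw [norm_div, norm_real, Real.norm_of_nonneg h0.le, div_le_one h0]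
      exact h.norm_le hz
    · rw [hψ z hz]; push_cast; field_simp
  have hE : ∀ u : ℂ, ‖u‖ = 1 → ∃ z ∈ closedBall (0 : ℂ) 1, ψ z = ρ * u + u ^ 2 := by
    intro u hu
    obtain ⟨x, hx, he⟩ := h.exists hu
    refine ⟨x, mem_cb hx, ?_⟩
    rw [hψ x (mem_cb hx), he]; push_cast; field_simp
  have hn : ∀ w : ℂ, w.re ^ 2 + w.im ^ 2 = ‖w‖ ^ 2 := fun w => by
    rw [← normSq_eq_norm_sq, normSq_apply]; ring
  constructor
  · apply le_antisymm
    · apply H_le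
      intro z hz
      obtain ⟨w, hw, he⟩ := hB z hz
      refine (re_le_norm _).trans ?_
      rw [he]
      refine (norm_add_le _ _).trans ?_
      rw [norm_mul, norm_pow, norm_real, Real.norm_of_nonneg h0.le]
      nlinarith [norm_nonneg w]
    · obtain ⟨z, hz, he⟩ := hE 1 (by simp)
      have := le_H ψ hz
      rw [he] at this
      simpa using this
  · apply le_antisymm
    · apply H_le
      intro z hz
      obtain ⟨w, hw, he⟩ := hB z hz
      have h3 := hn w
      have h4 : ‖w‖ ^ 2 ≤ 1 := by nlinarith [norm_nonneg w]
      rw [X_neg, he]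
      simp only [neg_re, add_re, pow_two, mul_re, ofReal_re, ofReal_im]
      nlinarith [sq_nonneg (w.re + ρ / 4)]
    · set y := Real.sqrt (1 - ρ ^ 2 / 16) with hy
      have hy2 : y ^ 2 = 1 - ρ ^ 2 / 16 := Real.sq_sqrt (by nlinarith)
      obtain ⟨z, hz, he⟩ := hE ⟨-ρ / 4, y⟩ (by
        have h3 := hn ⟨-ρ / 4, y⟩
        simp only at h3
        have h4 : ‖(⟨-ρ / 4, y⟩ : ℂ)‖ ^ 2 = 1 := by rw [← h3, hy2]; ring
        exact (pow_eq_one_iff_of_nonneg (norm_nonneg _) two_ne_zero).1 h4)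
      have h5 := le_H (-ψ) hz
      rw [X_neg, he] at h5
      simp only [neg_re, add_re, pow_two, mul_re, ofReal_re, ofReal_im] at h5
      nlinarith

theorem linear_of {φ : X} (h : Full φ 1) (hp : p φ = 1) :
    ∃ lam : ℂ, ‖lam‖ = 1 ∧ φ = Q 0 lam 0 := by
  obtain ⟨x1, hx1, he1⟩ := h.exists (u := 1) (by simp)
  obtain ⟨x2, hx2, he2⟩ := h.exists (u := -1) (by simp)
  have h01 : (0 : ℂ) ∈ closedBall (0 : ℂ) 1 := by simp
  have l1 := lip φ (mem_cb hx1) h01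
  have l2 := lip φ (mem_cb hx2) h01
  rw [he1, hp, sub_zero, hx1] at l1
  rw [he2, hp, sub_zero, hx2] at l2
  have h0 : φ 0 = 0 := by
    have := parallelogram_law_with_norm ℝ (φ 0) 1
    rw [norm_one] at this
    have e1 : ‖φ 0 - 1‖ ≤ 1 := by rw [norm_sub_rev]; simpa using l1
    have e2 : ‖φ 0 + 1‖ ≤ 1 := by
      rw [show φ 0 + 1 = -(((1 : ℝ) : ℂ) * -1 - φ 0) by push_cast; ring, norm_neg]; simpa using l2
    have : ‖φ 0‖ * ‖φ 0‖ ≤ 0 := by nlinarith [norm_nonneg (φ 0 - 1), norm_nonneg (φ 0 + 1)]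
    have : ‖φ 0‖ = 0 := by nlinarith [norm_nonneg (φ 0)]
    simpa using this
  have hle : ∀ z ∈ closedBall (0 : ℂ) 1, ‖φ z‖ ≤ ‖z‖ := fun z hz => by
    have := lip φ hz h01
    rwa [h0, hp, sub_zero, sub_zero, one_mul] at this
  have hxm : ‖x1 / 2‖ = 1 / 2 := by rw [norm_div, hx1]; simp
  have hhalf : x1 / 2 ∈ ball (0 : ℂ) 1 := by rw [mem_ball_zero_iff, hxm]; norm_num
  have hv : ‖φ (x1 / 2)‖ = 1 / 2 := by
    have e1 := hle _ (ball_subset_closedBall hhalf)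
    have e2 := lip φ (mem_cb hx1) (ball_subset_closedBall hhalf)
    rw [he1, hp, show x1 - x1 / 2 = x1 / 2 by ring, hxm] at e2
    have e3 := norm_sub_norm_le (((1 : ℝ) : ℂ) * 1) (φ (x1 / 2))
    rw [hxm] at e1
    simp only [ofReal_one, mul_one, norm_one] at e3 e2
    linarith
  have hx0 : x1 / 2 ≠ 0 := by rw [← norm_pos_iff, hxm]; norm_num
  have hds : ‖dslope φ 0 (x1 / 2)‖ = 1 := by
    rw [dslope_of_ne _ hx0, slope_def_field, h0, sub_zero, sub_zero, norm_div, hv, hxm]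
    norm_num
  have hmaps : MapsTo φ (ball 0 1) (ball (φ 0) 1) := fun z hz => by
    rw [h0]
    rw [mem_ball_zero_iff] at hz ⊢
    exact (hle z (by simpa using hz.le)).trans_lt hz
  have := affine_of_mapsTo_ball_of_norm_dslope_eq_div (X_diff φ)
    (hmaps.mono_right ball_subset_closedBall) hhalf (by simpa using hds)
  refine ⟨dslope φ 0 (x1 / 2), hds, X_ext fun z hz => ?_⟩
  rw [this hz, Q_apply _ _ _ (ball_subset_closedBall hz), h0]
  simp [mul_comm]

theorem U_Z (U : X ≃ₗᵢ[ℝ] X) (hU : ∀ c, U (K c) = K c) :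
    ∃ lam : ℂ, ‖lam‖ = 1 ∧ U (Q 0 1 0) = Q 0 lam 0 := by
  set φ := U (Q 0 1 0) with hφ
  set ρ := 2 - p φ with hρ
  have hfull : Full φ ρ := fun u hu => by
    have := fund U hU (Q 0 1 0) hu
    rw [full_Z u hu, p_Z] at this
    linarith
  have hφ0 : φ ≠ 0 := fun h => by
    rw [hφ, map_eq_zero_iff U U.injective] at h
    have := p_Z
    rw [h, map_zero] at this
    norm_num at this
  have hpos := hfull.pos hφ0
  have hp0 := apply_nonneg p φ
  have hρ' : (ρ : ℂ) ≠ 0 := by exact_mod_cast hpos.ne'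
  obtain ⟨s, hs⟩ := exists_sq φ
  have hsfull : Full s (ρ ^ 2) := by
    apply full_of
    · intro x hx
      rw [hs x hx, norm_pow]
      have := hfull.norm_le hx
      gcongr
    · intro u hu
      obtain ⟨v, hv⟩ := IsAlgClosed.exists_pow_nat_eq u two_pos
      have hv1 : ‖v‖ = 1 := by
        have : ‖v‖ ^ 2 = 1 := by rw [← norm_pow, hv, hu]
        exact (pow_eq_one_iff_of_nonneg (norm_nonneg _) two_ne_zero).1 this
      obtain ⟨x, hx, he⟩ := hfull.exists hv1
      refine ⟨x, mem_cb hx, ?_⟩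
      rw [hs x (mem_cb hx), he, mul_pow, hv]
      simp
  obtain ⟨g, hg⟩ := U.surjective s
  obtain ⟨D, hD⟩ := base U hU hφ.symm hfull (g := g) (γ := fun u => (ρ * u) ^ 2)
    (fun u hu x hx he => by rw [hg, hs x hx, he])
  obtain ⟨a, b, hab⟩ := fourier (g - Q 0 0 (ρ ^ 2)) (D := -D) (fun x hx => by
    have h1 := hD x hx
    rw [X_sub, Q_apply _ _ _ (mem_cb hx), mul_sub, sub_re]
    simp only [zero_add, zero_mul]
    rw [mul_pow] at h1
    linarith)
  have hgQ : g = Q a b (ρ ^ 2 - conj a) := by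
    rw [sub_eq_iff_eq_add] at hab
    rw [hab, Q_add]
    congr 1 <;> ring
  have hgfull : Full g (ρ ^ 2 + p s - p g) := fun u hu => by
    have := fund U hU g hu
    rw [hg, hsfull u hu] at this
    linarith
  have hs0 : s ≠ 0 := fun h => by
    obtain ⟨x, hx, he⟩ := hsfull.exists (u := 1) (by simp)
    rw [h, X_zero] at he
    have : (ρ : ℂ) ^ 2 = 0 := by simpa using he.symm
    exact hρ' (by simpa using this)
  have hg0 : g ≠ 0 := fun h => hs0 (by rw [← hg, h, map_zero])
  have hgpos := hgfull.pos hg0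
  rw [hgQ] at hgfull
  have hg2 := const_modulus' (pow_ne_zero 2 hρ') (by rwa [← hgQ]) hgfull
  rw [← hgQ] at hg2
  have hU2 : U (Q 0 1 1) = φ + (ρ ^ 2)⁻¹ • s := by
    have e : Q 0 1 1 = Q 0 1 0 + ((ρ ^ 2)⁻¹ : ℝ) • g := by
      rw [hg2, Q_rsmul, Q_add]
      congr 1
      · simp
      · simp
      · push_cast; field_simp; ring
    rw [e, map_add, map_smul, hg]
  obtain ⟨v1, v2⟩ := H_vals (ψ := U (Q 0 1 1)) hfull hpos (by linarith) (fun z hz => by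
    rw [hU2, X_add, X_rsmul, hs z hz])
  obtain ⟨w1, w2⟩ := H_vals (ψ := Q 0 1 1) full_Z one_pos (by norm_num) (fun z hz => by
    rw [Q_apply _ _ _ hz, Q_apply _ _ _ hz]; push_cast; ring)
  have n1 := fund U hU (Q 0 1 1) (u := 1) (by simp)
  have n2 := fund U hU (Q 0 1 1) (u := -1) (by simp)
  simp only [map_one, one_smul, map_neg, neg_smul] at n1 n2
  rw [v1, w1] at n1
  rw [v2, w2] at n2
  have hq : (ρ - 1) * (ρ - 7) = 0 := by nlinarith
  have hρ1 : ρ = 1 := by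
    rcases mul_eq_zero.1 hq with h | h <;> linarith
  rw [hρ1] at hfull
  exact linear_of hfull (by linarith)

end SInf


namespace SInf

open Filter Topology ComplexConjugate

theorem pm_I {b : ℂ} (h1 : ‖b‖ = 1) (h2 : ‖1 + b‖ ^ 2 = 2) : b = I ∨ b = -I := by
  have e1 : b.re * b.re + b.im * b.im = 1 := by
    rw [← normSq_apply, normSq_eq_norm_sq, h1, one_pow]
  rw [← normSq_eq_norm_sq, normSq_apply, add_re, add_im, one_re, one_im] at h2
  have hre : b.re = 0 := by linarith
  have him : (b.im - 1) * (b.im + 1) = 0 := by rw [hre] at e1; linarith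
  rcases mul_eq_zero.1 him with h | h
  · left
    apply Complex.ext
    · simpa using hre
    · simp; linarith
  · right
    apply Complex.ext
    · simpa using hre
    · simp; linarith

theorem norm_one_add_I : ‖(1 : ℂ) + I‖ ^ 2 = 2 := by
  rw [← normSq_eq_norm_sq, normSq_apply]
  simp
  norm_num

theorem norm_linear (b : ℂ) : ‖Q 0 b 0‖ = ‖b‖ * ‖Q 0 1 0‖ := by
  rw [← norm_smul, Q_smul]; simp

theorem norm_Z_pos : 0 < ‖Q 0 1 0‖ := by
  rw [norm_def', p_Z]
  linarith [apply_nonneg S (Q 0 1 0)]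

theorem add_quad (U : X ≃ₗᵢ[ℝ] X) (hU : ∀ c, U (K c) = K c) (hZ : U (Q 0 1 0) = Q 0 1 0) (g : X) :
    ∃ a b : ℂ, U g = g + Q a b (-conj a) := by
  obtain ⟨D, hD⟩ := base U hU hZ full_Z (g := g) (γ := fun u => U g u) (fun u hu x hx he => by
    rw [Q_apply _ _ _ hx] at he
    have : x = u := by simpa using he
    rw [this])
  obtain ⟨a, b, hab⟩ := fourier (U g - g) (D := D) (fun x hx => by
    have := hD x hx
    rw [X_sub, mul_sub, sub_re]
    linarith)
  exact ⟨a, b, by rw [← hab]; abel⟩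

theorem full_U (U : X ≃ₗᵢ[ℝ] X) (hU : ∀ c, U (K c) = K c) {f : X} {ρ : ℝ} (h : Full f ρ)
    (hf : f ≠ 0) : ∃ R, 0 < R ∧ Full (U f) R := by
  have h1 : Full (U f) (ρ + p f - p (U f)) := fun u hu => by
    have := fund U hU f hu
    rw [h u hu] at this
    linarith
  exact ⟨_, h1.pos (fun h0 => hf ((map_eq_zero_iff U U.injective).1 h0)), h1⟩

theorem ne_zero_of_full {f : X} {ρ : ℝ} (h : Full f ρ) (hρ : 0 < ρ) : f ≠ 0 := by
  rintro rfl
  obtain ⟨x, hx, he⟩ := h.exists (u := 1) (by simp)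
  rw [X_zero] at he
  have : (ρ : ℂ) = 0 := by simpa using he.symm
  exact hρ.ne' (by exact_mod_cast this)

theorem fix_sq (U : X ≃ₗᵢ[ℝ] X) (hU : ∀ c, U (K c) = K c) (hZ : U (Q 0 1 0) = Q 0 1 0) {c : ℂ}
    (hc : ‖c‖ = 1) : U (Q 0 0 c) = Q 0 0 c := by
  obtain ⟨R, hR, hF⟩ := full_U U hU (full_Zsq hc) (ne_zero_of_full (full_Zsq hc) one_pos)
  obtain ⟨a, b, hab⟩ := add_quad U hU hZ (Q 0 0 c)
  have e : U (Q 0 0 c) = Q a b (c - conj a) := by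
    rw [hab, Q_add]; congr 1 <;> ring
  rw [e] at hF ⊢
  exact const_modulus' (by rintro rfl; simp at hc) hR hF

theorem full_iZ : Full (Q 0 I 0) 1 := by
  apply full_of
  · intro x hx
    rw [Q_apply _ _ _ hx]
    simpa using hx
  · intro u hu
    have : ‖-I * u‖ = 1 := by simp [hu]
    refine ⟨-I * u, mem_cb this, ?_⟩
    rw [Q_apply _ _ _ (mem_cb this)]
    simp only [zero_add, zero_mul, add_zero, ofReal_one, one_mul]
    linear_combination -u * I_mul_I

theorem fix_iZ (U : X ≃ₗᵢ[ℝ] X) (hU : ∀ c, U (K c) = K c) (hZ : U (Q 0 1 0) = Q 0 1 0) :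
    U (Q 0 I 0) = Q 0 I 0 := by
  obtain ⟨R, hR, hF⟩ := full_U U hU full_iZ (ne_zero_of_full full_iZ one_pos)
  obtain ⟨a, b, hab⟩ := add_quad U hU hZ (Q 0 I 0)
  rw [Q_add] at hab
  have ha : a = 0 := by
    rw [hab] at hF
    have := (const_modulus hR hF).1
    simpa using this
  subst ha
  simp only [zero_add, map_zero, neg_zero] at hab
  have n1 := U.norm_map (Q 0 I 0)
  have n2 := U.norm_map (Q 0 1 0 + Q 0 I 0)
  rw [hab, norm_linear, norm_linear I, norm_I] at n1
  rw [map_add, hZ, hab, Q_add, Q_add] at n2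
  simp only [zero_add] at n2
  rw [norm_linear, norm_linear (1 + I)] at n2
  have n1' := mul_right_cancel₀ norm_Z_pos.ne' n1
  have n2' := mul_right_cancel₀ norm_Z_pos.ne' n2
  rcases pm_I n1' (by rw [n2', norm_one_add_I]) with h | h
  · rw [hab, h]
  · exfalso
    rw [h] at hab
    set f : X := Q 0 (1 + I) I with hf
    have hUf : U f = Q 0 (1 - I) I := by
      have : f = Q 0 1 0 + Q 0 I 0 + Q 0 0 I := by rw [Q_add, Q_add, hf]; simp
      rw [this, map_add, map_add, hZ, hab, fix_sq U hU hZ (by simp), Q_add, Q_add]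
      simp [sub_eq_add_neg]
    have hrel : ∀ y ∈ closedBall (0 : ℂ) 1, U f (I * y) = - f (-y) := by
      intro y hy
      have hy1 : I * y ∈ closedBall (0 : ℂ) 1 := by simpa using hy
      have hy2 : -y ∈ closedBall (0 : ℂ) 1 := by simpa using hy
      rw [hUf, hf, Q_apply _ _ _ hy1, Q_apply _ _ _ hy2]
      linear_combination (-y + I * y ^ 2) * I_mul_I
    have hm1 : ∀ y ∈ closedBall (0 : ℂ) 1, I * y ∈ closedBall (0 : ℂ) 1 :=
      fun y hy => by simpa using hy
    have hm2 : ∀ y ∈ closedBall (0 : ℂ) 1, -y ∈ closedBall (0 : ℂ) 1 :=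
      fun y hy => by simpa using hy
    have hback : ∀ z ∈ closedBall (0 : ℂ) 1, U f z = - f (I * z) := by
      intro z hz
      have := hrel (-(I * z)) (hm2 _ (hm1 z hz))
      rw [neg_neg, show I * -(I * z) = z by linear_combination -z * I_mul_I] at this
      exact this
    have hH1 : H (U f) = H (-f) := by
      apply le_antisymm
      · apply H_le
        intro z hz
        rw [hback z hz]
        exact le_H (-f) (hm1 z hz)
      · apply H_le
        intro z hz
        have := hrel (-z) (hm2 z hz)
        rw [neg_neg] at this
        rw [X_neg, ← this]
        exact le_H (U f) (hm1 _ (hm2 z hz))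
    have hH2 : H (-U f) = H f := by
      apply le_antisymm
      · apply H_le
        intro z hz
        rw [X_neg, hback z hz, neg_neg]
        exact le_H f (hm1 z hz)
      · apply H_le
        intro z hz
        have := hrel (-z) (hm2 z hz)
        rw [neg_neg] at this
        rw [show f z = (- U f) (I * -z) by rw [X_neg, this, neg_neg]]
        exact le_H (-U f) (hm1 _ (hm2 z hz))
    have n1 := fund U hU f (u := 1) (by simp)
    have n2 := fund U hU f (u := -1) (by simp)
    simp only [map_one, one_smul, map_neg, neg_smul] at n1 n2
    rw [hH1] at n1
    rw [hH2] at n2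
    have hlow : 2 ≤ H f := by
      have hz : (⟨7 / 10, -7 / 10⟩ : ℂ) ∈ closedBall (0 : ℂ) 1 := by
        rw [mem_closedBall_zero_iff]
        refine (sq_le_sq₀ (norm_nonneg _) zero_le_one).1 ?_
        rw [← normSq_eq_norm_sq, normSq_apply]
        norm_num
      have := le_H f hz
      rw [hf, Q_apply _ _ _ hz] at this
      simp only [add_re, mul_re, pow_two, one_re, I_re, I_im, mul_im, add_im, one_im, zero_re] at this
      norm_num at this
      rw [hf]
      linarith
    have hup : H (-f) ≤ 5 / 4 := by
      apply H_le
      intro z hz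
      rw [X_neg, hf, Q_apply _ _ _ hz]
      have h1 : ‖z‖ ≤ 1 := by simpa using hz
      have h2 : z.re * z.re + z.im * z.im ≤ 1 := by
        rw [← normSq_apply, normSq_eq_norm_sq]
        nlinarith [norm_nonneg z]
      simp only [add_re, mul_re, pow_two, one_re, I_re, I_im, mul_im, add_im, one_im, zero_re, neg_re]
      nlinarith [sq_nonneg (z.re - z.im + 1 / 2)]
    linarith

theorem fix_Q (U : X ≃ₗᵢ[ℝ] X) (hU : ∀ c, U (K c) = K c) (hZ : U (Q 0 1 0) = Q 0 1 0) (a b c : ℂ) :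
    U (Q a b c) = Q a b c := by
  obtain ⟨u, hu, hc⟩ := unit_rep c
  have e : Q a b c = K a + b.re • Q 0 1 0 + b.im • Q 0 I 0 + ‖c‖ • Q 0 0 u := by
    rw [← Q_K, Q_rsmul, Q_rsmul, Q_rsmul, Q_add, Q_add, Q_add]
    congr 1
    · simp
    · simp
    · simpa using hc
  rw [e]
  simp only [map_add, map_smul, hU, hZ, fix_iZ U hU hZ, fix_sq U hU hZ hu]

theorem U_id (U : X ≃ₗᵢ[ℝ] X) (hU : ∀ c, U (K c) = K c) (hZ : U (Q 0 1 0) = Q 0 1 0) (g : X) :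
    U g = g := by
  obtain ⟨a, b, hab⟩ := add_quad U hU hZ g
  set q := Q a b (-conj a) with hq
  have hfix : U q = q := fix_Q U hU hZ _ _ _
  have hk : ∀ k : ℕ, ‖g + (k : ℝ) • q‖ = ‖g‖ := by
    intro k
    induction k with
    | zero => simp
    | succ k ih =>
      rw [← ih, ← U.norm_map (g + (k : ℝ) • q), map_add, map_smul, hab, hfix]
      congr 1
      push_cast
      module
  have hq0 : ‖q‖ = 0 := by
    by_contra hne
    have hpos : 0 < ‖q‖ := lt_of_le_of_ne (norm_nonneg _) (Ne.symm hne)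
    obtain ⟨k, hk1⟩ := exists_nat_gt (2 * ‖g‖ / ‖q‖)
    rw [div_lt_iff₀ hpos] at hk1
    have h1 := norm_sub_le (g + (k : ℝ) • q) g
    rw [add_sub_cancel_left, hk, norm_smul, Real.norm_of_nonneg (Nat.cast_nonneg k)] at h1
    linarith
  rw [hab, norm_eq_zero.1 hq0, add_zero]

end SInf


namespace SInf

open Filter Topology ComplexConjugate

noncomputable def mkIso (A B : X →ₗ[ℝ] X) (hAB : ∀ f, A (B f) = f) (hBA : ∀ f, B (A f) = f)
    (hA : ∀ f, ‖A f‖ ≤ ‖f‖) (hB : ∀ f, ‖B f‖ ≤ ‖f‖) : X ≃ₗᵢ[ℝ] X where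
  toLinearEquiv := LinearEquiv.ofLinearMap A B (LinearMap.ext hAB) (LinearMap.ext hBA)
  norm_map' f := le_antisymm (hA f) (by
    have := hB (A f)
    rw [hBA] at this
    exact this)

theorem exists_rot {lam : ℂ} (h : ‖lam‖ = 1) : ∃ A : X →ₗ[ℝ] X,
    (∀ f, ∀ z ∈ closedBall (0 : ℂ) 1, A f z = f (lam * z)) ∧ ∀ f, ‖A f‖ ≤ ‖f‖ := by
  have hm : ∀ z ∈ ball (0 : ℂ) 1, lam * z ∈ ball (0 : ℂ) 1 := fun z hz => by
    simpa [h] using hz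
  have hm' : ∀ z ∈ closedBall (0 : ℂ) 1, lam * z ∈ closedBall (0 : ℂ) 1 := fun z hz => by
    simpa [h] using hz
  have hd : ∀ f : X, ∀ z ∈ ball (0 : ℂ) 1,
      HasDerivAt (fun z => f (lam * z)) (deriv f (lam * z) * lam) z := fun f z hz => by
    have h1 : HasDerivAt (fun z => lam * z) lam z := by
      simpa using (hasDerivAt_id z).const_mul lam
    exact (X_diffAt f (hm z hz)).hasDerivAt.comp z h1
  have hmem : ∀ f : X, MemSInf (fun z => f (lam * z)) := fun f =>
    ⟨fun z hz => (hd f z hz).differentiableAt.differentiableWithinAt, p f, fun z hz => by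
      rw [(hd f z hz).deriv, norm_mul, h, mul_one]
      exact le_p f (hm z hz)⟩
  have hc : ∀ f : X, ContinuousOn (fun z => f (lam * z)) (closedBall 0 1) := fun f =>
    (X_cont f).comp (by fun_prop) hm'
  have ha : ∀ f : X, ∀ z ∈ closedBall (0 : ℂ) 1, mkX _ (hmem f) (hc f) z = f (lam * z) :=
    fun f z hz => mkX_apply _ _ hz
  refine ⟨{ toFun := fun f => mkX _ (hmem f) (hc f), map_add' := ?_, map_smul' := ?_ }, ha, ?_⟩
  · intro f g
    apply X_ext'
    intro z hz
    rw [X_add, ha _ z hz, ha _ z hz, ha _ z hz, X_add]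
  · intro r f
    apply X_ext'
    intro z hz
    rw [ha _ z hz, RingHom.id_apply, X_rsmul, X_rsmul, ha _ z hz]
  · intro f
    change ‖mkX _ (hmem f) (hc f)‖ ≤ ‖f‖
    rw [norm_def', norm_def']
    refine add_le_add (S_le fun z hz => ?_) (p_le fun z hz => ?_)
    · rw [ha _ z (ball_subset_closedBall hz)]
      exact le_S f (hm' z (ball_subset_closedBall hz))
    · rw [mkX_deriv _ _ hz, (hd f z hz).deriv, norm_mul, h, mul_one]
      exact le_p f (hm z hz)

theorem exists_rotE {lam : ℂ} (h : ‖lam‖ = 1) : ∃ A : X ≃ₗᵢ[ℝ] X,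
    ∀ f, ∀ z ∈ closedBall (0 : ℂ) 1, A f z = f (lam * z) := by
  have h' : ‖conj lam‖ = 1 := by rw [RCLike.norm_conj, h]
  obtain ⟨A, hA, hA'⟩ := exists_rot h
  obtain ⟨B, hB, hB'⟩ := exists_rot h'
  refine ⟨mkIso A B (fun f => ?_) (fun f => ?_) hA' hB', hA⟩
  · apply X_ext'
    intro z hz
    rw [hA _ z hz, hB _ _ (by simpa [h] using hz), ← mul_assoc, conj_mul_self h, one_mul]
  · apply X_ext'
    intro z hz
    rw [hB _ z hz, hA _ _ (by simpa [h] using hz), ← mul_assoc, mul_comm lam, conj_mul_self h,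
      one_mul]

theorem exists_J : ∃ A : X ≃ₗᵢ[ℝ] X,
    ∀ f, ∀ z ∈ closedBall (0 : ℂ) 1, A f z = conj (f (conj z)) := by
  have hm : ∀ z ∈ ball (0 : ℂ) 1, conj z ∈ ball (0 : ℂ) 1 := fun z hz => by
    simpa using hz
  have hm' : ∀ z ∈ closedBall (0 : ℂ) 1, conj z ∈ closedBall (0 : ℂ) 1 := fun z hz => by
    simpa using hz
  have hd : ∀ f : X, ∀ z ∈ ball (0 : ℂ) 1,
      HasDerivAt (fun z => conj (f (conj z))) (conj (deriv f (conj z))) z := fun f z hz => by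
    have := (X_diffAt f (hm z hz)).hasDerivAt.conj_conj
    rwa [conj_conj] at this
  have hmem : ∀ f : X, MemSInf (fun z => conj (f (conj z))) := fun f =>
    ⟨fun z hz => (hd f z hz).differentiableAt.differentiableWithinAt, p f, fun z hz => by
      rw [(hd f z hz).deriv, RCLike.norm_conj]
      exact le_p f (hm z hz)⟩
  have hc : ∀ f : X, ContinuousOn (fun z => conj (f (conj z))) (closedBall 0 1) := fun f =>
    continuous_conj.comp_continuousOn ((X_cont f).comp continuous_conj.continuousOn hm')
  have ha : ∀ f : X, ∀ z ∈ closedBall (0 : ℂ) 1, mkX _ (hmem f) (hc f) z = conj (f (conj z)) :=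
    fun f z hz => mkX_apply _ _ hz
  obtain ⟨A, hA, hA'⟩ : ∃ A : X →ₗ[ℝ] X,
    (∀ f, ∀ z ∈ closedBall (0 : ℂ) 1, A f z = conj (f (conj z))) ∧ ∀ f, ‖A f‖ ≤ ‖f‖ := by
    refine ⟨{ toFun := fun f => mkX _ (hmem f) (hc f), map_add' := ?_, map_smul' := ?_ }, ha, ?_⟩
    · intro f g
      apply X_ext'
      intro z hz
      rw [X_add, ha _ z hz, ha _ z hz, ha _ z hz, X_add, map_add]
    · intro r f
      apply X_ext'
      intro z hz
      rw [ha _ z hz, RingHom.id_apply, X_rsmul, X_rsmul, ha _ z hz, map_mul, conj_ofReal]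
    · intro f
      change ‖mkX _ (hmem f) (hc f)‖ ≤ ‖f‖
      rw [norm_def', norm_def']
      refine add_le_add (S_le fun z hz => ?_) (p_le fun z hz => ?_)
      · rw [ha _ z (ball_subset_closedBall hz), RCLike.norm_conj]
        exact le_S f (hm' z (ball_subset_closedBall hz))
      · rw [mkX_deriv _ _ hz, (hd f z hz).deriv, RCLike.norm_conj]
        exact le_p f (hm z hz)
  have hAA : ∀ f, A (A f) = f := fun f => by
    apply X_ext'
    intro z hz
    rw [hA _ z hz, hA _ _ (hm' z hz), conj_conj, conj_conj]
  exact ⟨mkIso A A hAA hAA hA' hA', hA⟩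

theorem exists_smulE {a : ℂ} (h : ‖a‖ = 1) : ∃ A : X ≃ₗᵢ[ℝ] X, ∀ f, A f = a • f := by
  have hs : ∀ a : ℂ, ∃ A : X →ₗ[ℝ] X, ∀ f, A f = a • f := fun a =>
    ⟨{ toFun := fun f => a • f, map_add' := fun f g => smul_add _ _ _,
       map_smul' := fun r f => smul_comm _ _ _ }, fun f => rfl⟩
  obtain ⟨A, hA⟩ := hs a
  obtain ⟨B, hB⟩ := hs (conj a)
  refine ⟨mkIso A B (fun f => ?_) (fun f => ?_) (fun f => ?_) (fun f => ?_), hA⟩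
  · rw [hA, hB, smul_smul, mul_comm, conj_mul_self h, one_smul]
  · rw [hA, hB, smul_smul, conj_mul_self h, one_smul]
  · rw [hA, norm_smul, h, one_mul]
  · rw [hB, norm_smul, RCLike.norm_conj, h, one_mul]

theorem fixing_const (U : X ≃ₗᵢ[ℝ] X) (hU : ∀ c, U (K c) = K c) : ∃ lam : ℂ, ‖lam‖ = 1 ∧
    ∀ f, ∀ z ∈ closedBall (0 : ℂ) 1, U f z = f (lam * z) := by
  obtain ⟨lam, hl, hZ⟩ := U_Z U hU
  have hl' : ‖conj lam‖ = 1 := by rw [RCLike.norm_conj, hl]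
  obtain ⟨A, hA⟩ := exists_rotE hl'
  have hid := U_id (U.trans A) (fun c => by
    apply X_ext'
    intro z hz
    have hz' : conj lam * z ∈ closedBall (0 : ℂ) 1 := by simpa [hl] using hz
    rw [LinearIsometryEquiv.trans_apply, hU, hA _ z hz, K_apply _ hz, K_apply _ hz']) (by
    apply X_ext'
    intro z hz
    have hz' : conj lam * z ∈ closedBall (0 : ℂ) 1 := by simpa [hl] using hz
    rw [LinearIsometryEquiv.trans_apply, hZ, hA _ z hz, Q_apply _ _ _ hz, Q_apply _ _ _ hz']
    linear_combination z * conj_mul_self hl)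
  refine ⟨lam, hl, fun f z hz => ?_⟩
  have hz' : lam * z ∈ closedBall (0 : ℂ) 1 := by simpa [hl] using hz
  have h1 := hA (U f) _ hz'
  rw [← LinearIsometryEquiv.trans_apply, hid, ← mul_assoc, conj_mul_self hl, one_mul] at h1
  exact h1.symm

theorem linear_main (U : X ≃ₗᵢ[ℝ] X) : ∃ c lam : ℂ, ‖c‖ = 1 ∧ ‖lam‖ = 1 ∧
    ((∀ f, ∀ z ∈ closedBall (0 : ℂ) 1, U f z = c * f (lam * z)) ∨
     (∀ f, ∀ z ∈ closedBall (0 : ℂ) 1, U f z = conj (c * f (conj (lam * z))))) := by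
  obtain ⟨a, ha⟩ := const_to_const U 1
  obtain ⟨b, hb⟩ := const_to_const U I
  have hKadd : ∀ x y, K (x + y) = K x + K y := fun x y => map_add KL x y
  have hKs : ∀ (r : ℝ) x, K (r * x) = r • K x := fun r x => by
    have := map_smul KL r x
    rwa [real_smul] at this
  have ha1 : ‖a‖ = 1 := by
    rw [← norm_K, ← ha, U.norm_map, norm_K, norm_one]
  have hb1 : ‖b‖ = 1 := by
    rw [← norm_K, ← hb, U.norm_map, norm_K, norm_I]
  have ha1' : ‖conj a‖ = 1 := by rw [RCLike.norm_conj, ha1]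
  have hgen : ∀ c : ℂ, U (K c) = K (c.re * a + c.im * b) := fun c => by
    have : K c = c.re • K 1 + c.im • K I := by
      rw [← hKs, ← hKs, ← hKadd, mul_one, re_add_im]
    rw [this, map_add, map_smul, map_smul, ha, hb, hKadd, hKs, hKs]
  have hab : ‖a + b‖ ^ 2 = 2 := by
    rw [← norm_one_add_I]
    congr 1
    rw [← norm_K, ← norm_K, ← U.norm_map (K (1 + I)), hgen]
    simp
  have haa := conj_mul_self ha1
  obtain ⟨M, hM⟩ := exists_smulE ha1'
  have hcase := pm_I (b := conj a * b) (by rw [norm_mul, ha1', hb1, one_mul]) (by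
    rw [← hab]
    congr 1
    rw [← haa, ← mul_add, norm_mul, ha1', one_mul])
  have hMK : ∀ c, M (U (K c)) = K (c.re + c.im * (conj a * b)) := fun c => by
    rw [hM, hgen, K_smul]
    congr 1
    linear_combination c.re * haa
  have hback : ∀ (f : X) (z : ℂ), U f z = a * M (U f) z := fun f z => by
    rw [hM, X_smul, ← mul_assoc, mul_comm a, haa, one_mul]
  rcases hcase with hc | hc
  · obtain ⟨lam, hl, h⟩ := fixing_const (U.trans M) (fun c => by
      rw [LinearIsometryEquiv.trans_apply, hMK, hc, re_add_im])
    refine ⟨a, lam, ha1, hl, Or.inl fun f z hz => ?_⟩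
    rw [hback, ← LinearIsometryEquiv.trans_apply, h f z hz]
  · obtain ⟨J, hJ⟩ := exists_J
    obtain ⟨lam, hl, h⟩ := fixing_const ((U.trans M).trans J) (fun c => by
      apply X_ext'
      intro z hz
      rw [LinearIsometryEquiv.trans_apply, LinearIsometryEquiv.trans_apply, hMK, hc, hJ _ z hz,
        K_apply _ hz, K_apply _ (by simpa using hz)]
      apply Complex.ext <;> simp)
    refine ⟨conj a, conj lam, ha1', by rw [RCLike.norm_conj, hl], Or.inr fun f z hz => ?_⟩
    have hz' : conj z ∈ closedBall (0 : ℂ) 1 := by simpa using hz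
    have h1 := h f _ hz'
    rw [LinearIsometryEquiv.trans_apply, hJ _ _ hz', LinearIsometryEquiv.trans_apply, conj_conj]
      at h1
    rw [hback, map_mul, map_mul, conj_conj, conj_conj, ← h1, conj_conj]

end SInf


namespace SInf

open Filter Topology ComplexConjugate

theorem normSigma_congr {f g : ℂ → ℂ} (h : EqOn f g (ball 0 1)) : normSigma f = normSigma g := by
  unfold normSigma
  congr 1
  · exact iSup_congr fun z => by rw [h z.2]
  · exact iSup_congr fun z => by
      rw [(h.eventuallyEq_of_mem (isOpen_ball.mem_nhds z.2)).deriv_eq]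

theorem memSInf_sub {f g : ℂ → ℂ} (hf : MemSInf f) (hg : MemSInf g) : MemSInf (f - g) := by
  have := memSInf_add hf (memSInf_smul (-1) hg)
  rwa [neg_one_smul, ← sub_eq_add_neg] at this

theorem eqOn_of_normSigma {f g : ℂ → ℂ} (hf : MemSInf f) (hg : MemSInf g)
    (h : normSigma (f - g) = 0) : EqOn f g (ball 0 1) := by
  obtain ⟨F, hF⟩ := exists_of_mem (memSInf_sub hf hg)
  have h1 : ‖F‖ = 0 := by rw [norm_eq_normSigma, normSigma_congr hF, h]
  intro z hz
  have h2 := hF hz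
  rw [norm_eq_zero.1 h1, X_zero] at h2
  exact (sub_eq_zero.1 h2.symm)

end SInf

theorem surjective_isometry_normSigma
    (T : (ℂ → ℂ) → (ℂ → ℂ))
    (hmap : ∀ f, MemSInf f → MemSInf (T f))
    (hsurj : ∀ g, MemSInf g → ∃ f, MemSInf f ∧ Set.EqOn (T f) g (ball (0 : ℂ) 1))
    (hiso : ∀ f g, MemSInf f → MemSInf g → normSigma (T f - T g) = normSigma (f - g)) :
    ∃ c lam : ℂ, ‖c‖ = 1 ∧ ‖lam‖ = 1 ∧
      ((∀ f, MemSInf f → ∀ z ∈ ball (0 : ℂ) 1,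
          T f z = T 0 z + c * f (lam * z)) ∨
       (∀ f, MemSInf f → ∀ z ∈ ball (0 : ℂ) 1,
          T f z = T 0 z + (starRingEnd ℂ) (c * f ((starRingEnd ℂ) (lam * z))))) := by
  have hcongr : ∀ f g, MemSInf f → MemSInf g → Set.EqOn f g (ball (0 : ℂ) 1) →
      Set.EqOn (T f) (T g) (ball (0 : ℂ) 1) := by
    intro f g hf hg h
    apply SInf.eqOn_of_normSigma (hmap f hf) (hmap g hg)
    rw [hiso f g hf hg, SInf.normSigma_congr (g := ((0 : SInf.X) : ℂ → ℂ)),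
      ← SInf.norm_eq_normSigma, norm_zero]
    intro z hz
    exact sub_eq_zero.2 (h hz)
  choose T' hT' using fun F : SInf.X => SInf.exists_of_mem (hmap F (SInf.X_mem F))
  have hI : Isometry T' := by
    refine Isometry.of_dist_eq fun F G => ?_
    rw [dist_eq_norm, dist_eq_norm, SInf.norm_eq_normSigma, SInf.norm_eq_normSigma]
    refine Eq.trans ?_ (hiso F G (SInf.X_mem F) (SInf.X_mem G))
    apply SInf.normSigma_congr
    intro z hz
    change T' F z - T' G z = T F z - T G z
    rw [hT' F hz, hT' G hz]
  have hS : Function.Surjective T' := by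
    intro G
    obtain ⟨f, hf, hfG⟩ := hsurj G (SInf.X_mem G)
    obtain ⟨F, hF⟩ := SInf.exists_of_mem hf
    refine ⟨F, SInf.X_ext fun z hz => ?_⟩
    rw [hT' F hz, hcongr F f (SInf.X_mem F) hf hF hz, hfG hz]
  let E : SInf.X ≃ᵢ SInf.X := IsometryEquiv.mk (Equiv.ofBijective T' ⟨hI.injective, hS⟩) hI
  have hE : ∀ F, E.toRealLinearIsometryEquiv F = T' F - T' 0 := fun F =>
    IsometryEquiv.toRealLinearIsometryEquiv_apply E F
  have key : ∀ f, MemSInf f → ∃ F : SInf.X, Set.EqOn F f (ball (0 : ℂ) 1) ∧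
      ∀ z ∈ ball (0 : ℂ) 1, T f z = T 0 z + E.toRealLinearIsometryEquiv F z := by
    intro f hf
    obtain ⟨F, hF⟩ := SInf.exists_of_mem hf
    refine ⟨F, hF, fun z hz => ?_⟩
    have h0 : T' 0 z = T 0 z := by
      rw [hT' 0 hz]
      exact hcongr _ _ (SInf.X_mem 0) SInf.memSInf_zero (fun z _ => rfl) hz
    rw [hE, SInf.X_sub, h0, hT' F hz, hcongr F f (SInf.X_mem F) hf hF hz]
    ring
  obtain ⟨c, lam, hc, hl, h⟩ := SInf.linear_main E.toRealLinearIsometryEquiv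
  refine ⟨c, lam, hc, hl, ?_⟩
  rcases h with h | h
  · left
    intro f hf z hz
    obtain ⟨F, hF, hFz⟩ := key f hf
    rw [hFz z hz, h F z (ball_subset_closedBall hz), hF (by simpa [hl] using hz)]
  · right
    intro f hf z hz
    obtain ⟨F, hF, hFz⟩ := key f hf
    rw [hFz z hz, h F z (ball_subset_closedBall hz), hF (by simpa [hl] using hz)]
end

section
/- Let a ∈ 𝔻 and let T : 𝒮^∞ → 𝒮^∞ be a surjective (not necessarily linear) isometry with respect to the norm ‖·‖_σ. Then there exist constants c₀, c₁, λ ∈ ℂ with |c₀| = |c₁| = |λ| = 1 and b ∈ 𝔻 such that, with ρ : 𝔻 → 𝔻 defined by ρ(z) = λ·(z − b)/(conj(b)·z − 1), one of the following four formulas holds for all f ∈ 𝒮^∞ and all z ∈ 𝔻: (i) T(f)(z) = T(0)(z) + c₀·f(a) + ∫_{[a,z]} c₁·f'(ρ(ζ)) dζ; (ii) T(f)(z) = T(0)(z) + c₀·conj(f(a)) + ∫_{[a,z]} c₁·f'(ρ(ζ)) dζ; (iii) T(f)(z) = T(0)(z) + c₀·f(a) + ∫_{[a,z]} c₁·conj(f'(conj(ρ(ζ))))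 dζ; (iv) T(f)(z) = T(0)(z) + c₀·conj(f(a)) + ∫_{[a,z]} c₁·conj(f'(conj(ρ(ζ)))) dζ. -/
open Complex Metric Set

/-- The norm `‖f‖_σ = |f(a)| + sup_{w ∈ 𝔻} |f'(w)|`. -/
noncomputable def normSigmaA (a : ℂ) (f : ℂ → ℂ) : ℝ :=
  ‖f a‖ + ⨆ w : ball (0 : ℂ) 1, ‖deriv f (w : ℂ)‖

/-- The line integral `∫_{[a,z]} g(ζ) dζ = ∫₀¹ g(a + t(z − a))·(z − a) dt`
along the straight segment from `a` to `z`. -/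
noncomputable def lineInt (g : ℂ → ℂ) (a z : ℂ) : ℂ :=
  ∫ t in (0:ℝ)..1, g (a + (t : ℂ) * (z - a)) * (z - a)
lemma aux_compact_convexHull_biUnion {E ι : Type*} [AddCommGroup E] [Module ℝ E]
    [TopologicalSpace E] [IsTopologicalAddGroup E] [ContinuousSMul ℝ E]
    (t : Finset ι) (A : ι → Set E)
    (hA : ∀ i, IsCompact (A i)) (hc : ∀ i, Convex ℝ (A i)) :
    IsCompact (convexHull ℝ (⋃ i ∈ t, A i)) := by
  classical
  induction t using Finset.induction with
  | empty => simp
  | insert a s ha ih =>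
    rw [Finset.set_biUnion_insert]
    rcases (A a).eq_empty_or_nonempty with h1 | h1
    · rw [h1, empty_union]; exact ih
    rcases (⋃ i ∈ s, A i).eq_empty_or_nonempty with h2 | h2
    · rw [h2, union_empty, (hc a).convexHull_eq]; exact hA a
    rw [convexHull_union h1 h2, (hc a).convexHull_eq]
    have : convexJoin ℝ (A a) (convexHull ℝ (⋃ i ∈ s, A i)) =
        (fun p : ℝ × E × E => (1 - p.1) • p.2.1 + p.1 • p.2.2) ''
          (Icc (0:ℝ) 1 ×ˢ (A a ×ˢ convexHull ℝ (⋃ i ∈ s, A i))) := by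
      ext x
      simp only [mem_convexJoin, segment_eq_image, mem_image, Prod.exists, mem_prod]
      constructor
      · rintro ⟨p, hp, q, hq, θ, hθ, rfl⟩
        exact ⟨θ, p, q, ⟨hθ, hp, hq⟩, rfl⟩
      · rintro ⟨θ, p, q, ⟨hθ, hp, hq⟩, rfl⟩
        exact ⟨p, hp, q, hq, θ, hθ, rfl⟩
    rw [this]
    refine (isCompact_Icc.prod ((hA a).prod ih)).image ?_
    fun_prop

/-- Milman's converse to the Krein-Milman theorem. -/
lemma aux_milman {E : Type*} [AddCommGroup E] [Module ℝ E]
    [TopologicalSpace E] [T2Space E] [IsTopologicalAddGroup E] [ContinuousSMul ℝ E]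
    [LocallyConvexSpace ℝ E] {K C : Set E}
    (hC : IsCompact C) (hCc : Convex ℝ C) (hK : IsClosed K) (hKC : K ⊆ C)
    (h : C ⊆ closure (convexHull ℝ K)) : C.extremePoints ℝ ⊆ K := by
  intro x hx
  by_contra hxK
  have hsep : ∀ y : E, ∃ l : StrongDual ℝ E, y ∈ K → l y < l x := by
    intro y
    by_cases hy : y ∈ K
    · have : y ≠ x := fun h => hxK (h ▸ hy)
      obtain ⟨l, hl⟩ := geometric_hahn_banach_point_point this
      exact ⟨l, fun _ => hl⟩
    · exact ⟨0, fun h => absurd h hy⟩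
  choose l hl using hsep
  have hKc : IsCompact K := hC.of_isClosed_subset hK hKC
  let V : E → Set E := fun y => {z | l y z ≤ (l y y + l y x) / 2}
  obtain ⟨t, htK, ht⟩ := hKc.elim_nhds_subcover V (by
    intro y hy
    have : {z | l y z < (l y y + l y x) / 2} ∈ nhds y :=
      (isOpen_lt (l y).continuous continuous_const).mem_nhds (by
        have := hl y hy
        simp only [mem_ofPred_eq]; linarith)
    exact Filter.mem_of_superset this fun z hz => le_of_lt (show l y z < (l y y + l y x) / 2 from hz))
  have hVc : ∀ y, IsClosed (V y) := fun y => isClosed_le (l y).continuous continuous_const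
  have hVx : ∀ y, Convex ℝ (V y) := fun y =>
    convex_halfSpace_le (l y).toLinearMap.isLinear _
  have hcomp := aux_compact_convexHull_biUnion t (fun y => C ∩ V y)
    (fun y => hC.inter_right (hVc y)) (fun y => hCc.inter (hVx y))
  have hsub1 : K ⊆ ⋃ y ∈ t, C ∩ V y := by
    intro z hz
    obtain ⟨y, hy, hzy⟩ := mem_iUnion₂.1 (ht hz)
    exact mem_iUnion₂.2 ⟨y, hy, hKC hz, hzy⟩
  have hCe : C = convexHull ℝ (⋃ y ∈ t, C ∩ V y) := by
    apply Set.Subset.antisymm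
    · exact h.trans (closure_minimal (convexHull_mono hsub1) hcomp.isClosed)
    · refine convexHull_min ?_ hCc
      exact iUnion₂_subset fun y _ => inter_subset_left
  rw [hCe] at hx
  obtain ⟨y, hy, hxy⟩ := mem_iUnion₂.1 (extremePoints_convexHull_subset hx)
  have h1 := hl y (htK y hy)
  have h2 : l y x ≤ (l y y + l y x) / 2 := hxy.2
  linarith

/-- The algebra of bounded analytic functions on the disc. -/
def HInf : Subalgebra ℂ (BoundedContinuousFunction (ball (0:ℂ) 1) ℂ) where
  carrier := {f | ∃ F : ℂ → ℂ, DifferentiableOn ℂ F (ball 0 1) ∧ ∀ w : ball (0:ℂ) 1, F w = f w}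
  mul_mem' := by
    rintro f g ⟨F, hF, hf⟩ ⟨G, hG, hg⟩
    exact ⟨F * G, hF.mul hG, fun w => by simp [hf, hg]⟩
  add_mem' := by
    rintro f g ⟨F, hF, hf⟩ ⟨G, hG, hg⟩
    exact ⟨F + G, hF.add hG, fun w => by simp [hf, hg]⟩
  algebraMap_mem' := fun c => ⟨fun _ => c, differentiableOn_const c, fun w => rfl⟩

noncomputable def hmk (F : ℂ → ℂ) (hF : DifferentiableOn ℂ F (ball 0 1))
    (hM : ∃ M : ℝ, ∀ z ∈ ball (0:ℂ) 1, ‖F z‖ ≤ M) : HInf :=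
  ⟨BoundedContinuousFunction.ofNormedAddCommGroup (fun w : ball (0:ℂ) 1 => F w)
    (continuousOn_iff_continuous_domRestrict.1 hF.continuousOn) hM.choose
    (fun w => hM.choose_spec w w.2), F, hF, fun _ => rfl⟩

lemma hmk_apply (F : ℂ → ℂ) (hF hM) (w : ball (0:ℂ) 1) : (hmk F hF hM).1 w = F w := rfl

lemma hinf_ext {f g : HInf} (h : ∀ w, f.1 w = g.1 w) : f = g :=
  Subtype.ext (BoundedContinuousFunction.ext h)

lemma hinf_norm_apply_le (f : HInf) (w : ball (0:ℂ) 1) : ‖f.1 w‖ ≤ ‖f‖ :=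
  BoundedContinuousFunction.norm_coe_le_norm f.1 w

lemma hinf_norm_le {f : HInf} {C : ℝ} (hC : 0 ≤ C) (h : ∀ w, ‖f.1 w‖ ≤ C) : ‖f‖ ≤ C :=
  (BoundedContinuousFunction.norm_le hC).2 h

lemma hinf_smul_apply (c : ℂ) (f : HInf) (w) : (c • f).1 w = c * f.1 w := rfl
lemma hinf_rsmul_apply (c : ℝ) (f : HInf) (w) : (c • f).1 w = c * f.1 w := rfl
lemma hinf_mul_apply (f g : HInf) (w) : (f * g).1 w = f.1 w * g.1 w := rfl
lemma hinf_add_apply (f g : HInf) (w) : (f + g).1 w = f.1 w + g.1 w := rfl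
lemma hinf_sub_apply (f g : HInf) (w) : (f - g).1 w = f.1 w - g.1 w := rfl
lemma hinf_one_apply (w) : (1 : HInf).1 w = 1 := rfl
lemma hinf_zero_apply (w) : (0 : HInf).1 w = 0 := rfl

instance : Nonempty (ball (0:ℂ) 1) := ⟨⟨0, by simp⟩⟩

lemma hinf_norm_one : ‖(1 : HInf)‖ = 1 := by
  apply le_antisymm
  · exact hinf_norm_le zero_le_one fun w => by simp
  · have := hinf_norm_apply_le 1 ⟨0, by simp⟩
    rwa [hinf_one_apply, norm_one] at this

/-- evaluation functional `g ↦ Re (ω g(w))`. -/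
noncomputable def evf (ω : ℂ) (w : ball (0:ℂ) 1) : StrongDual ℝ HInf :=
  LinearMap.mkContinuous
    { toFun := fun g => (ω * g.1 w).re
      map_add' := fun f g => by rw [hinf_add_apply, mul_add, add_re]
      map_smul' := fun c f => by
        rw [hinf_rsmul_apply]; simp; ring } ‖ω‖ (fun g => by
    refine (abs_re_le_norm _).trans ?_
    rw [norm_mul]
    exact mul_le_mul_of_nonneg_left (hinf_norm_apply_le g w) (norm_nonneg _))

lemma evf_apply (ω w g) : evf ω w g = (ω * g.1 w).re := rfl

instance : LocallyConvexSpace ℝ (WeakDual ℝ HInf) :=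
  inferInstanceAs (LocallyConvexSpace ℝ (WeakBilin (topDualPairing ℝ HInf)))

/-- dual unit ball -/
def DB : Set (WeakDual ℝ HInf) := {φ | ∀ g, φ g ≤ ‖g‖}

lemma DB_convex : Convex ℝ DB := by
  intro φ hφ ψ hψ a b ha hb hab g
  have h1 := mul_le_mul_of_nonneg_left (hφ g) ha
  have h2 := mul_le_mul_of_nonneg_left (hψ g) hb
  calc (a • φ + b • ψ) g = a * φ g + b * ψ g := rfl
    _ ≤ a * ‖g‖ + b * ‖g‖ := by linarith
    _ = ‖g‖ := by rw [← add_mul, hab, one_mul]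

lemma DB_compact : IsCompact DB := by
  have := WeakDual.isCompact_closedBall (𝕜 := ℝ) (0 : StrongDual ℝ HInf) 1
  refine (congrArg IsCompact ?_).mp this
  ext φ
  simp only [mem_preimage, mem_closedBall, dist_zero_right, DB, mem_ofPred_eq]
  rw [ContinuousLinearMap.opNorm_le_iff zero_le_one]
  simp only [one_mul]
  constructor
  · intro h g
    exact (le_abs_self _).trans (h g)
  · intro h g
    refine abs_le.2 ⟨?_, h g⟩
    have := h (-g)
    rw [norm_neg, map_neg] at this
    exact neg_le.1 this

def KB : Set (WeakDual ℝ HInf) :=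
  {φ | ∃ ω : ℂ, ‖ω‖ = 1 ∧ ∃ w, φ = StrongDual.toWeakDual (evf ω w)}

lemma exists_unimod_mul (z : ℂ) : ∃ ω : ℂ, ‖ω‖ = 1 ∧ ω * z = ‖z‖ := by
  by_cases h : z = 0
  · exact ⟨1, by simp, by simp [h]⟩
  · refine ⟨(starRingEnd ℂ) z / ‖z‖, ?_, ?_⟩
    · simp [h]
    · have : (‖z‖ : ℂ) ≠ 0 := by simpa using h
      rw [div_mul_eq_mul_div, mul_comm, mul_conj, normSq_eq_norm_sq]
      field_simp
      push_cast; ring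

lemma KB_sub : KB ⊆ DB := by
  rintro _ ⟨ω, hω, w, rfl⟩ g
  change (ω * g.1 w).re ≤ ‖g‖
  refine (re_le_norm _).trans ?_
  rw [norm_mul, hω, one_mul]
  exact hinf_norm_apply_le g w

lemma DB_sub_closure : DB ⊆ closure (convexHull ℝ (closure KB)) := by
  intro φ hφ
  by_contra hn
  obtain ⟨l, r, h1, h2⟩ := geometric_hahn_banach_closed_point
    (convex_convexHull ℝ (closure KB)).closure isClosed_closure hn
  obtain ⟨g, hg⟩ := LinearMap.dualEmbedding_surjective (topDualPairing ℝ HInf) l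
  have hl : ∀ ψ : WeakDual ℝ HInf, l ψ = ψ g := fun ψ => by rw [← hg]; rfl
  have hr : ∀ ω : ℂ, ‖ω‖ = 1 → ∀ w, (ω * g.1 w).re < r := by
    intro ω hω w
    have := h1 (StrongDual.toWeakDual (evf ω w))
      (subset_closure (subset_convexHull ℝ _ (subset_closure ⟨ω, hω, w, rfl⟩)))
    rwa [hl] at this
  have hle : ∀ w, ‖g.1 w‖ ≤ r := by
    intro w
    obtain ⟨ω, hω, h⟩ := exists_unimod_mul (g.1 w)
    have := hr ω hω w
    rw [h, ofReal_re] at this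
    exact this.le
  have h0 : 0 ≤ r := (norm_nonneg _).trans (hle ⟨0, by simp⟩)
  have := hinf_norm_le h0 hle
  rw [hl] at h2
  linarith [hφ g]

def EB : Set (WeakDual ℝ HInf) := DB.extremePoints ℝ

lemma EB_sub : EB ⊆ closure KB :=
  aux_milman DB_compact DB_convex isClosed_closure
    (closure_minimal KB_sub DB_compact.isClosed) DB_sub_closure

lemma EB_norm_le (g : HInf) (C : ℝ) (h : ∀ φ ∈ EB, φ g ≤ C) : ∀ φ ∈ DB, φ g ≤ C := by
  intro φ hφ
  have hcl : IsClosed {ψ : WeakDual ℝ HInf | ψ g ≤ C} :=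
    isClosed_le (WeakDual.eval_continuous g) continuous_const
  have hcv : Convex ℝ {ψ : WeakDual ℝ HInf | ψ g ≤ C} := by
    intro φ hφ ψ hψ a b ha hb hab
    have h1 := mul_le_mul_of_nonneg_left (show φ g ≤ C from hφ) ha
    have h2 := mul_le_mul_of_nonneg_left (show ψ g ≤ C from hψ) hb
    calc (a • φ + b • ψ) g = a * φ g + b * ψ g := rfl
      _ ≤ a * C + b * C := by linarith
      _ = C := by rw [← add_mul, hab, one_mul]
  rw [← closure_convexHull_extremePoints DB_compact DB_convex] at hφ
  exact closure_minimal (convexHull_min h hcv) hcl hφ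

lemma EB_eq_zero (g : HInf) (h : ∀ φ ∈ EB, φ g = 0) : g = 0 := by
  have := EB_norm_le g 0 (fun φ hφ => (h φ hφ).le)
  apply hinf_ext
  intro w
  obtain ⟨ω, hω, hw⟩ := exists_unimod_mul (g.1 w)
  have h2 := this _ (KB_sub ⟨ω, hω, w, rfl⟩)
  change (ω * g.1 w).re ≤ 0 at h2
  rw [hw, ofReal_re] at h2
  exact norm_le_zero_iff.1 h2

lemma EB_form (φ) (hφ : φ ∈ EB) : ∃ ω : ℂ, ‖ω‖ = 1 ∧ ∃ m : HInf →ₐ[ℂ] ℂ,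
    ∀ g, φ g = (ω * m g).re := by
  obtain ⟨𝒰, h𝒰, hlim⟩ := mem_closure_iff_ultrafilter.1 (EB_sub hφ)
  -- parametrise
  let P : sphere (0:ℂ) 1 × ball (0:ℂ) 1 → WeakDual ℝ HInf :=
    fun p => StrongDual.toWeakDual (evf p.1 p.2)
  have hr : range P ∈ 𝒰 := by
    refine Filter.mem_of_superset h𝒰 ?_
    rintro _ ⟨ω, hω, w, rfl⟩
    exact ⟨(⟨ω, by simpa using hω⟩, w), rfl⟩
  have hne : (Filter.comap P 𝒰).NeBot := by
    rw [Filter.comap_neBot_iff]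
    intro t ht
    obtain ⟨_, h1, p, rfl⟩ := 𝒰.nonempty_of_mem (Filter.inter_mem ht hr)
    exact ⟨p, h1⟩
  let 𝒱 : Ultrafilter (sphere (0:ℂ) 1 × ball (0:ℂ) 1) := Ultrafilter.of (Filter.comap P 𝒰)
  have hV : Filter.Tendsto P 𝒱 (nhds φ) :=
    (Filter.map_mono (Ultrafilter.of_le _)).trans (Filter.map_comap_le.trans hlim)
  have hbd : ∀ (F : sphere (0:ℂ) 1 × ball (0:ℂ) 1 → ℂ) (M : ℝ), (∀ p, ‖F p‖ ≤ M) →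
      ∃ z, Filter.Tendsto F 𝒱 (nhds z) := by
    intro F M hF
    obtain ⟨z, -, hz⟩ := (isCompact_closedBall (0:ℂ) M).ultrafilter_le_nhds (𝒱.map F)
      (Filter.le_principal_iff.2 (Filter.mem_map.2 (Filter.univ_mem' fun p => by simpa using hF p)))
    exact ⟨z, hz⟩
  obtain ⟨ω, hω⟩ := hbd (fun p => p.1) 1 (fun p => (mem_sphere_zero_iff_norm.1 p.1.2).le)
  have hm : ∀ g : HInf, ∃ z, Filter.Tendsto (fun p : sphere (0:ℂ) 1 × ball (0:ℂ) 1 => g.1 p.2) 𝒱 (nhds z) := fun g =>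
    hbd _ ‖g‖ (fun p => hinf_norm_apply_le g p.2)
  choose m hm using hm
  refine ⟨ω, ?_, ⟨⟨⟨⟨m, ?_⟩, ?_⟩, ?_, ?_⟩, ?_⟩, ?_⟩
  · refine tendsto_nhds_unique hω.norm ?_
    have : (fun p : sphere (0:ℂ) 1 × ball (0:ℂ) 1 => ‖(p.1:ℂ)‖) = fun _ => 1 := by
      ext p; exact mem_sphere_zero_iff_norm.1 p.1.2
    rw [this]; exact tendsto_const_nhds
  · exact tendsto_nhds_unique (hm 1) tendsto_const_nhds
  · intro f g
    exact tendsto_nhds_unique (hm (f * g)) ((hm f).mul (hm g))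
  · exact tendsto_nhds_unique (hm 0) tendsto_const_nhds
  · intro f g
    exact tendsto_nhds_unique (hm (f + g)) ((hm f).add (hm g))
  · intro c
    exact tendsto_nhds_unique (hm (algebraMap ℂ HInf c)) tendsto_const_nhds
  · intro g
    have h1 : Filter.Tendsto (fun p => P p g) 𝒱 (nhds (φ g)) :=
      ((WeakDual.eval_continuous g).tendsto φ).comp hV
    exact tendsto_nhds_unique h1 ((continuous_re.tendsto _).comp (hω.mul (hm g)))

lemma EB_iso (R : HInf ≃ₗᵢ[ℝ] HInf) (φ) (hφ : φ ∈ EB) :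
    ∃ ψ ∈ EB, ∀ g, ψ g = φ (R g) := by
  let A : (HInf ≃ₗᵢ[ℝ] HInf) → WeakDual ℝ HInf → WeakDual ℝ HInf := fun S ψ =>
    StrongDual.toWeakDual ((WeakDual.toStrongDual ψ).comp
      (S.toContinuousLinearEquiv : HInf →L[ℝ] HInf))
  have hA : ∀ S ψ g, A S ψ g = ψ (S g) := fun S ψ g => rfl
  have hAD : ∀ S ψ, ψ ∈ DB → A S ψ ∈ DB := by
    intro S ψ h g
    rw [hA, ← S.norm_map]; exact h _
  have hAA : ∀ S ψ, A S (A S.symm ψ) = ψ := by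
    intro S ψ
    apply DFunLike.ext
    intro g
    rw [hA, hA, S.symm_apply_apply]
  refine ⟨A R φ, ⟨hAD _ _ hφ.1, ?_⟩, fun g => rfl⟩
  intro x hx y hy hxy
  obtain ⟨a, b, ha, hb, hab, he⟩ := hxy
  have := hφ.2 (hAD R.symm x hx) (hAD R.symm y hy) ⟨a, b, ha, hb, hab, ?_⟩
  · rw [← this, hAA]
  · apply DFunLike.ext
    intro g
    have h2 : (a • x + b • y) (R.symm g) = A R φ (R.symm g) := by rw [he]
    rw [hA, R.apply_symm_apply] at h2
    exact h2

lemma ah_smul (m : HInf →ₐ[ℂ] ℂ) (c : ℂ) (g : HInf) : m (c • g) = c * m g :=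
  m.toLinearMap.map_smul c g
lemma ah_mul (m : HInf →ₐ[ℂ] ℂ) (f g : HInf) : m (f * g) = m f * m g := map_mul m f g
lemma ah_add (m : HInf →ₐ[ℂ] ℂ) (f g : HInf) : m (f + g) = m f + m g := map_add m f g
lemma ah_sub (m : HInf →ₐ[ℂ] ℂ) (f g : HInf) : m (f - g) = m f - m g := map_sub m f g
lemma ah_one (m : HInf →ₐ[ℂ] ℂ) : m (1 : HInf) = 1 := map_one m

noncomputable def rotIso (ω : ℂ) (hω : ‖ω‖ = 1) : HInf ≃ₗᵢ[ℝ] HInf where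
  toFun g := ω • g
  invFun g := ω⁻¹ • g
  left_inv g := by
    have : ω ≠ 0 := by rintro rfl; simp at hω
    simp [smul_smul, this]
  right_inv g := by
    have : ω ≠ 0 := by rintro rfl; simp at hω
    simp [smul_smul, this]
  map_add' f g := smul_add _ _ _
  map_smul' c g := smul_comm _ _ _
  norm_map' g := by
    change ‖ω • g‖ = ‖g‖
    rw [norm_smul, hω, one_mul]

/-- boundary characters -/
def BC (m : HInf →ₐ[ℂ] ℂ) : Prop :=
  ∀ ω : ℂ, ‖ω‖ = 1 → ∃ φ ∈ EB, ∀ g, φ g = (ω * m g).re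

lemma EB_form' (φ) (hφ : φ ∈ EB) : ∃ ω : ℂ, ∃ m : HInf →ₐ[ℂ] ℂ, BC m ∧
    ∀ g, φ g = (ω * m g).re := by
  obtain ⟨ω, hω, m, hm⟩ := EB_form φ hφ
  refine ⟨ω, m, ?_, hm⟩
  intro ω' hω'
  obtain ⟨ψ, hψ, h⟩ := EB_iso (rotIso (ω' / ω) (by simp [hω, hω'])) φ hφ
  refine ⟨ψ, hψ, fun g => ?_⟩
  have h0 : ω ≠ 0 := by rintro rfl; simp at hω
  rw [h, hm]
  change (ω * m ((ω' / ω) • g)).re = _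
  rw [ah_smul]
  congr 1
  field_simp

lemma BC_zero (g : HInf) (h : ∀ m, BC m → m g = 0) : g = 0 := by
  apply EB_eq_zero
  intro φ hφ
  obtain ⟨ω, m, hm, hg⟩ := EB_form' φ hφ
  rw [hg, h m hm]; simp

lemma BC_eq (f g : HInf) (h : ∀ m, BC m → m f = m g) : f = g := by
  rw [← sub_eq_zero]
  apply BC_zero
  intro m hm
  rw [ah_sub, h m hm, sub_self]

lemma BC_key (R : HInf ≃ₗᵢ[ℝ] HInf) (m) (hm : BC m) (ω : ℂ) (hω : ‖ω‖ = 1) :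
    ∃ ω' : ℂ, ‖ω'‖ = 1 ∧ ∃ m' : HInf →ₐ[ℂ] ℂ,
      ∀ g, (ω * m (R g)).re = (ω' * m' g).re := by
  obtain ⟨φ, hφ, h1⟩ := hm ω hω
  obtain ⟨ψ, hψ, h2⟩ := EB_iso R φ hφ
  obtain ⟨ω', hω', m', h3⟩ := EB_form ψ hψ
  exact ⟨ω', hω', m', fun g => by rw [← h1, ← h2, h3]⟩

lemma norm_sq_one {z : ℂ} (h : ‖z‖ = 1) : z.re ^ 2 + z.im ^ 2 = 1 := by
  have := Complex.sq_norm z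
  rw [h, normSq_apply] at this
  nlinarith

lemma sqrt_half_norm (s : ℝ) (hs : s ^ 2 = 1) :
    ‖((Real.sqrt 2)⁻¹ : ℝ) * (1 + s * I : ℂ)‖ = 1 := by
  have h : ‖(1 + s * I : ℂ)‖ = Real.sqrt 2 := by
    rw [Complex.norm_def]; congr 1
    simp [normSq_apply]; nlinarith
  rw [norm_mul, h, norm_real, norm_inv, Real.norm_eq_abs, abs_of_pos (by positivity)]
  exact inv_mul_cancel₀ (by positivity)

lemma BC_quad (R : HInf ≃ₗᵢ[ℝ] HInf) (m) (hm : BC m) (ω : ℂ) (hω : ‖ω‖ = 1) :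
    (ω * m (R 1)).re ^ 2 + (ω * m (R (I • (1:HInf)))).re ^ 2 = 1 := by
  obtain ⟨ω', hω', m', h⟩ := BC_key R m hm ω hω
  rw [h, h, ah_one, ah_smul, ah_one]
  have := norm_sq_one hω'
  simp
  linarith

lemma BC_rel (R : HInf ≃ₗᵢ[ℝ] HInf) (m) (hm : BC m) :
    m (R 1) ^ 2 + m (R (I • (1:HInf))) ^ 2 = 0 ∧ ‖m (R 1)‖ = 1 := by
  have h1 := BC_quad R m hm 1 (by simp)
  have h2 := BC_quad R m hm I (by simp)
  have h3 := BC_quad R m hm _ (sqrt_half_norm 1 (by simp))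
  set p := m (R 1)
  set q := m (R (I • (1:HInf)))
  have h4 : (Real.sqrt 2)⁻¹ ^ 2 = 1 / 2 := by
    rw [inv_pow, Real.sq_sqrt (by norm_num)]; norm_num
  have e : ∀ z : ℂ, ((((Real.sqrt 2)⁻¹ : ℝ) * (1 + (1:ℝ) * I : ℂ)) * z).re
      = (Real.sqrt 2)⁻¹ * (z.re - z.im) := by
    intro z; rw [mul_assoc, re_ofReal_mul]; simp
  rw [e, e, mul_pow, mul_pow, h4] at h3
  simp at h1 h2
  have h5 : p.re * p.im + q.re * q.im = 0 := by nlinarith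
  have hz : p ^ 2 + q ^ 2 = 0 := by
    apply Complex.ext
    · simp [pow_two]; nlinarith
    · simp [pow_two]; nlinarith
  refine ⟨hz, ?_⟩
  have h6 : p ^ 2 = - q ^ 2 := by linear_combination hz
  have h7 : ‖p‖ ^ 2 = ‖q‖ ^ 2 := by
    rw [← norm_pow, h6, norm_neg, norm_pow]
  have h8 := Complex.sq_norm p
  have h9 := Complex.sq_norm q
  rw [normSq_apply] at h8 h9
  have : ‖p‖ ^ 2 = 1 := by nlinarith
  nlinarith [norm_nonneg p]

lemma hinf_mul_zero {f g : HInf} (h : f * g = 0) : f = 0 ∨ g = 0 := by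
  obtain ⟨F, hF, hf⟩ := f.2
  obtain ⟨G, hG, hg⟩ := g.2
  have := AnalyticOnNhd.eq_zero_or_eq_zero_of_mul_eq_zero (hF.analyticOnNhd isOpen_ball)
    (hG.analyticOnNhd isOpen_ball) (fun z hz => by
      have h1 : (f * g).1 ⟨z, hz⟩ = 0 := by rw [h]; rfl
      rw [hinf_mul_apply, ← hf, ← hg] at h1
      exact h1) (convex_ball (0:ℂ) 1).isPreconnected
  rcases this with h | h
  · left; exact hinf_ext fun w => by rw [← hf]; exact h w w.2
  · right; exact hinf_ext fun w => by rw [← hg]; exact h w w.2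

lemma R_cases (R : HInf ≃ₗᵢ[ℝ] HInf) :
    R (I • (1:HInf)) = I • R 1 ∨ R (I • (1:HInf)) = -(I • R 1) := by
  have h : (R (I • (1:HInf)) - I • R 1) * (R (I • (1:HInf)) + I • R 1) = 0 := by
    apply BC_zero
    intro m hm
    have := (BC_rel R m hm).1
    rw [ah_mul, ah_sub, ah_add, ah_smul]
    linear_combination this - (m (R 1)) ^ 2 * I_sq
  rcases hinf_mul_zero h with h | h
  · left; exact sub_eq_zero.1 h
  · right; exact eq_neg_of_add_eq_zero_left h

lemma char_trick (L : HInf → ℂ)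
    (hL : ∀ ω : ℂ, ‖ω‖ = 1 → ∃ m : HInf →ₐ[ℂ] ℂ, ∀ g, (ω * L g).re = (ω * m g).re) :
    ∃ m : HInf →ₐ[ℂ] ℂ, ∀ g, L g = m g := by
  obtain ⟨m1, h1⟩ := hL 1 (by simp)
  obtain ⟨m2, h2⟩ := hL I (by simp)
  obtain ⟨m3, h3⟩ := hL _ (sqrt_half_norm 1 (by simp))
  obtain ⟨m4, h4⟩ := hL _ (sqrt_half_norm (-1) (by simp))
  have e : ∀ z : ℂ, ((((Real.sqrt 2)⁻¹ : ℝ) * (1 + (1:ℝ) * I : ℂ)) * z).re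
      = (Real.sqrt 2)⁻¹ * (z.re - z.im) := by
    intro z; rw [mul_assoc, re_ofReal_mul]; simp
  have e' : ∀ z : ℂ, ((((Real.sqrt 2)⁻¹ : ℝ) * (1 + (-1:ℝ) * I : ℂ)) * z).re
      = (Real.sqrt 2)⁻¹ * (z.re + z.im) := by
    intro z; rw [mul_assoc, re_ofReal_mul]; simp
  have hs : (Real.sqrt 2)⁻¹ ≠ 0 := by positivity
  have k1 : ∀ g, (L g).re = (m1 g).re := fun g => by simpa using h1 g
  have k2 : ∀ g, (L g).im = (m2 g).im := fun g => by simpa using h2 g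
  have k3 : ∀ g, (L g).re - (L g).im = (m3 g).re - (m3 g).im := fun g => by
    have := h3 g
    rw [e, e] at this
    exact mul_left_cancel₀ hs this
  have k4 : ∀ g, (L g).re + (L g).im = (m4 g).re + (m4 g).im := fun g => by
    have := h4 g
    rw [e', e'] at this
    exact mul_left_cancel₀ hs this
  have smI : ∀ (m : HInf →ₐ[ℂ] ℂ) g, (m (I • g)).re = -(m g).im ∧ (m (I • g)).im = (m g).re := by
    intro m g; rw [ah_smul]; simp
  have r3 : ∀ g, m3 g = (m1 g + m2 g) / 2 - I * ((m1 g - m2 g) / 2) := by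
    intro g
    have a1 := k3 g
    have a2 := k3 (I • g)
    rw [k1, k2] at a1 a2
    rw [(smI m1 g).1, (smI m2 g).2, (smI m3 g).1, (smI m3 g).2] at a2
    apply Complex.ext
    · simp; linarith
    · simp; linarith
  have r4 : ∀ g, m4 g = (m1 g + m2 g) / 2 + I * ((m1 g - m2 g) / 2) := by
    intro g
    have a1 := k4 g
    have a2 := k4 (I • g)
    rw [k1, k2] at a1 a2
    rw [(smI m1 g).1, (smI m2 g).2, (smI m4 g).1, (smI m4 g).2] at a2
    apply Complex.ext
    · simp; linarith
    · simp; linarith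
  have hd : ∀ g, m1 g = m2 g := by
    intro g
    have a := r3 (g * g)
    have b := r4 (g * g)
    rw [ah_mul, ah_mul, ah_mul, r3 g] at a
    rw [ah_mul, ah_mul, ah_mul, r4 g] at b
    have : (m1 g - m2 g) ^ 2 = 0 := by
      linear_combination -(a + b) + (m1 g - m2 g) ^ 2 / 2 * I_sq
    exact sub_eq_zero.1 (pow_eq_zero_iff two_ne_zero |>.1 this)
  refine ⟨m1, fun g => Complex.ext (k1 g) ?_⟩
  rw [k2, hd]

lemma R_const (R : HInf ≃ₗᵢ[ℝ] HInf) (hI : R (I • (1:HInf)) = I • R 1) (c : ℂ) :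
    R (c • (1:HInf)) = c • R 1 := by
  have h : ∀ f : HInf, c • f = c.re • f + c.im • (I • f) := by
    intro f
    apply hinf_ext
    intro w
    rw [hinf_add_apply, hinf_smul_apply, hinf_rsmul_apply, hinf_rsmul_apply, hinf_smul_apply]
    conv_lhs => rw [← re_add_im c]
    ring
  rw [h, map_add, map_smul, map_smul, hI, ← h]

lemma BC_mult (R : HInf ≃ₗᵢ[ℝ] HInf) (hI : R (I • (1:HInf)) = I • R 1) (m) (hm : BC m) :
    ∃ m1 : HInf →ₐ[ℂ] ℂ, ∀ g, m (R g) = m (R 1) * m1 g := by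
  have hp := (BC_rel R m hm).2
  set p := m (R 1) with hpdef
  have hpp : (starRingEnd ℂ) p * p = 1 := by
    rw [mul_comm, mul_conj, normSq_eq_norm_sq, hp]; simp
  obtain ⟨m1, h1⟩ := char_trick (fun g => (starRingEnd ℂ) p * m (R g)) (by
    intro ω hω
    obtain ⟨ω', hω', m', h⟩ := BC_key R m hm (ω * (starRingEnd ℂ) p) (by simp [hω, hp])
    have hc : ∀ c : ℂ, (ω * c).re = (ω' * c).re := by
      intro c
      have := h (c • 1)
      rw [R_const R hI, ah_smul, ah_smul, ah_one, ← hpdef] at this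
      rw [mul_one] at this
      rw [← this]
      congr 1
      linear_combination (-(ω * c)) * hpp
    have hω : ω = ω' := by
      apply Complex.ext
      · simpa using hc 1
      · have := hc I
        simpa using this
    refine ⟨m', fun g => ?_⟩
    rw [← mul_assoc, h, hω])
  refine ⟨m1, fun g => ?_⟩
  rw [← h1]
  linear_combination (-m (R g)) * hpp

lemma R_mult (R : HInf ≃ₗᵢ[ℝ] HInf) (hI : R (I • (1:HInf)) = I • R 1) (f g : HInf) :
    R (f * g) * R 1 = R f * R g := by
  apply BC_eq
  intro m hm
  obtain ⟨m1, h⟩ := BC_mult R hI m hm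
  rw [ah_mul, ah_mul, h (f * g), h f, h g, ah_mul]
  ring

lemma hinf_const_of_max (f : HInf) (w₀ : ball (0:ℂ) 1) (h : ∀ w, ‖f.1 w‖ ≤ ‖f.1 w₀‖) :
    ∀ w, f.1 w = f.1 w₀ := by
  obtain ⟨F, hF, hf⟩ := f.2
  intro w
  have := Complex.eqOn_of_isPreconnected_of_isMaxOn_norm (convex_ball (0:ℂ) 1).isPreconnected
    isOpen_ball hF w₀.2 (fun z hz => by
      have := h ⟨z, hz⟩
      rw [← hf, ← hf] at this
      exact this) w.2
  rw [← hf, ← hf]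
  exact this

lemma R_one_const (R : HInf ≃ₗᵢ[ℝ] HInf) (hI : R (I • (1:HInf)) = I • R 1) :
    ∃ c : ℂ, ‖c‖ = 1 ∧ R 1 = c • (1:HInf) := by
  have h1 := R_mult R hI (R.symm 1) (R.symm 1)
  rw [R.apply_symm_apply, mul_one] at h1
  set k := R (R.symm 1 * R.symm 1) with hk
  have hkn : ‖k‖ ≤ 1 := by
    rw [hk, R.norm_map]
    refine (norm_mul_le _ _).trans ?_
    rw [R.symm.norm_map, hinf_norm_one]; simp
  have hun : ‖R 1‖ ≤ 1 := by rw [R.norm_map, hinf_norm_one]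
  have hw : ∀ w, ‖(R 1).1 w‖ = 1 := by
    intro w
    have a := (hinf_norm_apply_le (R 1) w).trans hun
    have b := (hinf_norm_apply_le k w).trans hkn
    have c : ‖k.1 w‖ * ‖(R 1).1 w‖ = 1 := by
      rw [← norm_mul, ← hinf_mul_apply, h1]; simp
    nlinarith [norm_nonneg (k.1 w), norm_nonneg ((R 1).1 w)]
  refine ⟨(R 1).1 ⟨0, by simp⟩, hw _, hinf_ext fun w => ?_⟩
  rw [hinf_smul_apply, hinf_one_apply, mul_one]
  exact hinf_const_of_max _ _ (fun w => by rw [hw, hw]) w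

noncomputable def hzz : HInf := hmk (fun z => z) differentiableOn_id
  ⟨1, fun z hz => by rw [mem_ball_zero_iff] at hz; exact hz.le⟩

lemma hzz_apply (w : ball (0:ℂ) 1) : hzz.1 w = w := rfl

lemma hzz_norm : ‖hzz‖ ≤ 1 :=
  hinf_norm_le zero_le_one fun w => by
    rw [hzz_apply]; have := w.2; rw [mem_ball_zero_iff] at this; exact this.le

lemma hinf_divide (g : HInf) (p : ball (0:ℂ) 1) :
    ∃ q : HInf, g - (g.1 p) • (1:HInf) = (hzz - (p:ℂ) • (1:HInf)) * q := by
  obtain ⟨F, hF, hf⟩ := g.2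
  have hD : DifferentiableOn ℂ (dslope F p) (ball 0 1) :=
    (Complex.differentiableOn_dslope (isOpen_ball.mem_nhds p.2)).2 hF
  have hp := p.2
  rw [mem_ball_zero_iff] at hp
  obtain ⟨r, hr1, hr2⟩ := exists_between hp
  have hr0 : 0 < r := (norm_nonneg _).trans_lt hr1
  have hcpt : IsCompact (closedBall (0:ℂ) r) := isCompact_closedBall _ _
  obtain ⟨M, hM⟩ := hcpt.exists_bound_of_continuousOn
    (hD.continuousOn.mono (closedBall_subset_ball hr2))
  have hbd : ∀ z ∈ ball (0:ℂ) 1, ‖dslope F p z‖ ≤ max M (2 * ‖g‖ / (r - ‖(p:ℂ)‖)) := by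
    intro z hz
    by_cases hzr : ‖z‖ ≤ r
    · exact (hM z (by simpa using hzr)).trans (le_max_left _ _)
    · push Not at hzr
      refine le_trans ?_ (le_max_right _ _)
      have hd : r - ‖(p:ℂ)‖ ≤ ‖z - p‖ := by
        have := norm_sub_norm_le z p
        linarith
      have hd0 : 0 < r - ‖(p:ℂ)‖ := by linarith
      have e := sub_smul_dslope F (p:ℂ) z
      rw [smul_eq_mul] at e
      rw [le_div_iff₀ hd0]
      calc ‖dslope F p z‖ * (r - ‖(p:ℂ)‖) ≤ ‖dslope F p z‖ * ‖z - p‖ := by gcongr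
        _ = ‖F z - F p‖ := by rw [← e, norm_mul, mul_comm]
        _ ≤ ‖F z‖ + ‖F p‖ := norm_sub_le _ _
        _ ≤ ‖g‖ + ‖g‖ := by
          gcongr
          · have := hinf_norm_apply_le g ⟨z, hz⟩
            rw [← hf] at this; exact this
          · have := hinf_norm_apply_le g p
            rw [← hf] at this; exact this
        _ = _ := by ring
  refine ⟨hmk (dslope F p) hD ⟨_, hbd⟩, hinf_ext fun w => ?_⟩
  rw [hinf_sub_apply, hinf_smul_apply, hinf_one_apply, hinf_mul_apply, hinf_sub_apply,
    hinf_smul_apply, hinf_one_apply, hmk_apply, hzz_apply, mul_one, mul_one]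
  have e := sub_smul_dslope F (p:ℂ) w
  rw [smul_eq_mul] at e
  rw [e, hf, hf]

lemma S_lt (S : HInf ≃ₗᵢ[ℝ] HInf) (h1 : S 1 = 1)
    (hs : ∀ (c : ℂ) g, S (c • g) = c • S g) (w : ball (0:ℂ) 1) : ‖(S hzz).1 w‖ < 1 := by
  have hle : ∀ w, ‖(S hzz).1 w‖ ≤ 1 := fun w =>
    (hinf_norm_apply_le _ w).trans (by rw [S.norm_map]; exact hzz_norm)
  by_contra hn
  have he : ‖(S hzz).1 w‖ = 1 := le_antisymm (hle w) (not_lt.1 hn)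
  have hc := hinf_const_of_max (S hzz) w (fun w' => by rw [he]; exact hle w')
  set c := (S hzz).1 w with hcdef
  have : S hzz = S (c • (1:HInf)) := by
    rw [hs, h1]
    refine hinf_ext fun w' => ?_
    rw [hc, hinf_smul_apply, hinf_one_apply, mul_one]
  have h2 := S.injective this
  have a0 : hzz.1 ⟨0, by simp⟩ = (c • (1:HInf)).1 ⟨0, by simp⟩ := by rw [h2]
  have a1 : hzz.1 ⟨1/2, by norm_num⟩ = (c • (1:HInf)).1 ⟨1/2, by norm_num⟩ := by rw [h2]
  rw [hzz_apply, hinf_smul_apply, hinf_one_apply, mul_one] at a0 a1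
  rw [← a0] at a1
  norm_num at a1

lemma S_comp (S : HInf ≃ₗᵢ[ℝ] HInf) (h1 : S 1 = 1)
    (hs : ∀ (c : ℂ) g, S (c • g) = c • S g) (hmul : ∀ f g, S (f * g) = S f * S g)
    (g : HInf) (w : ball (0:ℂ) 1) :
    (S g).1 w = g.1 ⟨(S hzz).1 w, by rw [mem_ball_zero_iff]; exact S_lt S h1 hs w⟩ := by
  obtain ⟨q, hq⟩ := hinf_divide g ⟨(S hzz).1 w, by rw [mem_ball_zero_iff]; exact S_lt S h1 hs w⟩
  have h2 := congrArg (fun k => (S k).1 w) hq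
  simp only [map_sub, hmul, hs, h1] at h2
  rw [hinf_sub_apply, hinf_smul_apply, hinf_one_apply, hinf_mul_apply, hinf_sub_apply,
    hinf_smul_apply, hinf_one_apply, mul_one, mul_one, sub_self, zero_mul] at h2
  exact sub_eq_zero.1 h2

lemma mob_lt {b z : ℂ} (hb : ‖b‖ < 1) (hz : ‖z‖ < 1) :
    (starRingEnd ℂ) b * z - 1 ≠ 0 ∧ ‖(z - b) / ((starRingEnd ℂ) b * z - 1)‖ < 1 := by
  have hne : (starRingEnd ℂ) b * z - 1 ≠ 0 := by
    intro h
    have h2 : ‖(starRingEnd ℂ) b * z‖ = 1 := by rw [sub_eq_zero.1 h]; simp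
    rw [norm_mul, RCLike.norm_conj] at h2
    nlinarith [norm_nonneg b, norm_nonneg z]
  refine ⟨hne, ?_⟩
  rw [norm_div, div_lt_one (norm_pos_iff.2 hne)]
  have e : ‖(starRingEnd ℂ) b * z - 1‖ ^ 2 - ‖z - b‖ ^ 2 = (1 - ‖z‖ ^ 2) * (1 - ‖b‖ ^ 2) := by
    simp only [Complex.sq_norm, normSq_apply]
    simp
    ring
  have : 0 < (1 - ‖z‖ ^ 2) * (1 - ‖b‖ ^ 2) :=
    mul_pos (by nlinarith [norm_nonneg z]) (by nlinarith [norm_nonneg b])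
  exact lt_of_pow_lt_pow_left₀ 2 (norm_nonneg _) (by linarith)

lemma mob_inv {b z : ℂ} (hb : ‖b‖ < 1) (hz : ‖z‖ < 1) :
    ((z - b) / ((starRingEnd ℂ) b * z - 1) - b) /
      ((starRingEnd ℂ) b * ((z - b) / ((starRingEnd ℂ) b * z - 1)) - 1) = z := by
  have h1 := (mob_lt hb hz).1
  have h2 := (mob_lt hb (mob_lt hb hz).2).1
  rw [div_eq_iff h2]
  have hd := div_mul_cancel₀ (z - b) h1
  linear_combination -hd

lemma disc_aut (ρ σ : ℂ → ℂ) (hρ : DifferentiableOn ℂ ρ (ball 0 1))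
    (hσ : DifferentiableOn ℂ σ (ball 0 1)) (mρ : MapsTo ρ (ball 0 1) (ball 0 1))
    (mσ : MapsTo σ (ball 0 1) (ball 0 1)) (h1 : ∀ z ∈ ball (0:ℂ) 1, σ (ρ z) = z)
    (h2 : ∀ z ∈ ball (0:ℂ) 1, ρ (σ z) = z) :
    ∃ lam : ℂ, ‖lam‖ = 1 ∧ ∃ b ∈ ball (0:ℂ) 1, ∀ z ∈ ball (0:ℂ) 1,
      ρ z = lam * (z - b) / ((starRingEnd ℂ) b * z - 1) := by
  set b := σ 0 with hb
  have hbm : b ∈ ball (0:ℂ) 1 := mσ (by simp)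
  have hbn := hbm; rw [mem_ball_zero_iff] at hbn
  let φ : ℂ → ℂ := fun z => (z - b) / ((starRingEnd ℂ) b * z - 1)
  have mφ : MapsTo φ (ball 0 1) (ball 0 1) := fun z hz => by
    rw [mem_ball_zero_iff] at hz ⊢; exact (mob_lt hbn hz).2
  have iφ : ∀ z ∈ ball (0:ℂ) 1, φ (φ z) = z := fun z hz => by
    rw [mem_ball_zero_iff] at hz; exact mob_inv hbn hz
  have dφ : DifferentiableOn ℂ φ (ball 0 1) := by
    apply DifferentiableOn.div
    · fun_prop
    · fun_prop
    · intro z hz; rw [mem_ball_zero_iff] at hz; exact (mob_lt hbn hz).1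
  have φ0 : φ 0 = b := by simp [φ]
  have φb : φ b = 0 := by simp [φ]
  have dF : DifferentiableOn ℂ (ρ ∘ φ) (ball 0 1) := hρ.comp dφ mφ
  have dG : DifferentiableOn ℂ (φ ∘ σ) (ball 0 1) := dφ.comp hσ mσ
  have mF : MapsTo (ρ ∘ φ) (ball 0 1) (ball 0 1) := mρ.comp mφ
  have mG : MapsTo (φ ∘ σ) (ball 0 1) (ball 0 1) := mφ.comp mσ
  have F0 : (ρ ∘ φ) 0 = 0 := by simp only [Function.comp, φ0, hb]; exact h2 0 (by simp)
  have G0 : (φ ∘ σ) 0 = 0 := by simp only [Function.comp, ← hb, φb]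
  have sF : ∀ z ∈ ball (0:ℂ) 1, ‖(ρ ∘ φ) z‖ = ‖z‖ := by
    intro z hz
    have hz' := hz; rw [mem_ball_zero_iff] at hz'
    apply le_antisymm
    · exact Complex.norm_le_norm_of_mapsTo_ball dF (mF.mono_right ball_subset_closedBall) F0 hz'
    · have hw := mF hz
      have hw' := hw; rw [mem_ball_zero_iff] at hw'
      have := Complex.norm_le_norm_of_mapsTo_ball dG (mG.mono_right ball_subset_closedBall) G0 hw'
      have e : (φ ∘ σ) ((ρ ∘ φ) z) = z := by
        simp only [Function.comp]
        rw [h1 _ (mφ hz), iφ z hz]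
      rwa [e] at this
  have hhalf : (1/2 : ℂ) ∈ ball (0:ℂ) 1 := by norm_num
  obtain ⟨C, hC, hA⟩ : ∃ C : ℂ, ‖C‖ = 1 ∧ ∀ z ∈ ball (0:ℂ) 1, (ρ ∘ φ) z = z * C := by
    have hd : ‖dslope (ρ ∘ φ) 0 (1/2)‖ = 1 := by
      have := sub_smul_dslope (ρ ∘ φ) 0 (1/2)
      rw [F0, sub_zero, sub_zero, smul_eq_mul] at this
      have h3 := sF _ hhalf
      rw [← this, norm_mul] at h3
      norm_num at h3 ⊢
      linarith
    refine ⟨dslope (ρ ∘ φ) 0 (1/2), hd, fun z hz => ?_⟩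
    have := Complex.affine_of_mapsTo_ball_of_norm_dslope_eq_div (c := 0) (R₁ := 1) (R₂ := 1) dF (by rw [F0]; exact mF.mono_right ball_subset_closedBall)
      hhalf (by rw [hd]; norm_num) hz
    rw [this]; simp only [F0]; simp
  refine ⟨C, hC, b, hbm, fun z hz => ?_⟩
  have := hA _ (mφ hz)
  simp only [Function.comp] at this
  rw [iφ z hz] at this
  rw [this]
  simp only [φ]; ring

lemma R_form_lin (R : HInf ≃ₗᵢ[ℝ] HInf) (hI : R (I • (1:HInf)) = I • R 1) :
    ∃ c lam : ℂ, ‖c‖ = 1 ∧ ‖lam‖ = 1 ∧ ∃ b ∈ ball (0:ℂ) 1, ∃ ρ : ball (0:ℂ) 1 → ball (0:ℂ) 1,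
      (∀ z, (ρ z : ℂ) = lam * (z - b) / ((starRingEnd ℂ) b * z - 1)) ∧
      ∀ g w, (R g).1 w = c * g.1 (ρ w) := by
  obtain ⟨c, hc, hR1⟩ := R_one_const R hI
  have hc0 : c ≠ 0 := by rintro rfl; simp at hc
  let S : HInf ≃ₗᵢ[ℝ] HInf := R.trans (rotIso c⁻¹ (by simp [hc]))
  have hS : ∀ g, S g = c⁻¹ • R g := fun g => rfl
  have h1 : S 1 = 1 := by rw [hS, hR1, smul_smul, inv_mul_cancel₀ hc0, one_smul]
  have hmul : ∀ f g, S (f * g) = S f * S g := by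
    intro f g
    have := R_mult R hI f g
    rw [hR1] at this
    rw [hS, hS, hS]
    refine hinf_ext fun w => ?_
    have h2 : (R (f * g) * c • (1:HInf)).1 w = (R f * R g).1 w := by rw [this]
    rw [hinf_mul_apply, hinf_smul_apply, hinf_one_apply, hinf_mul_apply] at h2
    rw [hinf_smul_apply, hinf_mul_apply, hinf_smul_apply, hinf_smul_apply]
    field_simp
    linear_combination h2
  have hs1 : ∀ (d : ℂ) (g : HInf), d • g = (d • (1:HInf)) * g := by
    intro d g
    refine hinf_ext fun w => ?_
    rw [hinf_mul_apply, hinf_smul_apply, hinf_smul_apply, hinf_one_apply, mul_one]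
  have hs : ∀ (d : ℂ) g, S (d • g) = d • S g := by
    intro d g
    rw [hs1 d g, hmul, hS (d • 1), R_const R hI, smul_comm, ← hS, h1, ← hs1]
  have h1' : S.symm 1 = 1 := by rw [← h1, S.symm_apply_apply, h1]
  have hs' : ∀ (d : ℂ) g, S.symm (d • g) = d • S.symm g := by
    intro d g
    apply S.injective
    rw [S.apply_symm_apply, hs, S.apply_symm_apply]
  have hmul' : ∀ f g, S.symm (f * g) = S.symm f * S.symm g := by
    intro f g
    apply S.injective
    rw [S.apply_symm_apply, hmul, S.apply_symm_apply, S.apply_symm_apply]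
  have kS := S_comp S h1 hs hmul
  have kS' := S_comp S.symm h1' hs' hmul'
  obtain ⟨ρ, dρ, eρ⟩ := (S hzz).2
  obtain ⟨σ, dσ, eσ⟩ := (S.symm hzz).2
  obtain ⟨lam, hlam, b, hb, hform⟩ := disc_aut ρ σ dρ dσ
    (fun z hz => by
      have := S_lt S h1 hs ⟨z, hz⟩
      rw [← eρ] at this
      rw [mem_ball_zero_iff]; exact this)
    (fun z hz => by
      have := S_lt S.symm h1' hs' ⟨z, hz⟩
      rw [← eσ] at this
      rw [mem_ball_zero_iff]; exact this)
    (fun z hz => by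
      have := kS (S.symm hzz) ⟨z, hz⟩
      rw [S.apply_symm_apply, hzz_apply, ← eσ] at this
      simp only [← eρ] at this
      exact this.symm)
    (fun z hz => by
      have := kS' (S hzz) ⟨z, hz⟩
      rw [S.symm_apply_apply, hzz_apply, ← eρ] at this
      simp only [← eσ] at this
      exact this.symm)
  refine ⟨c, lam, hc, hlam, b, hb,
    fun w => ⟨(S hzz).1 w, by rw [mem_ball_zero_iff]; exact S_lt S h1 hs w⟩, ?_, ?_⟩
  · intro z
    rw [← hform z z.2, eρ]
  · intro g w
    rw [← kS, hS, hinf_smul_apply, ← mul_assoc, mul_inv_cancel₀ hc0, one_mul]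

lemma conj_mem_ball {z : ℂ} (hz : z ∈ ball (0:ℂ) 1) : (starRingEnd ℂ) z ∈ ball (0:ℂ) 1 := by
  rw [mem_ball_zero_iff] at hz ⊢
  rwa [RCLike.norm_conj]

noncomputable def hconj (g : HInf) : HInf :=
  hmk (fun z => (starRingEnd ℂ) (g.2.choose ((starRingEnd ℂ) z)))
    (by
      intro z hz
      have h1 := g.2.choose_spec.1.differentiableAt (isOpen_ball.mem_nhds (conj_mem_ball hz))
      exact (differentiableAt_conj_conj_iff.2 h1).differentiableWithinAt)
    ⟨‖g‖, fun z hz => by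
      rw [RCLike.norm_conj]
      have := g.2.choose_spec.2 ⟨_, conj_mem_ball hz⟩
      change g.2.choose ((starRingEnd ℂ) z) = _ at this
      rw [this]
      exact hinf_norm_apply_le g _⟩

lemma hconj_apply (g : HInf) (w : ball (0:ℂ) 1) :
    (hconj g).1 w = (starRingEnd ℂ) (g.1 ⟨(starRingEnd ℂ) w, conj_mem_ball w.2⟩) := by
  have := g.2.choose_spec.2 ⟨_, conj_mem_ball w.2⟩
  rw [← this]; rfl

lemma hconj_hconj (g : HInf) : hconj (hconj g) = g :=
  hinf_ext fun w => by rw [hconj_apply, hconj_apply]; simp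

lemma hconj_norm_le (g : HInf) : ‖hconj g‖ ≤ ‖g‖ :=
  hinf_norm_le (norm_nonneg _) fun w => by
    rw [hconj_apply, RCLike.norm_conj]; exact hinf_norm_apply_le g _

noncomputable def conjIso : HInf ≃ₗᵢ[ℝ] HInf where
  toFun := hconj
  invFun := hconj
  left_inv := hconj_hconj
  right_inv := hconj_hconj
  map_add' f g := hinf_ext fun w => by
    rw [hinf_add_apply, hconj_apply, hconj_apply, hconj_apply, hinf_add_apply, map_add]
  map_smul' c g := hinf_ext fun w => by
    change (hconj (c • g)).1 w = (c • hconj g).1 w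
    rw [hinf_rsmul_apply, hconj_apply, hconj_apply, hinf_rsmul_apply, map_mul, conj_ofReal]
  norm_map' g := by
    apply le_antisymm (hconj_norm_le g)
    have := hconj_norm_le (hconj g)
    rwa [hconj_hconj] at this

lemma R_form (R : HInf ≃ₗᵢ[ℝ] HInf) :
    ∃ c lam : ℂ, ‖c‖ = 1 ∧ ‖lam‖ = 1 ∧ ∃ b ∈ ball (0:ℂ) 1, ∃ ρ : ball (0:ℂ) 1 → ball (0:ℂ) 1,
      (∀ z, (ρ z : ℂ) = lam * (z - b) / ((starRingEnd ℂ) b * z - 1)) ∧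
      ((∀ g w, (R g).1 w = c * g.1 (ρ w)) ∨
       (∀ g w, (R g).1 w = c * (starRingEnd ℂ)
          (g.1 ⟨(starRingEnd ℂ) (ρ w), conj_mem_ball (ρ w).2⟩))) := by
  rcases R_cases R with hI | hI
  · obtain ⟨c, lam, hc, hl, b, hb, ρ, hρ, h⟩ := R_form_lin R hI
    exact ⟨c, lam, hc, hl, b, hb, ρ, hρ, Or.inl h⟩
  · have e1 : hconj 1 = 1 := hinf_ext fun w => by
      rw [hconj_apply, hinf_one_apply, hinf_one_apply, map_one]
    have eI : hconj (I • (1:HInf)) = -(I • (1:HInf)) := hinf_ext fun w => by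
      rw [hconj_apply, hinf_smul_apply, hinf_one_apply, ← zero_sub, hinf_sub_apply,
        hinf_smul_apply, hinf_one_apply, hinf_zero_apply]
      simp
    obtain ⟨c, lam, hc, hl, b, hb, ρ, hρ, h⟩ := R_form_lin (conjIso.trans R) (by
      change R (hconj (I • (1:HInf))) = I • R (hconj 1)
      rw [e1, eI, map_neg, hI, neg_neg])
    refine ⟨c, lam, hc, hl, b, hb, ρ, hρ, Or.inr fun g w => ?_⟩
    have := h (hconj g) w
    rw [hconj_apply] at this
    rw [← this]
    change _ = (R (hconj (hconj g))).1 w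
    rw [hconj_hconj]

abbrev XX := WithLp 1 (ℂ × HInf)

noncomputable def mkx (α : ℂ) (g : HInf) : XX := WithLp.toLp 1 (α, g)

lemma mkx_norm (α : ℂ) (g : HInf) : ‖mkx α g‖ = ‖α‖ + ‖g‖ :=
  WithLp.prod_norm_eq_of_L1 (mkx α g)
lemma mkx_add (α β : ℂ) (f g : HInf) : mkx α f + mkx β g = mkx (α + β) (f + g) := rfl
lemma mkx_sub (α β : ℂ) (f g : HInf) : mkx α f - mkx β g = mkx (α - β) (f - g) := rfl
lemma mkx_smul (c : ℝ) (α : ℂ) (f : HInf) : c • mkx α f = mkx (c • α) (c • f) := rfl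
lemma mkx_zero : mkx 0 0 = 0 := rfl
lemma mkx_fst (α : ℂ) (f : HInf) : (mkx α f).fst = α := rfl
lemma mkx_snd (α : ℂ) (f : HInf) : (mkx α f).snd = f := rfl
lemma mkx_eta (x : XX) : mkx x.fst x.snd = x := rfl
lemma mkx_inj {α β : ℂ} {f g : HInf} (h : mkx α f = mkx β g) : α = β ∧ f = g :=
  ⟨congrArg (fun x : XX => x.fst) h, congrArg (fun x : XX => x.snd) h⟩

def ExtX (x : XX) : Prop := ‖x‖ = 1 ∧ ∀ y, ‖x + y‖ ≤ 1 → ‖x - y‖ ≤ 1 → y = 0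

lemma ExtX_split (x : XX) (h : ExtX x) : x.fst = 0 ∨ x.snd = 0 := by
  obtain ⟨α, g, rfl⟩ : ∃ α g, x = mkx α g := ⟨x.fst, x.snd, rfl⟩
  rw [mkx_fst, mkx_snd]
  by_contra hn
  push Not at hn
  obtain ⟨h1, h2⟩ := h
  rw [mkx_norm] at h1
  have p0 := norm_nonneg α
  have q0 := norm_nonneg g
  have key : ∀ s : ℝ, |s| ≤ 1 → ‖α + (s * ‖g‖) • α‖ = (1 + s * ‖g‖) * ‖α‖ := by
    intro s hs
    have : α + (s * ‖g‖) • α = (1 + s * ‖g‖) • α := by rw [add_smul, one_smul]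
    rw [this, norm_smul, Real.norm_eq_abs, abs_of_nonneg]
    have := abs_le.1 hs
    nlinarith
  have key2 : ∀ s : ℝ, |s| ≤ 1 → ‖g + (s * ‖α‖) • g‖ = (1 + s * ‖α‖) * ‖g‖ := by
    intro s hs
    have : g + (s * ‖α‖) • g = (1 + s * ‖α‖) • g := by rw [add_smul, one_smul]
    rw [this, norm_smul, Real.norm_eq_abs, abs_of_nonneg]
    have := abs_le.1 hs
    nlinarith
  have := h2 (mkx ((1 * ‖g‖) • α) ((-1 * ‖α‖) • g)) (by
    rw [mkx_add, mkx_norm, key 1 (by simp), key2 (-1) (by simp)]; linarith) (by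
    have e1 : α - (1 * ‖g‖) • α = α + (-1 * ‖g‖) • α := by
      rw [neg_one_mul, neg_smul, one_mul, sub_eq_add_neg]
    have e2 : g - (-1 * ‖α‖) • g = g + (1 * ‖α‖) • g := by
      rw [neg_one_mul, neg_smul, one_mul, sub_neg_eq_add]
    rw [mkx_sub, e1, e2, mkx_norm, key (-1) (by simp), key2 1 (by simp)]; linarith)
  rw [← mkx_zero] at this
  have := (mkx_inj this).1
  rw [smul_eq_zero] at this
  rcases this with h | h
  · rw [one_mul, norm_eq_zero] at h; exact hn.2 h
  · exact hn.1 h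

lemma par_zero {c α : ℂ} (hc : ‖c‖ = 1) (h1 : ‖c + α‖ ≤ 1) (h2 : ‖c - α‖ ≤ 1) : α = 0 := by
  have := parallelogram_law_with_norm ℝ c α
  rw [hc] at this
  have : ‖α‖ = 0 := by nlinarith [norm_nonneg α, norm_nonneg (c + α), norm_nonneg (c - α)]
  exact norm_eq_zero.1 this

lemma two_le_of {E : Type*} [NormedAddCommGroup E] [NormedSpace ℝ E] (c y : E) :
    2 * ‖c‖ ≤ ‖c + y‖ + ‖c - y‖ := by
  have : (2:ℝ) • c = (c + y) + (c - y) := by rw [two_smul]; abel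
  calc 2 * ‖c‖ = ‖(2:ℝ) • c‖ := by rw [norm_smul]; norm_num
    _ ≤ _ := by rw [this]; exact norm_add_le _ _

lemma ExtX_fst (c : ℂ) (hc : ‖c‖ = 1) : ExtX (mkx c 0) := by
  refine ⟨by rw [mkx_norm, hc, norm_zero, add_zero], fun y h1 h2 => ?_⟩
  obtain ⟨α, g, rfl⟩ : ∃ α g, y = mkx α g := ⟨y.fst, y.snd, rfl⟩
  rw [mkx_add, mkx_norm, zero_add] at h1
  rw [mkx_sub, mkx_norm, zero_sub, norm_neg] at h2
  have h3 := two_le_of c α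
  have hg : ‖g‖ = 0 := by linarith [norm_nonneg g]
  rw [hg] at h1 h2
  have hα : α = 0 := par_zero hc (by linarith) (by linarith)
  rw [hα, norm_eq_zero.1 hg, mkx_zero]

lemma hconst_norm (c : ℂ) : ‖c • (1:HInf)‖ = ‖c‖ := by
  rw [norm_smul, hinf_norm_one, mul_one]

lemma ExtX_snd (c : ℂ) (hc : ‖c‖ = 1) : ExtX (mkx 0 (c • (1:HInf))) := by
  refine ⟨by rw [mkx_norm, hconst_norm, hc, norm_zero, zero_add], fun y h1 h2 => ?_⟩
  obtain ⟨α, g, rfl⟩ : ∃ α g, y = mkx α g := ⟨y.fst, y.snd, rfl⟩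
  rw [mkx_add, mkx_norm, zero_add] at h1
  rw [mkx_sub, mkx_norm, zero_sub, norm_neg] at h2
  have h3 := two_le_of (c • (1:HInf)) g
  rw [hconst_norm, hc] at h3
  have hg : ‖α‖ = 0 := by linarith [norm_nonneg α]
  rw [hg] at h1 h2
  have : g = 0 := hinf_ext fun w => by
    rw [hinf_zero_apply]
    apply par_zero hc
    · have := hinf_norm_apply_le (c • (1:HInf) + g) w
      rw [hinf_add_apply, hinf_smul_apply, hinf_one_apply, mul_one] at this
      linarith
    · have := hinf_norm_apply_le (c • (1:HInf) - g) w
      rw [hinf_sub_apply, hinf_smul_apply, hinf_one_apply, mul_one] at this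
      linarith
  rw [this, norm_eq_zero.1 hg, mkx_zero]

lemma ExtX_map (U : XX ≃ₗᵢ[ℝ] XX) (x : XX) (h : ExtX x) : ExtX (U x) := by
  refine ⟨by rw [U.norm_map, h.1], fun y h1 h2 => ?_⟩
  have e : y = U (U.symm y) := (U.apply_symm_apply y).symm
  rw [e, ← map_add, U.norm_map] at h1
  rw [e, ← map_sub, U.norm_map] at h2
  rw [e, h.2 _ h1 h2, map_zero]

lemma smul_sum_zero {E : Type*} [AddCommGroup E] [Module ℝ E] {s : ℝ} (hs : s ≠ 0) {x y : E}
    (h : s • x + s • y = 0) : x + y = 0 := by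
  rw [← smul_add, smul_eq_zero] at h
  exact h.resolve_left hs

lemma hrz (r : ℝ) : r • (0:HInf) = 0 :=
  hinf_ext fun w => by rw [hinf_rsmul_apply, hinf_zero_apply, mul_zero]

lemma dich (e : ℂ → XX) (he : ∀ c : ℂ, e c = c.re • e 1 + c.im • e I)
    (hE : ∀ c, ‖c‖ = 1 → ExtX (e c)) : (∀ c, (e c).snd = 0) ∨ (∀ c, (e c).fst = 0) := by
  have n1 := (hE 1 (by simp)).1
  have nI := (hE I (by simp)).1
  obtain ⟨α, f, h1⟩ : ∃ α g, e 1 = mkx α g := ⟨(e 1).fst, (e 1).snd, rfl⟩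
  obtain ⟨β, g, hI⟩ : ∃ α g, e I = mkx α g := ⟨(e I).fst, (e I).snd, rfl⟩
  have he' : ∀ c : ℂ, e c = mkx (c.re • α + c.im • β) (c.re • f + c.im • g) := by
    intro c; rw [he c, h1, hI]; rfl
  have s1 := ExtX_split _ (hE 1 (by simp))
  have sI := ExtX_split _ (hE I (by simp))
  have s2 := ExtX_split _ (hE _ (sqrt_half_norm 1 (by simp)))
  rw [he'] at s2
  have hs : (Real.sqrt 2)⁻¹ ≠ 0 := by positivity
  rw [mkx_fst, mkx_snd] at s2
  have er : (((Real.sqrt 2)⁻¹ : ℝ) * (1 + (1:ℝ) * I : ℂ)).re = (Real.sqrt 2)⁻¹ := by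
    rw [re_ofReal_mul]; simp
  have ei : (((Real.sqrt 2)⁻¹ : ℝ) * (1 + (1:ℝ) * I : ℂ)).im = (Real.sqrt 2)⁻¹ := by
    rw [im_ofReal_mul]; simp
  rw [er, ei] at s2
  replace s2 : α + β = 0 ∨ f + g = 0 := s2.imp (smul_sum_zero hs) (smul_sum_zero hs)
  rw [h1, mkx_norm] at n1
  rw [hI, mkx_norm] at nI
  rw [h1, mkx_fst, mkx_snd] at s1
  rw [hI, mkx_fst, mkx_snd] at sI
  rcases s1 with h | h <;> rcases sI with h' | h'
  · right; intro c; rw [he', mkx_fst, h, h', smul_zero, smul_zero, add_zero]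
  · exfalso
    subst h h'
    rw [zero_add, add_zero] at s2
    rcases s2 with h | h
    · rw [h, norm_zero, norm_zero] at nI; norm_num at nI
    · rw [h, norm_zero, norm_zero] at n1; norm_num at n1
  · exfalso
    subst h h'
    rw [add_zero, zero_add] at s2
    rcases s2 with h | h
    · rw [h, norm_zero, norm_zero] at n1; norm_num at n1
    · rw [h, norm_zero, norm_zero] at nI; norm_num at nI
  · left; intro c; rw [he', mkx_snd, h, h', hrz, hrz, add_zero]

lemma hinf_norm_sq (f : HInf) : ‖f * f‖ = ‖f‖ ^ 2 := by
  apply le_antisymm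
  · rw [pow_two]; exact norm_mul_le _ _
  · have : ‖f‖ ≤ Real.sqrt ‖f * f‖ := hinf_norm_le (Real.sqrt_nonneg _) fun w => by
      apply Real.le_sqrt_of_sq_le
      have := hinf_norm_apply_le (f * f) w
      rwa [hinf_mul_apply, norm_mul, ← pow_two] at this
    calc ‖f‖ ^ 2 ≤ Real.sqrt ‖f * f‖ ^ 2 := by gcongr
      _ = _ := Real.sq_sqrt (norm_nonneg _)

lemma pt_bound {w : ℂ} (hw : ‖w‖ ≤ 1) : ‖w * w + 2 * w - 1‖ ≤ 3 := by
  have h1 : ‖w‖ ^ 2 ≤ 1 := by nlinarith [norm_nonneg w]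
  have h2 : ‖w * w + 2 * w - 1‖ ^ 2 ≤ 3 ^ 2 := by
    rw [Complex.sq_norm, normSq_apply] at *
    simp
    nlinarith [sq_nonneg (2 * w.re + (1 - (w.re * w.re + w.im * w.im))),
      mul_self_nonneg w.re, mul_self_nonneg w.im]
  exact le_of_sq_le_sq h2 (by norm_num)

lemma key_vals (h : HInf) (hn : ‖h‖ ≤ 1) (hc : ∀ c : ℂ, ‖h + c • (1:HInf)‖ = 1 + ‖c‖) :
    ‖h * h + (1:ℂ) • (1:HInf)‖ = 2 ∧ ‖h * h + (-1:ℂ) • (1:HInf)‖ = 2 ∧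
    ‖h * h + (2:ℝ) • h + (1:ℂ) • (1:HInf)‖ = 4 ∧
    ‖h * h + (2:ℝ) • h + (-1:ℂ) • (1:HInf)‖ ≤ 3 := by
  have hh : ‖h * h‖ ≤ 1 := by rw [hinf_norm_sq]; nlinarith [norm_nonneg h]
  have e1 : (h + (1:ℂ) • (1:HInf)) * (h + (1:ℂ) • (1:HInf))
      = h * h + (2:ℝ) • h + (1:ℂ) • (1:HInf) := hinf_ext fun w => by
    simp only [hinf_mul_apply, hinf_add_apply, hinf_smul_apply, hinf_one_apply, hinf_rsmul_apply]
    push_cast; ring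
  have e2 : (h + I • (1:HInf)) * (h + I • (1:HInf))
      = (h * h + (-1:ℂ) • (1:HInf)) + (2 * I) • h := hinf_ext fun w => by
    simp only [hinf_mul_apply, hinf_add_apply, hinf_smul_apply, hinf_one_apply]
    linear_combination I_sq
  have e3 : h * h + (2:ℝ) • h + (1:ℂ) • (1:HInf)
     = (h * h + (1:ℂ) • (1:HInf)) + (2:ℝ) • h := by abel
  have v1 : ‖h * h + (2:ℝ) • h + (1:ℂ) • (1:HInf)‖ = 4 := by
    rw [← e1, hinf_norm_sq, hc, norm_one]; norm_num
  have n2 : ‖(2:ℝ)‖ = 2 := by norm_num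
  have n3 : ‖(2:ℂ) * I‖ = 2 := by simp
  have v2 := hinf_norm_sq (h + I • (1:HInf))
  rw [hc, e2, norm_I] at v2
  refine ⟨?_, ?_, v1, ?_⟩
  · apply le_antisymm
    · refine (norm_add_le _ _).trans ?_
      rw [hconst_norm]; linarith [norm_one (α := ℂ), norm_neg (1:ℂ)]
    · have := norm_add_le (h * h + (1:ℂ) • (1:HInf)) ((2:ℝ) • h)
      rw [← e3, v1, norm_smul, n2] at this
      linarith
  · apply le_antisymm
    · refine (norm_add_le _ _).trans ?_
      rw [hconst_norm]; linarith [norm_one (α := ℂ), norm_neg (1:ℂ)]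
    · have := norm_add_le (h * h + (-1:ℂ) • (1:HInf)) ((2 * I) • h)
      rw [v2, norm_smul, n3] at this
      linarith
  · refine hinf_norm_le (by norm_num) fun w => ?_
    have := pt_bound ((hinf_norm_apply_le h w).trans hn)
    simp only [hinf_mul_apply, hinf_add_apply, hinf_smul_apply, hinf_one_apply, hinf_rsmul_apply]
    convert this using 2
    push_cast; ring

lemma hzz_add_norm (c : ℂ) : ‖hzz + c • (1:HInf)‖ = 1 + ‖c‖ := by
  apply le_antisymm
  · refine (norm_add_le _ _).trans ?_
    rw [hconst_norm]; linarith [hzz_norm]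
  · apply le_of_forall_lt_imp_le_of_dense
    intro s hs
    obtain ⟨u, hu, hcu⟩ : ∃ u : ℂ, ‖u‖ = 1 ∧ c = ‖c‖ * u := by
      obtain ⟨ω, hω, h⟩ := exists_unimod_mul c
      have h0 : ω ≠ 0 := by rintro rfl; simp at hω
      refine ⟨ω⁻¹, by simp [hω], ?_⟩
      rw [← h]; field_simp
    by_cases hs0 : s ≤ ‖c‖
    · have := hinf_norm_apply_le (hzz + c • (1:HInf)) ⟨0, by simp⟩
      rw [hinf_add_apply, hinf_smul_apply, hinf_one_apply, hzz_apply, mul_one, zero_add] at this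
      exact hs0.trans this
    · push Not at hs0
      have hm : ((s - ‖c‖ : ℝ) : ℂ) * u ∈ ball (0:ℂ) 1 := by
        rw [mem_ball_zero_iff, norm_mul, hu, norm_real, Real.norm_eq_abs, abs_of_pos (by linarith)]
        linarith
      have := hinf_norm_apply_le (hzz + c • (1:HInf)) ⟨_, hm⟩
      rw [hinf_add_apply, hinf_smul_apply, hinf_one_apply, hzz_apply] at this
      have e : ((s - ‖c‖ : ℝ) : ℂ) * u + c * 1 = s * u := by
        conv_lhs => rw [hcu]
        simp [hu]; ring
      have e2 : ‖(s : ℂ) * u‖ = s := by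
        rw [norm_mul, hu, norm_real, Real.norm_eq_abs,
          abs_of_pos (by linarith [norm_nonneg c]), mul_one]
      simp only at this
      rwa [e, e2] at this

lemma pm_zero {α d : ℂ} (hd : ‖d‖ = 1) (h1 : ‖α + d‖ = ‖α‖ + 1) (h2 : ‖α - d‖ = ‖α‖ + 1) :
    α = 0 := by
  have := parallelogram_law_with_norm ℝ α d
  rw [hd, h1, h2] at this
  exact norm_eq_zero.1 (by nlinarith)

lemma mkx_of_fst (x : XX) (h : x.fst = 0) : mkx 0 x.snd = x := by
  conv_rhs => rw [← mkx_eta x, h]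
lemma mkx_of_snd (x : XX) (h : x.snd = 0) : mkx x.fst 0 = x := by
  conv_rhs => rw [← mkx_eta x, h]

lemma c_dec (c : ℂ) (f : HInf) : c • f = c.re • f + c.im • (I • f) := by
  refine hinf_ext fun w => ?_
  rw [hinf_add_apply, hinf_smul_apply, hinf_rsmul_apply, hinf_rsmul_apply, hinf_smul_apply]
  conv_lhs => rw [← re_add_im c]
  ring

lemma mkx_fst_dec (c : ℂ) : mkx c 0 = c.re • mkx 1 0 + c.im • mkx I 0 := by
  rw [mkx_smul, mkx_smul, mkx_add, hrz, hrz, add_zero]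
  congr 1
  apply Complex.ext <;> simp

lemma mkx_snd_dec (c : ℂ) : mkx 0 (c • (1:HInf)) =
    c.re • mkx 0 ((1:ℂ) • (1:HInf)) + c.im • mkx 0 (I • (1:HInf)) := by
  rw [mkx_smul, mkx_smul, mkx_add, smul_zero, smul_zero, add_zero, one_smul, ← c_dec]

lemma U_case (U : XX ≃ₗᵢ[ℝ] XX) : ∀ c, (U (mkx c 0)).snd = 0 := by
  have dU := dich (fun c => U (mkx c 0))
    (fun c => by
      rw [mkx_fst_dec c, map_add, map_smul, map_smul])
    (fun c hc => ExtX_map U _ (ExtX_fst c hc))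
  have dV := dich (fun c => U.symm (mkx 0 (c • (1:HInf))))
    (fun c => by
      rw [mkx_snd_dec c, map_add, map_smul, map_smul])
    (fun c hc => ExtX_map U.symm _ (ExtX_snd c hc))
  have Vm : ∀ f, ∃ α k, U.symm (mkx 0 f) = mkx α k ∧ ‖f‖ = ‖α‖ + ‖k‖ := by
    intro f
    refine ⟨(U.symm (mkx 0 f)).fst, (U.symm (mkx 0 f)).snd, rfl, ?_⟩
    rw [← mkx_norm, mkx_eta, U.symm.norm_map, mkx_norm, norm_zero, zero_add]
  have Vadd : ∀ f g, U.symm (mkx 0 (f + g)) = U.symm (mkx 0 f) + U.symm (mkx 0 g) := by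
    intro f g; rw [← map_add, mkx_add, add_zero]
  have Vsm : ∀ (r : ℝ) f, U.symm (mkx 0 (r • f)) = r • U.symm (mkx 0 f) := by
    intro r f; rw [← map_smul, mkx_smul, smul_zero]
  have Vn : ∀ f, ‖f‖ = ‖U.symm (mkx 0 f)‖ := by
    intro f; rw [U.symm.norm_map, mkx_norm, norm_zero, zero_add]
  rcases dV with dV | dV
  · exfalso
    -- Case A
    obtain ⟨d, hd, hdn⟩ : ∃ d, U.symm (mkx 0 ((1:ℂ) • (1:HInf))) = mkx d 0 ∧ ‖d‖ = 1 := by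
      obtain ⟨d, k, h, hn⟩ := Vm ((1:ℂ) • (1:HInf))
      have := dV 1
      simp only [h, mkx_snd] at this
      rw [this] at h hn
      rw [hconst_norm, norm_one, norm_zero, add_zero] at hn
      exact ⟨d, h, hn.symm⟩
    have hd' : U.symm (mkx 0 ((-1:ℂ) • (1:HInf))) = mkx (-d) 0 := by
      have e : (-1:ℂ) • (1:HInf) = (-1:ℝ) • ((1:ℂ) • (1:HInf)) := hinf_ext fun w => by
        rw [hinf_rsmul_apply, hinf_smul_apply, hinf_smul_apply]; push_cast; ring
      rw [e, Vsm, hd, mkx_smul, hrz, neg_one_smul]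
    obtain ⟨α, k, hz, hzn⟩ := Vm hzz
    have z0 : ‖hzz‖ = 1 := by
      have := hzz_add_norm 0
      rwa [zero_smul, add_zero, norm_zero, add_zero] at this
    have a1 : ‖α + d‖ = ‖α‖ + 1 := by
      have := hzz_add_norm 1
      rw [Vn, Vadd, hz, hd, mkx_add, mkx_norm, add_zero, norm_one] at this
      linarith
    have a2 : ‖α - d‖ = ‖α‖ + 1 := by
      have := hzz_add_norm (-1)
      rw [Vn, Vadd, hz, hd', mkx_add, mkx_norm, add_zero, norm_neg, norm_one,
        ← sub_eq_add_neg] at this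
      linarith
    have hα : α = 0 := pm_zero hdn a1 a2
    subst hα
    obtain ⟨β, k2, hzz2, -⟩ := Vm (hzz * hzz)
    obtain ⟨v1, v2, v3, v4⟩ := key_vals hzz hzz_norm hzz_add_norm
    rw [Vn, Vadd, hzz2, hd, mkx_add, mkx_norm, add_zero] at v1
    rw [Vn, Vadd, hzz2, hd', mkx_add, mkx_norm, add_zero] at v2
    rw [Vn, Vadd, Vadd, Vsm, hzz2, hd, hz, mkx_smul, mkx_add, mkx_add, mkx_norm, add_zero,
      smul_zero, add_zero] at v3
    rw [Vn, Vadd, Vadd, Vsm, hzz2, hd', hz, mkx_smul, mkx_add, mkx_add, mkx_norm, add_zero,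
      smul_zero, add_zero] at v4
    linarith
  · rcases dU with dU | dU
    · exact dU
    · exfalso
      obtain ⟨h, hh⟩ : ∃ h, U (mkx 1 0) = mkx 0 h := by
        refine ⟨(U (mkx 1 0)).snd, ?_⟩
        exact (mkx_of_fst _ (dU 1)).symm
      have hV : U.symm (mkx 0 h) = mkx 1 0 := by rw [← hh, U.symm_apply_apply]
      have hk : ∀ c : ℂ, ∃ κ, U.symm (mkx 0 (c • (1:HInf))) = mkx 0 κ ∧ ‖κ‖ = ‖c‖ := by
        intro c
        obtain ⟨d, k, h, hn⟩ := Vm (c • (1:HInf))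
        have := dV c
        simp only [h, mkx_fst] at this
        rw [this] at h hn
        rw [hconst_norm, norm_zero, zero_add] at hn
        exact ⟨k, h, hn.symm⟩
      have hn1 : ‖h‖ = 1 := by rw [Vn, hV, mkx_norm, norm_one, norm_zero, add_zero]
      have hc : ∀ c : ℂ, ‖h + c • (1:HInf)‖ = 1 + ‖c‖ := by
        intro c
        obtain ⟨κ, h1, h2⟩ := hk c
        rw [Vn, Vadd, hV, h1, mkx_add, mkx_norm, add_zero, zero_add, norm_one, h2]
      obtain ⟨v1, v2, v3, v4⟩ := key_vals h hn1.le hc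
      obtain ⟨κ, hκ, -⟩ := hk 1
      obtain ⟨κ', hκ', -⟩ := hk (-1)
      obtain ⟨β, k2, hh2, -⟩ := Vm (h * h)
      rw [Vn, Vadd, hh2, hκ, mkx_add, mkx_norm, add_zero] at v1
      rw [Vn, Vadd, hh2, hκ', mkx_add, mkx_norm, add_zero] at v2
      rw [Vn, Vadd, Vadd, Vsm, hh2, hκ, hV, mkx_smul, mkx_add, mkx_add, mkx_norm, add_zero,
        hrz, add_zero] at v3
      rw [Vn, Vadd, Vadd, Vsm, hh2, hκ', hV, mkx_smul, mkx_add, mkx_add, mkx_norm, add_zero,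
        hrz, add_zero] at v4
      linarith

lemma U_case2 (U : XX ≃ₗᵢ[ℝ] XX) (f : HInf) : (U (mkx 0 f)).fst = 0 := by
  have h := U_case U 1
  set d := (U (mkx 1 0)).fst with hd
  have hU : U (mkx 1 0) = mkx d 0 := (mkx_of_snd _ h).symm
  have hdn : ‖d‖ = 1 := by
    have := U.norm_map (mkx 1 0)
    rw [hU, mkx_norm, mkx_norm, norm_zero, norm_one] at this
    linarith
  obtain ⟨α, g, hg⟩ : ∃ α g, U (mkx 0 f) = mkx α g := ⟨_, _, rfl⟩
  have n0 := U.norm_map (mkx 0 f)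
  rw [hg, mkx_norm, mkx_norm, norm_zero] at n0
  have n1 := U.norm_map (mkx 0 f + mkx 1 0)
  rw [map_add, hg, hU, mkx_add, mkx_add, mkx_norm, mkx_norm, add_zero, add_zero, zero_add,
    norm_one] at n1
  have n2 := U.norm_map (mkx 0 f - mkx 1 0)
  rw [map_sub, hg, hU, mkx_sub, mkx_sub, mkx_norm, mkx_norm, sub_zero, sub_zero, zero_sub,
    norm_neg, norm_one] at n2
  rw [hg, mkx_fst]
  exact pm_zero hdn (by linarith) (by linarith)

noncomputable def Rpart (U : XX ≃ₗᵢ[ℝ] XX) : HInf ≃ₗᵢ[ℝ] HInf where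
  toFun f := (U (mkx 0 f)).snd
  invFun f := (U.symm (mkx 0 f)).snd
  left_inv f := by
    have e : mkx 0 (U (mkx 0 f)).snd = U (mkx 0 f) := mkx_of_fst _ (U_case2 U f)
    change (U.symm (mkx 0 (U (mkx 0 f)).snd)).snd = f
    rw [e, U.symm_apply_apply, mkx_snd]
  right_inv f := by
    have e : mkx 0 (U.symm (mkx 0 f)).snd = U.symm (mkx 0 f) := mkx_of_fst _ (U_case2 U.symm f)
    change (U (mkx 0 (U.symm (mkx 0 f)).snd)).snd = f
    rw [e, U.apply_symm_apply, mkx_snd]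
  map_add' f g := by
    have : mkx 0 (f + g) = mkx 0 f + mkx 0 g := by rw [mkx_add, add_zero]
    rw [this, map_add]; rfl
  map_smul' c g := by
    have : mkx 0 (c • g) = c • mkx 0 g := by rw [mkx_smul, smul_zero]
    rw [this, map_smul]; rfl
  norm_map' f := by
    have h := U.norm_map (mkx 0 f)
    change ‖(U (mkx 0 f)).snd‖ = ‖f‖
    rw [← mkx_eta (U (mkx 0 f)), mkx_norm, mkx_norm, U_case2, norm_zero] at h
    linarith

noncomputable def thpart (U : XX ≃ₗᵢ[ℝ] XX) : ℂ ≃ₗᵢ[ℝ] ℂ where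
  toFun c := (U (mkx c 0)).fst
  invFun c := (U.symm (mkx c 0)).fst
  left_inv f := by
    have e : mkx (U (mkx f 0)).fst 0 = U (mkx f 0) := mkx_of_snd _ (U_case U f)
    change (U.symm (mkx (U (mkx f 0)).fst 0)).fst = f
    rw [e, U.symm_apply_apply, mkx_fst]
  right_inv f := by
    have e : mkx (U.symm (mkx f 0)).fst 0 = U.symm (mkx f 0) := mkx_of_snd _ (U_case U.symm f)
    change (U (mkx (U.symm (mkx f 0)).fst 0)).fst = f
    rw [e, U.apply_symm_apply, mkx_fst]
  map_add' f g := by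
    have : mkx (f + g) 0 = mkx f 0 + mkx g 0 := by rw [mkx_add, add_zero]
    rw [this, map_add]; rfl
  map_smul' c g := by
    have : mkx (c • g) 0 = c • mkx g 0 := by rw [mkx_smul, hrz]
    rw [this, map_smul]; rfl
  norm_map' f := by
    have h := U.norm_map (mkx f 0)
    change ‖(U (mkx f 0)).fst‖ = ‖f‖
    rw [← mkx_eta (U (mkx f 0)), mkx_norm, mkx_norm, U_case, norm_zero] at h
    linarith

lemma U_split (U : XX ≃ₗᵢ[ℝ] XX) (α : ℂ) (g : HInf) :
    U (mkx α g) = mkx (thpart U α) (Rpart U g) := by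
  have : mkx α g = mkx α 0 + mkx 0 g := by rw [mkx_add, add_zero, zero_add]
  rw [this, map_add]
  have e1 : U (mkx 0 g) = mkx 0 (Rpart U g) := (mkx_of_fst _ (U_case2 U g)).symm
  have e2 : U (mkx α 0) = mkx (thpart U α) 0 := (mkx_of_snd _ (U_case U α)).symm
  rw [e1, e2, mkx_add, add_zero, zero_add]

lemma seg_mem {a z : ℂ} (ha : a ∈ ball (0:ℂ) 1) (hz : z ∈ ball (0:ℂ) 1) {t : ℝ}
    (ht : t ∈ Icc (0:ℝ) 1) : a + (t:ℂ) * (z - a) ∈ ball (0:ℂ) 1 := by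
  have := (convex_ball (0:ℂ) 1).add_smul_sub_mem ha hz ht
  rwa [Complex.real_smul] at this

lemma lineInt_eq (F g : ℂ → ℂ) (hF : DifferentiableOn ℂ F (ball 0 1))
    (hg : ∀ w ∈ ball (0:ℂ) 1, deriv F w = g w) {a z : ℂ} (ha : a ∈ ball (0:ℂ) 1)
    (hz : z ∈ ball (0:ℂ) 1) : F z = F a + lineInt g a z := by
  have hc : ContinuousOn (deriv F) (ball 0 1) := (hF.deriv isOpen_ball).continuousOn
  have hcont : ContinuousOn (fun t : ℝ => g (a + (t:ℂ) * (z - a)) * (z - a)) (Icc 0 1) := by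
    have h1 : ContinuousOn (fun t : ℝ => deriv F (a + (t:ℂ) * (z - a)) * (z - a)) (Icc 0 1) := by
      refine ContinuousOn.mul ?_ continuousOn_const
      exact hc.comp (by fun_prop) (fun t ht => seg_mem ha hz ht)
    exact h1.congr fun t ht => by simp only [hg _ (seg_mem ha hz ht)]
  have := intervalIntegral.integral_eq_sub_of_hasDerivAt (a := (0:ℝ)) (b := 1)
    (f := fun t : ℝ => F (a + (t:ℂ) * (z - a)))
    (f' := fun t : ℝ => g (a + (t:ℂ) * (z - a)) * (z - a)) (by
      intro t ht
      rw [uIcc_of_le zero_le_one] at ht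
      have hm := seg_mem ha hz ht
      have h1 : HasDerivAt F (g (a + (t:ℂ) * (z - a))) (a + (t:ℂ) * (z - a)) := by
        rw [← hg _ hm]
        exact (hF.differentiableAt (isOpen_ball.mem_nhds hm)).hasDerivAt
      have h2 : HasDerivAt (fun t : ℝ => a + (t:ℂ) * (z - a)) (z - a) t := by
        have := ((Complex.ofRealCLM.hasDerivAt (x := t)).mul_const (z - a)).const_add a
        simpa using this
      exact HasDerivAt.comp (𝕜' := ℂ) t h1 h2)
    (by
      apply ContinuousOn.intervalIntegrable
      rwa [uIcc_of_le zero_le_one])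
  rw [lineInt, this]
  simp

abbrev SS := {f : ℂ → ℂ // MemSInf f}

noncomputable def dm (f : SS) : HInf := hmk (deriv f.1) (f.2.1.deriv isOpen_ball) f.2.2

lemma dm_apply (f : SS) (w) : (dm f).1 w = deriv f.1 w := rfl

noncomputable def Phi (a : ℂ) (f : SS) : XX := mkx (f.1 a) (dm f)

lemma norm_Phi (a : ℂ) (f g : SS) : normSigmaA a (f.1 - g.1) = ‖Phi a f - Phi a g‖ := by
  rw [Phi, Phi, mkx_sub, mkx_norm, normSigmaA]
  congr 1
  have : ‖dm f - dm g‖ = ⨆ w, ‖(dm f - dm g).1 w‖ :=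
    BoundedContinuousFunction.norm_eq_iSup_norm (dm f - dm g).1
  rw [this]
  congr 1
  funext w
  rw [hinf_sub_apply, dm_apply, dm_apply, deriv_sub]
  · exact f.2.1.differentiableAt (isOpen_ball.mem_nhds w.2)
  · exact g.2.1.differentiableAt (isOpen_ball.mem_nhds w.2)

lemma Phi_congr (a : ℂ) (ha : a ∈ ball (0:ℂ) 1) (f g : SS) (h : EqOn f.1 g.1 (ball (0:ℂ) 1)) :
    Phi a f = Phi a g := by
  have : dm f = dm g := hinf_ext fun w => by
    rw [dm_apply, dm_apply]
    exact (h.eventuallyEq_of_mem (isOpen_ball.mem_nhds w.2)).deriv_eq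
  rw [Phi, Phi, this, h ha]

lemma Phi_surj (a : ℂ) (x : XX) : ∃ f : SS, Phi a f = x := by
  obtain ⟨F, hF, hf⟩ := x.snd.2
  obtain ⟨G, hG, hd⟩ := hF.isExactOn_ball.with_val_at a x.fst
  have hdd : ∀ z ∈ ball (0:ℂ) 1, deriv G z = F z := fun z hz => (hd z hz).deriv
  have hm : MemSInf G := ⟨fun z hz => (hd z hz).differentiableAt.differentiableWithinAt,
    ‖x.snd‖, fun z hz => by
      rw [hdd z hz]
      have := hinf_norm_apply_le x.snd ⟨z, hz⟩
      rw [← hf] at this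
      exact this⟩
  refine ⟨⟨G, hm⟩, ?_⟩
  have : dm ⟨G, hm⟩ = x.snd := hinf_ext fun w => by
    rw [dm_apply, hdd w w.2, hf]
  rw [Phi, this]
  change mkx (G a) x.snd = x
  rw [hG, mkx_eta]

lemma main_aux (a : ℂ) (ha : a ∈ ball (0 : ℂ) 1) (T : SS → SS)
    (hsurj : ∀ g : SS, ∃ f : SS, EqOn (T f).1 g.1 (ball (0 : ℂ) 1))
    (hiso : ∀ f g : SS, normSigmaA a ((T f).1 - (T g).1) = normSigmaA a (f.1 - g.1)) (o : SS)
    (ho : o.1 = 0) :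
    ∃ U : XX ≃ₗᵢ[ℝ] XX, ∀ f, Phi a (T f) - Phi a (T o) = U (Phi a f) := by
  choose Psi hPsi using Phi_surj a
  have hiso' : ∀ f g, ‖Phi a (T f) - Phi a (T g)‖ = ‖Phi a f - Phi a g‖ := fun f g => by
    rw [← norm_Phi, ← norm_Phi, hiso]
  let That : XX → XX := fun x => Phi a (T (Psi x))
  have hT : ∀ f, That (Phi a f) = Phi a (T f) := by
    intro f
    rw [← sub_eq_zero, ← norm_eq_zero]
    change ‖Phi a (T (Psi (Phi a f))) - Phi a (T f)‖ = 0
    rw [hiso', hPsi, sub_self, norm_zero]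
  have hI : Isometry That := Isometry.of_dist_eq fun x y => by
    rw [dist_eq_norm, dist_eq_norm]
    change ‖Phi a (T (Psi x)) - Phi a (T (Psi y))‖ = _
    rw [hiso', hPsi, hPsi]
  have hS : Function.Surjective That := by
    intro y
    obtain ⟨f, hf⟩ := hsurj (Psi y)
    exact ⟨Phi a f, by rw [hT, Phi_congr a ha _ _ hf, hPsi]⟩
  let e : XX ≃ᵢ XX := ⟨Equiv.ofBijective That ⟨hI.injective, hS⟩, hI⟩
  refine ⟨e.toRealLinearIsometryEquiv, fun f => ?_⟩
  rw [IsometryEquiv.toRealLinearIsometryEquiv_apply]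
  change _ = That (Phi a f) - That 0
  have h0 : Phi a o = 0 := by
    have : dm o = 0 := hinf_ext fun w => by
      rw [dm_apply, ho, hinf_zero_apply]
      simp
    rw [Phi, this, ho]; rfl
  rw [hT, ← h0, hT]

lemma MemSInf_zero : MemSInf 0 :=
  ⟨differentiableOn_const _, 0, fun z _ => by simp⟩

theorem surjective_isometry_normSigmaA
    (a : ℂ) (ha : a ∈ ball (0 : ℂ) 1)
    (T : (ℂ → ℂ) → (ℂ → ℂ))
    (hmap : ∀ f, MemSInf f → MemSInf (T f))
    (hsurj : ∀ g, MemSInf g → ∃ f, MemSInf f ∧ Set.EqOn (T f) g (ball (0 : ℂ) 1))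
    (hiso : ∀ f g, MemSInf f → MemSInf g →
      normSigmaA a (T f - T g) = normSigmaA a (f - g)) :
    ∃ c₀ c₁ lam : ℂ, ‖c₀‖ = 1 ∧ ‖c₁‖ = 1 ∧ ‖lam‖ = 1 ∧ ∃ b ∈ ball (0 : ℂ) 1,
      ∃ ρ : ℂ → ℂ, (∀ z, ρ z = lam * (z - b) / ((starRingEnd ℂ) b * z - 1)) ∧
      ((∀ f, MemSInf f → ∀ z ∈ ball (0 : ℂ) 1,
          T f z = T 0 z + c₀ * f a + lineInt (fun ζ => c₁ * deriv f (ρ ζ)) a z) ∨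
       (∀ f, MemSInf f → ∀ z ∈ ball (0 : ℂ) 1,
          T f z = T 0 z + c₀ * (starRingEnd ℂ) (f a)
            + lineInt (fun ζ => c₁ * deriv f (ρ ζ)) a z) ∨
       (∀ f, MemSInf f → ∀ z ∈ ball (0 : ℂ) 1,
          T f z = T 0 z + c₀ * f a
            + lineInt (fun ζ => c₁ * (starRingEnd ℂ) (deriv f ((starRingEnd ℂ) (ρ ζ)))) a z) ∨
       (∀ f, MemSInf f → ∀ z ∈ ball (0 : ℂ) 1,
          T f z = T 0 z + c₀ * (starRingEnd ℂ) (f a)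
            + lineInt (fun ζ => c₁ * (starRingEnd ℂ) (deriv f ((starRingEnd ℂ) (ρ ζ)))) a z)) := by
  let TT : SS → SS := fun f => ⟨T f.1, hmap f.1 f.2⟩
  let o : SS := ⟨0, MemSInf_zero⟩
  obtain ⟨U, hU⟩ := main_aux a ha TT
    (fun g => by
      obtain ⟨f, hf, h⟩ := hsurj g.1 g.2
      exact ⟨⟨f, hf⟩, h⟩)
    (fun f g => hiso f.1 g.1 f.2 g.2) o rfl
  have key : ∀ (f : ℂ → ℂ) (hf : MemSInf f) (g : ℂ → ℂ),
      (∀ w : ball (0:ℂ) 1, (Rpart U (dm ⟨f, hf⟩)).1 w = g w) → ∀ z ∈ ball (0:ℂ) 1,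
      T f z = T 0 z + thpart U (f a) + lineInt g a z := by
    intro f hf g hg z hz
    have h := hU ⟨f, hf⟩
    rw [Phi, Phi, Phi, mkx_sub, U_split] at h
    obtain ⟨h1, h2⟩ := mkx_inj h
    change T f a - T 0 a = thpart U (f a) at h1
    have d1 := (hmap f hf).1
    have d0 := (hmap 0 MemSInf_zero).1
    have := lineInt_eq (T f - T 0) g (d1.sub d0) (by
      intro w hw
      rw [← hg ⟨w, hw⟩, ← h2, hinf_sub_apply, dm_apply, dm_apply, deriv_sub
        (d1.differentiableAt (isOpen_ball.mem_nhds hw))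
        (d0.differentiableAt (isOpen_ball.mem_nhds hw))]) ha hz
    rw [Pi.sub_apply, Pi.sub_apply, h1] at this
    linear_combination this
  obtain ⟨c₁, lam, hc₁, hlam, b, hb, ρ, hρ, hR⟩ := R_form (Rpart U)
  obtain ⟨c₀, hθ⟩ := linear_isometry_complex (thpart U)
  refine ⟨(c₀ : ℂ), c₁, lam, Circle.norm_coe c₀, hc₁, hlam, b, hb, _, fun z => rfl, ?_⟩
  rcases hR with hR | hR
  · have hk : ∀ f, MemSInf f → ∀ z ∈ ball (0:ℂ) 1, T f z = T 0 z + thpart U (f a) +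
        lineInt (fun ζ => c₁ * deriv f (lam * (ζ - b) / ((starRingEnd ℂ) b * ζ - 1))) a z :=
      fun f hf => key f hf _ fun w => by rw [hR, dm_apply, hρ]
    rcases hθ with hθ | hθ
    · left
      intro f hf z hz
      rw [hk f hf z hz, hθ, rotation_apply]
    · right; left
      intro f hf z hz
      rw [hk f hf z hz, hθ]
      rfl
  · have hk : ∀ f, MemSInf f → ∀ z ∈ ball (0:ℂ) 1, T f z = T 0 z + thpart U (f a) +
        lineInt (fun ζ => c₁ * (starRingEnd ℂ) (deriv f ((starRingEnd ℂ)
          (lam * (ζ - b) / ((starRingEnd ℂ) b * ζ - 1))))) a z :=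
      fun f hf => key f hf _ fun w => by rw [hR, dm_apply, ← hρ]
    rcases hθ with hθ | hθ
    · right; right; left
      intro f hf z hz
      rw [hk f hf z hz, hθ, rotation_apply]
    · right; right; right
      intro f hf z hz
      rw [hk f hf z hz, hθ]
      rfl
end
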